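/- arXiv:1011.3267 — 4 statements merged into one kernel-verified Lean document; each statement's English description precedes it below -/
import Mathlib

section
/- Let g be complex semisimple of rank ℓ, dim g = ℓ + 2r, and d the Lie algebra coboundary on ∧g (via the Killing form identification). Then x ∈ g is singular (dim g^x > ℓ) if and only if (dx)^r = 0 in ∧^{2r} g. -/
open ExteriorAlgebra Module

/-!
Through the dual bases, `dx` is the bivector of the alternating map `A : Dual ℂ L → L` obtained by
composing `-ad x` with the identification `Dual ℂ L ≃ L` given by the form. As `x` is singular iff
`rank (ad x) < 2 * r`, the claim is that the `r`-th power of the bivector `ω` of `A` vanishes iff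
`rank A < 2 * r`. If `g (A f) = 1`, then `ω = ω' + A f ∧ A g`, where `ω'` is the bivector of an
alternating map killing `f` and `g`, of rank `rank A - 2`. As `(A f ∧ A g) ^ 2 = 0`, one has
`ω ^ (k + 1) = ω' ^ (k + 1) + (k + 1) • (A f ∧ A g ∧ ω' ^ k)`, and contracting with `f` and then
with `g` recovers `(k + 1) • ω' ^ k`. Induction on the exponent concludes.
-/

section Clifford

open CliffordAlgebra (contractLeft involute)

variable {R M : Type*} [CommRing R] [AddCommGroup M] [Module R M] {Q : QuadraticForm R M}

theorem contractLeft_mul (f : Dual R M) (x y : CliffordAlgebra Q) :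
    contractLeft f (x * y) = contractLeft f x * y + involute x * contractLeft f y := by
  induction x using CliffordAlgebra.left_induction with
  | algebraMap r =>
    rw [CliffordAlgebra.contractLeft_algebraMap_mul, CliffordAlgebra.contractLeft_algebraMap,
      AlgHom.commutes, zero_mul, zero_add]
  | add x₁ x₂ h₁ h₂ =>
    simp only [add_mul, map_add, h₁, h₂]
    abel
  | ι_mul x a h =>
    rw [mul_assoc, CliffordAlgebra.contractLeft_ι_mul, h, CliffordAlgebra.contractLeft_ι_mul,
      map_mul, CliffordAlgebra.involute_ι, sub_mul, smul_mul_assoc, mul_add, neg_mul, neg_mul,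
      mul_assoc, mul_assoc]
    abel

theorem contractLeft_pow_eq_zero {f : Dual R M} {x : CliffordAlgebra Q}
    (hx : contractLeft f x = 0) (k : ℕ) : contractLeft f (x ^ k) = 0 := by
  induction k with
  | zero => rw [pow_zero, CliffordAlgebra.contractLeft_one]
  | succ k ih => rw [pow_succ, contractLeft_mul, hx, ih, zero_mul, mul_zero, add_zero]

theorem contractLeft_ι_mul_ι (f : Dual R M) (v w : M) :
    contractLeft f (CliffordAlgebra.ι Q v * CliffordAlgebra.ι Q w) =
      CliffordAlgebra.ι Q (f v • w - f w • v) := by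
  rw [CliffordAlgebra.contractLeft_ι_mul, CliffordAlgebra.contractLeft_ι, ← Algebra.commutes,
    ← Algebra.smul_def, map_sub, map_smul, map_smul]

theorem contractLeft_contractLeft_ι_mul_ι_mul {f g : Dual R M} (v w : M) {y : CliffordAlgebra Q}
    (hf : contractLeft f y = 0) (hg : contractLeft g y = 0) :
    contractLeft g (contractLeft f (CliffordAlgebra.ι Q v * CliffordAlgebra.ι Q w * y)) =
      (f v * g w - f w * g v) • y := by
  have contract_ι_mul {h : Dual R M} (hy : contractLeft h y = 0) (a : M) :
      contractLeft h (CliffordAlgebra.ι Q a * y) = h a • y := by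
    rw [CliffordAlgebra.contractLeft_ι_mul, hy, mul_zero, sub_zero]
  rw [mul_assoc, CliffordAlgebra.contractLeft_ι_mul, contract_ι_mul hf, mul_smul_comm, map_sub,
    map_smul, map_smul, contract_ι_mul hg, contract_ι_mul hg, smul_smul, smul_smul, ← sub_smul]

end Clifford

section Exterior

variable {R M : Type*} [CommRing R] [AddCommGroup M] [Module R M]

theorem ι_mul_ι_comm (v w : M) : ι R v * ι R w = -(ι R w * ι R v) :=
  eq_neg_of_add_eq_zero_left (ι_add_mul_swap v w)

theorem commute_ι_mul_ι (v w : M) (x : ExteriorAlgebra R M) : Commute (ι R v * ι R w) x := by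
  induction x using ExteriorAlgebra.induction with
  | algebraMap r => exact (Algebra.commutes r _).symm
  | ι a =>
    rw [Commute, SemiconjBy, mul_assoc, ι_mul_ι_comm w a, mul_neg, ← mul_assoc, ι_mul_ι_comm v a,
      neg_mul, neg_neg, mul_assoc]
  | mul x y hx hy => exact hx.mul_right hy
  | add x y hx hy => exact hx.add_right hy

theorem ι_mul_ι_mul_self (v w : M) : ι R v * ι R w * (ι R v * ι R w) = 0 := by
  rw [← mul_assoc, (commute_ι_mul_ι v w (ι R v)).eq, ← mul_assoc, ι_sq_zero, zero_mul, zero_mul]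

end Exterior

theorem add_pow_succ_of_mul_self_eq_zero {S : Type*} [Semiring S] {u p : S} (h : Commute p u)
    (hp : p * p = 0) (k : ℕ) : (u + p) ^ (k + 1) = u ^ (k + 1) + (k + 1) • (p * u ^ k) := by
  induction k with
  | zero => rw [zero_add, pow_one, pow_one, pow_zero, mul_one, one_smul]
  | succ k ih =>
    have hpup : p * u ^ k * p = 0 := by rw [(h.pow_right k).eq, mul_assoc, hp, mul_zero]
    rw [pow_succ, ih, add_mul, mul_add, mul_add, smul_mul_assoc, smul_mul_assoc, hpup, smul_zero,
      mul_assoc p, ← pow_succ, ← pow_succ, ← (h.pow_right (k + 1)).eq, succ_nsmul _ (k + 1)]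
    abel

theorem add_ι_mul_ι_pow_succ_eq_zero_iff {K V : Type*} [Field K] [CharZero K] [AddCommGroup V]
    [Module K V] {f g : Dual K V} {v w : V} {u : ExteriorAlgebra K V}
    (hf : CliffordAlgebra.contractLeft f u = 0) (hg : CliffordAlgebra.contractLeft g u = 0)
    (hfg : f v * g w - f w * g v ≠ 0) (k : ℕ) :
    (u + ι K v * ι K w) ^ (k + 1) = 0 ↔ u ^ k = 0 := by
  rw [add_pow_succ_of_mul_self_eq_zero (commute_ι_mul_ι v w u) (ι_mul_ι_mul_self v w)]
  constructor
  · intro h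
    have hcontract := congrArg
      (fun y => CliffordAlgebra.contractLeft g (CliffordAlgebra.contractLeft f y)) h
    simp only [map_add, map_nsmul, map_zero, contractLeft_pow_eq_zero hf, zero_add,
      contractLeft_contractLeft_ι_mul_ι_mul v w (contractLeft_pow_eq_zero hf k)
        (contractLeft_pow_eq_zero hg k)] at hcontract
    rw [← Nat.cast_smul_eq_nsmul K, smul_smul] at hcontract
    exact (smul_eq_zero.mp hcontract).resolve_left
      (mul_ne_zero (Nat.cast_ne_zero.mpr k.succ_ne_zero) hfg)
  · intro h
    rw [pow_succ, h, zero_mul, mul_zero, smul_zero, add_zero]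

section Alternating

variable {R M : Type*} [CommRing R] [AddCommGroup M] [Module R M]

/-- The decomposable bivector `v ∧ w` as an alternating map `Dual R M → M`, with the sign for which
`wedgeMap v w f` is the contraction of `v ∧ w` with `f`. -/
def wedgeMap (v w : M) : Dual R M →ₗ[R] M :=
  (Dual.eval R M v).smulRight w - (Dual.eval R M w).smulRight v

theorem wedgeMap_apply (v w : M) (f : Dual R M) : wedgeMap v w f = f v • w - f w • v := rfl

variable {A : Dual R M →ₗ[R] M}

theorem apply_apply_swap_of_alternating (hA : ∀ f : Dual R M, f (A f) = 0) (f g : Dual R M) :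
    f (A g) = -g (A f) :=
  (LinearMap.IsAlt.neg (B := Dual.eval R M ∘ₗ A) hA f g).symm

theorem sub_wedgeMap_alternating (hA : ∀ f : Dual R M, f (A f) = 0) (v w : M) (f : Dual R M) :
    f ((A - wedgeMap v w : Dual R M →ₗ[R] M) f) = 0 := by
  rw [LinearMap.sub_apply, wedgeMap_apply, map_sub, map_sub, map_smul, map_smul, hA, smul_eq_mul,
    smul_eq_mul, mul_comm, sub_self, sub_zero]

variable {f g : Dual R M}

theorem mem_ker_sub_wedgeMap_left (hA : ∀ f : Dual R M, f (A f) = 0) (hfg : g (A f) = 1) :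
    f ∈ (A - wedgeMap (A f) (A g)).ker := by
  rw [LinearMap.mem_ker, LinearMap.sub_apply, wedgeMap_apply, hA,
    apply_apply_swap_of_alternating hA, hfg, zero_smul, zero_sub, neg_smul, one_smul, neg_neg,
    sub_self]

theorem mem_ker_sub_wedgeMap_right (hA : ∀ f : Dual R M, f (A f) = 0) (hfg : g (A f) = 1) :
    g ∈ (A - wedgeMap (A f) (A g)).ker := by
  rw [LinearMap.mem_ker, LinearMap.sub_apply, wedgeMap_apply, hA, hfg, zero_smul, sub_zero,
    one_smul, sub_self]

theorem eq_zero_of_smul_add_smul_mem_ker (hA : ∀ f : Dual R M, f (A f) = 0) (hfg : g (A f) = 1)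
    {s t : R} (h : s • f + t • g ∈ A.ker) : s = 0 ∧ t = 0 := by
  rw [LinearMap.mem_ker, map_add, map_smul, map_smul] at h
  have hf := congrArg f h
  have hg := congrArg g h
  simp only [map_add, map_smul, hA, hfg, apply_apply_swap_of_alternating hA f g, map_zero,
    smul_eq_mul, mul_zero, mul_one, add_zero, zero_add, mul_neg, neg_eq_zero] at hf hg
  exact ⟨hg, hf⟩

theorem ker_sub_wedgeMap (hA : ∀ f : Dual R M, f (A f) = 0) (hfg : g (A f) = 1) :
    (A - wedgeMap (A f) (A g)).ker = A.ker ⊔ Submodule.span R {f, g} := by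
  apply le_antisymm
  · intro h hh
    have hAh : A h = h (A f) • A g - h (A g) • A f := by
      rwa [LinearMap.mem_ker, LinearMap.sub_apply, wedgeMap_apply, sub_eq_zero] at hh
    refine Submodule.mem_sup.mpr ⟨h - (-h (A g) • f + h (A f) • g), ?_, _,
      Submodule.mem_span_pair.mpr ⟨-h (A g), h (A f), rfl⟩, sub_add_cancel _ _⟩
    rw [LinearMap.mem_ker, map_sub, map_add, map_smul, map_smul, hAh, neg_smul, neg_add_eq_sub,
      sub_self]
  · refine sup_le (fun h hh => ?_) (Submodule.span_le.mpr ?_)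
    · rw [LinearMap.mem_ker] at hh
      rw [LinearMap.mem_ker, LinearMap.sub_apply, wedgeMap_apply,
        apply_apply_swap_of_alternating hA h f, apply_apply_swap_of_alternating hA h g, hh]
      simp only [map_zero, neg_zero, zero_smul, sub_self]
    · rintro h (rfl | rfl)
      exacts [mem_ker_sub_wedgeMap_left hA hfg, mem_ker_sub_wedgeMap_right hA hfg]

end Alternating

section Rank

variable {K V : Type*} [Field K] [AddCommGroup V] [Module K V] [FiniteDimensional K V]
  {A : Dual K V →ₗ[K] V} {f g : Dual K V}

theorem finrank_ker_sub_wedgeMap (hA : ∀ f : Dual K V, f (A f) = 0) (hfg : g (A f) = 1) :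
    finrank K (A - wedgeMap (A f) (A g)).ker = finrank K A.ker + 2 := by
  have hdisjoint : Disjoint A.ker (Submodule.span K {f, g}) := by
    rw [Submodule.disjoint_def]
    intro h hker hspan
    obtain ⟨s, t, rfl⟩ := Submodule.mem_span_pair.mp hspan
    obtain ⟨rfl, rfl⟩ := eq_zero_of_smul_add_smul_mem_ker hA hfg hker
    rw [zero_smul, zero_smul, add_zero]
  have hindep : LinearIndependent K ![f, g] := LinearIndependent.pair_iff.mpr fun s t h =>
    eq_zero_of_smul_add_smul_mem_ker hA hfg (h ▸ A.ker.zero_mem)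
  have hspan : finrank K (Submodule.span K {f, g}) = 2 := by
    rw [← Matrix.range_cons_cons_empty, finrank_span_eq_card hindep, Fintype.card_fin]
  rw [ker_sub_wedgeMap hA hfg, ← hspan, ← Submodule.finrank_sup_add_finrank_inf_eq,
    hdisjoint.eq_bot, finrank_bot, add_zero]

theorem finrank_range_sub_wedgeMap_add_two (hA : ∀ f : Dual K V, f (A f) = 0)
    (hfg : g (A f) = 1) :
    finrank K (A - wedgeMap (A f) (A g)).range + 2 = finrank K A.range := by
  have hker := finrank_ker_sub_wedgeMap hA hfg
  have hrankNullity := A.finrank_range_add_finrank_ker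
  have hrankNullity' := (A - wedgeMap (A f) (A g)).finrank_range_add_finrank_ker
  omega

end Rank

section Bivector

open CliffordAlgebra (contractLeft)

variable {R M κ : Type*} [CommRing R] [Invertible (2 : R)] [AddCommGroup M] [Module R M]
  [Fintype κ] (b : Basis κ R M)

/-- The bivector of a map `A : Dual R M → M`: half the image in the exterior algebra of the tensor
in `M ⊗ M` representing `A`. The factor makes `v ∧ w` the bivector of `wedgeMap v w`. -/
noncomputable def bivector (A : Dual R M →ₗ[R] M) : ExteriorAlgebra R M :=
  ⅟(2 : R) • ∑ i, ι R (b i) * ι R (A (b.coord i))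

theorem bivector_zero : bivector b 0 = 0 := by
  simp only [bivector, LinearMap.zero_apply, map_zero, mul_zero, Finset.sum_const_zero, smul_zero]

theorem bivector_sub (A A' : Dual R M →ₗ[R] M) :
    bivector b (A - A') = bivector b A - bivector b A' := by
  simp only [bivector, LinearMap.sub_apply, map_sub, mul_sub, Finset.sum_sub_distrib, smul_sub]

theorem bivector_wedgeMap (v w : M) : bivector b (wedgeMap v w) = ι R v * ι R w := by
  have expand (a c : M) : ∑ i, ι R (b i) * ι R (b.coord i a • c) = ι R a * ι R c := by
    simp only [map_smul, mul_smul_comm, ← smul_mul_assoc, ← Finset.sum_mul]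
    simp only [← map_smul, ← map_sum, Basis.coord_apply, b.sum_repr]
  simp only [bivector, wedgeMap_apply, map_sub, mul_sub, Finset.sum_sub_distrib, expand]
  rw [ι_mul_ι_comm w v, sub_neg_eq_add, ← two_smul R, invOf_smul_smul]

theorem contractLeft_bivector {A : Dual R M →ₗ[R] M} (hA : ∀ f : Dual R M, f (A f) = 0)
    (f : Dual R M) : contractLeft f (bivector b A) = ι R (A f) := by
  classical
  have hleft : ∑ i, f (b i) • A (b.coord i) = A f := by
    simp only [← map_smul, ← map_sum, b.sum_dual_apply_smul_coord f]
  have hright : ∑ i, f (A (b.coord i)) • b i = -A f := by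
    simp only [apply_apply_swap_of_alternating hA f, neg_smul, Finset.sum_neg_distrib,
      Basis.coord_apply, b.sum_repr]
  simp only [bivector, map_smul, map_sum, contractLeft_ι_mul_ι]
  rw [← map_sum, Finset.sum_sub_distrib, hleft, hright, sub_neg_eq_add, ← two_smul R, map_smul,
    invOf_smul_smul]

end Bivector

section BivectorPow

open CliffordAlgebra (contractLeft)

variable {K V κ : Type*} [Field K] [CharZero K] [AddCommGroup V] [Module K V] [Fintype κ]
  (b : Basis κ K V)

theorem bivector_pow_succ_eq_zero_iff {A : Dual K V →ₗ[K] V} (hA : ∀ f : Dual K V, f (A f) = 0)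
    {f g : Dual K V} (hfg : g (A f) = 1) (k : ℕ) :
    bivector b A ^ (k + 1) = 0 ↔ bivector b (A - wedgeMap (A f) (A g)) ^ k = 0 := by
  have hsplit : bivector b A =
      bivector b (A - wedgeMap (A f) (A g)) + ι K (A f) * ι K (A g) := by
    rw [bivector_sub, bivector_wedgeMap, sub_add_cancel]
  have hcontract := contractLeft_bivector b (sub_wedgeMap_alternating hA (A f) (A g))
  have hf : contractLeft f (bivector b (A - wedgeMap (A f) (A g))) = 0 := by
    rw [hcontract, mem_ker_sub_wedgeMap_left hA hfg, map_zero]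
  have hg : contractLeft g (bivector b (A - wedgeMap (A f) (A g))) = 0 := by
    rw [hcontract, mem_ker_sub_wedgeMap_right hA hfg, map_zero]
  have hdet : f (A f) * g (A g) - f (A g) * g (A f) ≠ 0 := by
    simp [hA, hfg, apply_apply_swap_of_alternating hA f g]
  rw [hsplit]
  exact add_ι_mul_ι_pow_succ_eq_zero_iff hf hg hdet k

theorem bivector_pow_eq_zero_iff {A : Dual K V →ₗ[K] V} (hA : ∀ f : Dual K V, f (A f) = 0)
    (r : ℕ) : bivector b A ^ r = 0 ↔ finrank K A.range < 2 * r := by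
  have : FiniteDimensional K V := .of_basis b
  induction r generalizing A with
  | zero => simp
  | succ r ih =>
    obtain rfl | hne := eq_or_ne A 0
    · rw [bivector_zero, LinearMap.range_zero, finrank_bot]
      simp
    · obtain ⟨f, hf⟩ := DFunLike.ne_iff.mp hne
      obtain ⟨g, hfg⟩ := Projective.exists_dual_eq_one K hf
      calc
        bivector b A ^ (r + 1) = 0 ↔ bivector b (A - wedgeMap (A f) (A g)) ^ r = 0 :=
          bivector_pow_succ_eq_zero_iff b hA hfg r
        _ ↔ finrank K (A - wedgeMap (A f) (A g)).range < 2 * r :=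
          ih (sub_wedgeMap_alternating hA (A f) (A g))
        _ ↔ finrank K A.range < 2 * (r + 1) := by
          rw [← finrank_range_sub_wedgeMap_add_two hA hfg]
          omega

end BivectorPow

section DualBases

variable {K V κ : Type*} [Field K] [AddCommGroup V] [Module K V] [DecidableEq κ]
  {B : LinearMap.BilinForm K V} {b : Basis κ K V} {z : κ → V}

theorem apply_constr_dualBasis [Finite κ] (hdual : ∀ i j, B (b i) (z j) = if i = j then 1 else 0)
    (y : V) (f : Dual K V) : B y (b.dualBasis.constr K z f) = f y := by
  have hflip : B.flip ∘ₗ b.dualBasis.constr K z = LinearMap.id :=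
    b.dualBasis.ext fun j => b.ext fun i => by
      rw [LinearMap.comp_apply, Basis.constr_basis]
      simp [hdual, Finsupp.single_apply]
  exact LinearMap.congr_fun (LinearMap.congr_fun hflip f) y

theorem range_constr_dualBasis [Finite κ]
    (hdual : ∀ i j, B (b i) (z j) = if i = j then 1 else 0) :
    (b.dualBasis.constr K z).range = ⊤ := by
  have : FiniteDimensional K V := .of_basis b
  have hinj : Function.Injective (b.dualBasis.constr K z) := fun f g h => by
    ext y
    rw [← apply_constr_dualBasis hdual y f, h, apply_constr_dualBasis hdual]
  exact LinearMap.range_eq_top.mpr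
    ((LinearMap.injective_iff_surjective_of_finrank_eq_finrank Subspace.dual_finrank_eq).mp hinj)

theorem sum_ι_mul_ι_pow_eq_zero_iff [CharZero K] [Fintype κ]
    (hdual : ∀ i j, B (b i) (z j) = if i = j then 1 else 0) {T : V →ₗ[K] V}
    (hT : ∀ y, B (T y) y = 0) (r : ℕ) :
    ((1 / 2 : K) • ∑ i, ι K (b i) * ι K (T (z i))) ^ r = 0 ↔ finrank K T.range < 2 * r := by
  set S := b.dualBasis.constr K z
  have halt (f : Dual K V) : f ((T ∘ₗ S) f) = 0 := by
    rw [← apply_constr_dualBasis hdual, LinearMap.comp_apply, hT]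
  have hbivector : (1 / 2 : K) • ∑ i, ι K (b i) * ι K (T (z i)) = bivector b (T ∘ₗ S) := by
    simp only [bivector, invOf_eq_inv, one_div, LinearMap.comp_apply, ← b.coe_dualBasis, S,
      Basis.constr_basis]
  rw [hbivector, bivector_pow_eq_zero_iff b halt,
    LinearMap.range_comp_of_range_eq_top T (range_constr_dualBasis hdual)]

end DualBases

theorem stmt11_general {K L κ : Type*} [Field K] [CharZero K] [LieRing L] [LieAlgebra K L]
    [DecidableEq κ] [Fintype κ] {B : LinearMap.BilinForm K L}
    (hB : ∀ x y z : L, B ⁅x, y⁆ z = B x ⁅y, z⁆) {b : Basis κ K L} {z : κ → L}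
    (hdual : ∀ i j, B (b i) (z j) = if i = j then 1 else 0) (x : L) (r : ℕ) :
    finrank K L < finrank K (LinearMap.ker (LieAlgebra.ad K L x)) + 2 * r ↔
      ((1 / 2 : K) • ∑ i, ι K (b i) * ι K ⁅z i, x⁆) ^ r = 0 := by
  have : FiniteDimensional K L := .of_basis b
  have hskew (y : L) : B ((-LieAlgebra.ad K L x) y) y = 0 := by
    rw [LinearMap.neg_apply, LieAlgebra.ad_apply, map_neg, LinearMap.neg_apply, hB, lie_self,
      map_zero, neg_zero]
  have hbracket (i : κ) : ⁅z i, x⁆ = (-LieAlgebra.ad K L x) (z i) := by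
    rw [LinearMap.neg_apply, LieAlgebra.ad_apply, lie_skew]
  have hrankNullity := (LieAlgebra.ad K L x).finrank_range_add_finrank_ker
  simp only [hbracket]
  rw [sum_ι_mul_ι_pow_eq_zero_iff hdual hskew, LinearMap.range_neg]
  omega

/-- Let `g` be complex semisimple of rank `ℓ` (`= dim H`, `H` a Cartan subalgebra), with
`dim g = ℓ + 2r`, and let `d` be the coboundary on `⋀ g` via the Killing-form
identification, so `dx = (1/2) ∑ᵢ wᵢ ∧ [zᵢ, x]` for Killing-dual bases.  Then `x ∈ g` is
singular (`dim g^x > ℓ`) if and only if `(dx)^r = 0` (in `⋀^{2r} g`). -/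
theorem stmt11 (L : Type*) [LieRing L] [LieAlgebra ℂ L] [FiniteDimensional ℂ L]
    [LieAlgebra.IsSemisimple ℂ L]
    (H : LieSubalgebra ℂ L) [H.IsCartanSubalgebra]
    (n r : ℕ) (hnr : n = finrank ℂ H + 2 * r) (hn : finrank ℂ L = n)
    (b : Basis (Fin n) ℂ L) (z : Fin n → L)
    (hdual : ∀ i j, killingForm ℂ L (b i) (z j) = if i = j then 1 else 0)
    (D : L → ExteriorAlgebra ℂ L)
    (hD : ∀ x : L, D x = (1/2 : ℂ) • ∑ i, ι ℂ (b i) * ι ℂ ⁅z i, x⁆) :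
    ∀ x : L,
      finrank ℂ H < finrank ℂ (LinearMap.ker (LieAlgebra.ad ℂ L x)) ↔
        (D x) ^ r = 0 := by
  intro x
  rw [hD, ← stmt11_general (LieModule.traceForm_apply_lie_apply ℂ L L) hdual]
  omega
end

section
/- For any x ∈ g and any invariant polynomial p ∈ S(g)^G, the gradient ∇p(x) ∈ g (defined by B(∇p(x), y) = ∂_y p(x)) lies in the center of the centralizer g^x. -/
open Module MvPolynomial

/-- Directional derivative `∂_u P` of a polynomial `P` on a Lie algebra `L`, in the
coordinates of a basis `b`. -/
noncomputable def dirDeriv {L : Type*} [LieRing L] [LieAlgebra ℂ L] {n : ℕ}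
    (b : Basis (Fin n) ℂ L) (u : L) (P : MvPolynomial (Fin n) ℂ) :
    MvPolynomial (Fin n) ℂ :=
  ∑ i, MvPolynomial.C (b.repr u i) * MvPolynomial.pderiv i P

/-- Infinitesimal invariance of a polynomial function on `L` under the adjoint action. -/
noncomputable def IsInvariantPoly {L : Type*} [LieRing L] [LieAlgebra ℂ L] {n : ℕ}
    (b : Basis (Fin n) ℂ L) (P : MvPolynomial (Fin n) ℂ) : Prop :=
  ∀ x y : L, MvPolynomial.eval (fun i => b.repr x i) (dirDeriv b ⁅y, x⁆ P) = 0

/-!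
Invariance says that the differential `dP_w` vanishes on `⁅y, w⁆` for all `w` and `y`. If `y`
commutes with `x`, taking `w = x + t • z` gives `t * dP_{x + t • z}(⁅y, z⁆) = 0`; cancelling `t ≠ 0`
and specializing the resulting polynomial identity to `t = 0` shows that `dP_x` vanishes on
`⁅y, L⁆`. For an invariant form this says that `⁅y, ∇P(x)⁆` is orthogonal to `L`, hence zero.
-/

section Line

variable {σ R : Type*}

lemma polynomial_eval_aeval_C_add_X_mul_C [CommSemiring R] (v w : σ → R) (Q : MvPolynomial σ R)
    (t : R) :
    (aeval (fun i => Polynomial.C (v i) + Polynomial.X * Polynomial.C (w i)) Q).eval t =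
      eval (v + t • w) Q := by
  rw [aeval_def, polynomial_eval_eval₂, eval, coe_eval₂Hom]
  congr 1
  · ext a
    simp
  · ext i
    simp [mul_comm (w i)]

lemma eval_eq_zero_of_forall_ne_zero_eval_add_smul_eq_zero [CommRing R] [IsDomain R]
    [Infinite R] {v w : σ → R} {Q : MvPolynomial σ R}
    (hQ : ∀ t : R, t ≠ 0 → eval (v + t • w) Q = 0) :
    eval v Q = 0 := by
  let q : Polynomial R := aeval (fun i => Polynomial.C (v i) + Polynomial.X * Polynomial.C (w i)) Q
  have hq (t : R) : q.eval t = eval (v + t • w) Q := polynomial_eval_aeval_C_add_X_mul_C v w Q t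
  have hroots : {0}ᶜ ⊆ {t | q.IsRoot t} := fun t ht => (hq t).trans (hQ t ht)
  have hq_zero : q = 0 :=
    Polynomial.eq_zero_of_infinite_isRoot q ((Set.finite_singleton 0).infinite_compl.mono hroots)
  calc
    eval v Q = q.eval 0 := by rw [hq, zero_smul, add_zero]
    _ = 0 := by rw [hq_zero, Polynomial.eval_zero]

end Line

lemma lie_eq_zero_of_forall_apply_lie_eq_zero {R L M : Type*} [CommRing R] [LieRing L]
    [AddCommGroup M] [Module R M] [LieRingModule L M] {B : LinearMap.BilinForm R M}
    (hsep : B.SeparatingLeft) (hinv : B.lieInvariant L) {y : L} {v : M}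
    (hv : ∀ z : M, B v ⁅y, z⁆ = 0) : ⁅y, v⁆ = 0 :=
  hsep _ fun z => by rw [hinv, hv, neg_zero]

section Invariant

variable {L : Type*} [LieRing L] [LieAlgebra ℂ L] {n : ℕ} {b : Basis (Fin n) ℂ L}
  {P : MvPolynomial (Fin n) ℂ}

lemma dirDeriv_smul (b : Basis (Fin n) ℂ L) (c : ℂ) (u : L) (P : MvPolynomial (Fin n) ℂ) :
    dirDeriv b (c • u) P = C c * dirDeriv b u P := by
  simp [dirDeriv, Finset.mul_sum, mul_assoc]

lemma IsInvariantPoly.eval_add_smul_dirDeriv_lie_eq_zero (hP : IsInvariantPoly b P) {x y : L}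
    (hyx : ⁅y, x⁆ = 0) (z : L) {t : ℂ} (ht : t ≠ 0) :
    eval (b.repr (x + t • z)) (dirDeriv b ⁅y, z⁆ P) = 0 := by
  have hlie : ⁅y, x + t • z⁆ = t • ⁅y, z⁆ := by rw [lie_add, lie_smul, hyx, zero_add]
  have hmul : t * eval (b.repr (x + t • z)) (dirDeriv b ⁅y, z⁆ P) = 0 := by
    simpa only [hlie, dirDeriv_smul, map_mul, eval_C] using hP (x + t • z) y
  exact (mul_eq_zero.mp hmul).resolve_left ht

lemma IsInvariantPoly.eval_dirDeriv_lie_eq_zero (hP : IsInvariantPoly b P) {x y : L}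
    (hyx : ⁅y, x⁆ = 0) (z : L) : eval (b.repr x) (dirDeriv b ⁅y, z⁆ P) = 0 :=
  eval_eq_zero_of_forall_ne_zero_eval_add_smul_eq_zero (w := b.repr z) fun t ht => by
    simpa only [map_add, map_smul, Finsupp.coe_add, Finsupp.coe_smul] using
      hP.eval_add_smul_dirDeriv_lie_eq_zero hyx z ht

theorem stmt14_general (hP : IsInvariantPoly b P) {B : LinearMap.BilinForm ℂ L}
    (hsep : B.SeparatingLeft) (hinv : B.lieInvariant L) {g : L → L}
    (hgrad : ∀ x y : L, B (g x) y = eval (b.repr x) (dirDeriv b y P)) (x : L) :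
    ⁅x, g x⁆ = 0 ∧ ∀ y : L, ⁅x, y⁆ = 0 → ⁅g x, y⁆ = 0 := by
  have hcomm (y : L) (hyx : ⁅y, x⁆ = 0) : ⁅y, g x⁆ = 0 :=
    lie_eq_zero_of_forall_apply_lie_eq_zero hsep hinv fun z =>
      (hgrad x ⁅y, z⁆).trans (hP.eval_dirDeriv_lie_eq_zero hyx z)
  refine ⟨hcomm x (lie_self x), fun y hxy => ?_⟩
  have hyx : ⁅y, x⁆ = 0 := by rw [← lie_skew, hxy, neg_zero]
  rw [← lie_skew, hcomm y hyx, neg_zero]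

end Invariant

/-- For any `x ∈ g` and any invariant polynomial `P ∈ S(g)^G`, the gradient
`∇P(x) ∈ g` (defined by `B(∇P(x), y) = ∂_y P(x)` for the Killing form `B`) lies in the
center of the centralizer `g^x`: it commutes with `x` and with every `y` commuting
with `x`. -/
theorem stmt14 (L : Type*) [LieRing L] [LieAlgebra ℂ L] [FiniteDimensional ℂ L]
    [LieAlgebra.IsSemisimple ℂ L]
    (n : ℕ) (hn : finrank ℂ L = n) (b : Basis (Fin n) ℂ L)
    (P : MvPolynomial (Fin n) ℂ) (hP : IsInvariantPoly b P)
    (g : L → L)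
    (hgrad : ∀ x y : L, killingForm ℂ L (g x) y =
      MvPolynomial.eval (fun i => b.repr x i) (dirDeriv b y P)) :
    ∀ x : L, ⁅x, g x⁆ = 0 ∧ ∀ y : L, ⁅x, y⁆ = 0 → ⁅g x, y⁆ = 0 :=
  stmt14_general hP (LieAlgebra.IsKilling.killingForm_nondegenerate ℂ L).1
    (LieModule.traceForm_lieInvariant ℂ L L) hgrad
end

section
/- Let p₁,…,p_ℓ be homogeneous generators of S(g)^G. For x ∈ g, the gradients ∇p₁(x),…,∇p_ℓ(x) are linearly independent if and only if x is regular. Consequently, for y in a Cartan subalgebra h (with orthonormal basis v₁,…,v_ℓ of h), ∇p₁(y)∧⋯∧∇p_ℓ(y) = κ·(∏_{φ∈Δ₊} φ(y))·v₁∧⋯∧v_ℓ for a fixed nonzero constant κ. -/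
open Module MvPolynomial ExteriorAlgebra

/-!
Let `β` be the matrix of `(u, v) ↦ κ(⁅u, v⁆, x)` in a basis of the Lie algebra and `P` the matrix
whose rows are the gradients of the generators; both have polynomial entries in `x`. Invariance of
the generators says `P β = 0 = β Pᵀ`, so for constant matrices `U` and `W` of complementary rank the
family `det (β + U W)` is proportional to `det (P U) det (P Wᵀ)`. Neither family has a common prime
factor. Indeed, the span of each is stable under the derivations coming from the adjoint
action, so a common prime factor `q` would be a semi-invariant, hence an invariant. In the case of
`P`, `q` would be a polynomial in the generators dividing all maximal minors of their Jacobian. In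
the case of `β`, the values at points of the Cartan subalgebra show that `q` would vanish on the
hyperplane of some root `φ i`, and then by invariance at `y + e i` for any `y` in that hyperplane;
but this element is regular if no other root vanishes at `y`.

By unique factorization, `det (β + U W) = c det (P U) det (P Wᵀ)` for a nonzero constant `c`. Since
the kernel of `β` at `x` is the centralizer of `x`, this gives the regularity criterion. Taking for
`U = Wᵀ` the coordinates of an orthonormal basis of the Cartan subalgebra, and evaluating on that
subalgebra, it becomes `(det κ(∇p j, v k))² = const ∏ φ²`, and a square root of this polynomial
identity is the second claim.
-/

section Differentials

variable {k K σ ι : Type*} [Field k] [Field K] [Algebra k K]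

theorem formallyEtale_of_isTranscendenceBasis_X [CharZero k]
    [Algebra (MvPolynomial σ k) K] [IsScalarTower k (MvPolynomial σ k) K]
    (h : IsTranscendenceBasis k fun i => algebraMap (MvPolynomial σ k) K (X i)) :
    Algebra.FormallyEtale (MvPolynomial σ k) K := by
  let A := MvPolynomial σ k
  have hmap : (aeval fun i => algebraMap A K (X i) : A →ₐ[k] K) = IsScalarTower.toAlgHom k A K :=
    MvPolynomial.algHom_ext fun i => by simp [A]
  have : FaithfulSMul A K := (faithfulSMul_iff_algebraMap_injective A K).mpr
    (show Function.Injective (IsScalarTower.toAlgHom k A K) from hmap ▸ h.1)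
  let := FractionRing.liftAlgebra A K
  have := FractionRing.isScalarTower_liftAlgebra A K
  have : CharZero (FractionRing A) := charZero_of_injective_algebraMap
    (FaithfulSMul.algebraMap_injective k (FractionRing A))
  have := h.isAlgebraic
  have : Algebra.IsAlgebraic A K :=
    Algebra.IsAlgebraic.of_ringHom_of_comp_eq h.1.aevalEquiv (RingHom.id K)
      h.1.aevalEquiv.surjective Function.injective_id
      (RingHom.ext fun a => (h.1.algebraMap_aevalEquiv a).trans (DFunLike.congr_fun hmap a))
  have : Algebra.IsAlgebraic (FractionRing A) K :=
    (IsFractionRing.comap_isAlgebraic_iff (A := A)).mp inferInstance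
  have : Algebra.FormallyEtale (FractionRing A) K := .of_isSeparable _ _
  have : Algebra.FormallyEtale A (FractionRing A) := .of_isLocalization (nonZeroDivisors A)
  exact .comp A (FractionRing A) K

theorem linearIndependent_D_algebraMap_X [Algebra (MvPolynomial σ k) K]
    [IsScalarTower k (MvPolynomial σ k) K] [Algebra.FormallyEtale (MvPolynomial σ k) K] :
    LinearIndependent K fun i =>
      KaehlerDifferential.D k K (algebraMap (MvPolynomial σ k) K (X i)) := by
  let B := ((KaehlerDifferential.mvPolynomialBasis k σ).baseChange K).map
    (KaehlerDifferential.tensorKaehlerEquivOfFormallyEtale k (MvPolynomial σ k) K)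
  convert B.linearIndependent with i
  simp [B, Basis.baseChange_apply, KaehlerDifferential.mvPolynomialBasis_apply]

theorem linearIndependent_D_of_algebraicIndependent [CharZero k] {f : ι → K}
    (hf : AlgebraicIndependent k f) :
    LinearIndependent K fun i => KaehlerDifferential.D k K (f i) := by
  obtain ⟨s, hfs, hs⟩ := exists_isTranscendenceBasis_superset (s := Set.range f) hf.coe_range
  let : Algebra (MvPolynomial s k) K := (aeval (R := k) (Subtype.val : s → K)).toAlgebra
  have hX (i : s) : algebraMap (MvPolynomial s k) K (X i) = i := aeval_X _ i
  have : IsScalarTower k (MvPolynomial s k) K := .of_algebraMap_eq fun r => (aeval_C _ r).symm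
  have : Algebra.FormallyEtale (MvPolynomial s k) K :=
    formallyEtale_of_isTranscendenceBasis_X (by simpa only [hX] using hs)
  have hD := linearIndependent_D_algebraMap_X (k := k) (K := K) (σ := s)
  simp only [hX] at hD
  exact hD.comp (fun i => (⟨f i, hfs ⟨i, rfl⟩⟩ : s))
    fun i j h => hf.injective (congrArg Subtype.val h)

theorem D_algebraMap_eq_sum_pderiv_smul [Fintype σ] [Algebra (MvPolynomial σ k) K]
    [IsScalarTower k (MvPolynomial σ k) K] (P : MvPolynomial σ k) :
    KaehlerDifferential.D k K (algebraMap (MvPolynomial σ k) K P) =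
      ∑ s, algebraMap (MvPolynomial σ k) K (pderiv s P) •
        KaehlerDifferential.D k K (algebraMap (MvPolynomial σ k) K (X s)) := by
  have h := congrArg (KaehlerDifferential.map k k (MvPolynomial σ k) K)
    ((KaehlerDifferential.mvPolynomialBasis k σ).sum_repr (KaehlerDifferential.D k _ P))
  simpa [KaehlerDifferential.mvPolynomialBasis_apply,
    KaehlerDifferential.mvPolynomialBasis_repr_apply, KaehlerDifferential.map_D] using h.symm

theorem eq_zero_of_sum_mul_pderiv_eq_mul_pderiv [CharZero k]
    [Algebra (MvPolynomial σ k) K] [IsScalarTower k (MvPolynomial σ k) K] [Fintype ι] [Finite σ]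
    {f : ι → MvPolynomial σ k} {q : MvPolynomial σ k} (hq : algebraMap (MvPolynomial σ k) K q = 0)
    (hf : AlgebraicIndependent k fun i => algebraMap (MvPolynomial σ k) K (f i)) (c : ι → K) (l : K)
    (h : ∀ s, ∑ i, c i * algebraMap (MvPolynomial σ k) K (pderiv s (f i)) =
      l * algebraMap (MvPolynomial σ k) K (pderiv s q)) : c = 0 := by
  cases nonempty_fintype σ
  refine _root_.funext (Fintype.linearIndependent_iff.mp
    (linearIndependent_D_of_algebraicIndependent hf) c ?_)
  have hsum : ∑ s, (l * algebraMap (MvPolynomial σ k) K (pderiv s q)) •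
      KaehlerDifferential.D k K (algebraMap (MvPolynomial σ k) K (X s)) = 0 := by
    simp_rw [mul_smul]
    rw [← Finset.smul_sum, ← D_algebraMap_eq_sum_pderiv_smul, hq, map_zero, smul_zero]
  simp_rw [← h, Finset.sum_smul, mul_smul] at hsum
  rw [Finset.sum_comm] at hsum
  simpa only [← Finset.smul_sum, ← D_algebraMap_eq_sum_pderiv_smul] using hsum

end Differentials

section Determinants

open Matrix

variable {R n l : Type*} [CommRing R] [Fintype n] [DecidableEq n] [Fintype l] [DecidableEq l]

theorem det_add_vecMulVec_mul_det (A : Matrix n n R) (u v : n → R) :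
    (A + vecMulVec u v).det * A.det = (A.det + v ⬝ᵥ A.adjugate *ᵥ u) * A.det := by
  let U := replicateCol Unit u
  let V := replicateRow Unit v
  have h : fromBlocks A U (-V) 1 * fromBlocks 1 (-(A.adjugate * U)) 0 (A.det • 1) =
      fromBlocks A 0 (-V) (V * (A.adjugate * U) + A.det • 1) := by
    rw [fromBlocks_multiply]
    congr 1 <;> simp [← Matrix.mul_assoc, mul_adjugate]
  have hdet := congrArg det h
  rw [det_mul, det_fromBlocks_one₂₂, det_fromBlocks_zero₂₁, det_fromBlocks_zero₁₂] at hdet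
  have hV : (V * (A.adjugate * U)) () () = v ⬝ᵥ A.adjugate *ᵥ u := rfl
  have hUV : U * V = vecMulVec u v := (vecMulVec_eq Unit u v).symm
  simpa [hUV, hV, mul_comm, add_comm] using hdet

-- Over `R[X]` the matrix `A + X` has monic determinant, which may be cancelled; then put `X = 0`.
theorem det_add_vecMulVec (A : Matrix n n R) (u v : n → R) :
    (A + vecMulVec u v).det = A.det + v ⬝ᵥ A.adjugate *ᵥ u := by
  let ε : Polynomial R →+* R := Polynomial.evalRingHom 0
  let A' : Matrix n n (Polynomial R) := charmatrix (-A)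
  have hA : ε.mapMatrix A' = A := by
    ext i j
    by_cases h : i = j
    · subst h; simp [A', ε, charmatrix_apply_eq]
    · simp [A', ε, charmatrix_apply_ne _ _ _ h]
  have hreg : A'.det ∈ nonZeroDivisors (Polynomial R) :=
    (charpoly_monic (-A)).mem_nonZeroDivisors
  have h := congrArg ε <| (mul_cancel_right_mem_nonZeroDivisors hreg).mp
    (det_add_vecMulVec_mul_det A' (Polynomial.C ∘ u) (Polynomial.C ∘ v))
  have hC (w : n → R) : ε ∘ Polynomial.C ∘ w = w := by ext; simp [ε]
  have huv : ε.mapMatrix (vecMulVec (Polynomial.C ∘ u) (Polynomial.C ∘ v)) = vecMulVec u v := by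
    ext; simp [ε, vecMulVec_apply]
  have hadj : ε ∘ (A'.adjugate *ᵥ (Polynomial.C ∘ u)) = A.adjugate *ᵥ u := by
    ext i
    rw [Function.comp_apply, RingHom.map_mulVec, hC, ← RingHom.mapMatrix_apply,
      RingHom.map_adjugate, hA]
  rwa [map_add, RingHom.map_det, RingHom.map_det, RingHom.map_dotProduct, map_add, hA, huv, hC,
    hadj] at h

theorem det_add_mul_mul_det_mul {M : Matrix n n R} {Q : Matrix n l R} (hMQ : M * Q = 0)
    (U : Matrix n l R) (W W' : Matrix l n R) :
    (M + U * W').det * (W * Q).det = (M + U * W).det * (W' * Q).det := by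
  have h : fromBlocks (M + U * W) U (W - W') 1 * fromBlocks 1 (-Q) 0 (W * Q) =
      fromBlocks (M + U * W) 0 (W - W') (W' * Q) := by
    rw [fromBlocks_multiply]
    congr 1 <;> simp [Matrix.add_mul, hMQ, Matrix.sub_mul, Matrix.mul_assoc]
  have hdet := congrArg det h
  have hW : M + U * W - U * (W - W') = M + U * W' := by rw [Matrix.mul_sub]; abel
  rwa [det_mul, det_fromBlocks_one₂₂, det_fromBlocks_zero₂₁, det_fromBlocks_zero₁₂, det_one,
    one_mul, hW] at hdet

theorem det_add_mul_mul_det_mul' {M : Matrix n n R} {P : Matrix l n R} (hPM : P * M = 0)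
    (U U' : Matrix n l R) (W : Matrix l n R) :
    (M + U' * W).det * (P * U).det = (M + U * W).det * (P * U').det := by
  have h := det_add_mul_mul_det_mul (M := Mᵀ) (Q := Pᵀ)
    (by rw [← transpose_mul, hPM, transpose_zero]) Wᵀ Uᵀ U'ᵀ
  simpa only [← transpose_mul, ← transpose_add, det_transpose] using h

theorem det_add_mul_mul_det_mul_mul_det_mul {M : Matrix n n R} {P : Matrix l n R}
    {Q : Matrix n l R} (hPM : P * M = 0) (hMQ : M * Q = 0) (U U' : Matrix n l R)
    (W W' : Matrix l n R) :
    (M + U' * W').det * ((P * U).det * (W * Q).det) =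
      (M + U * W).det * ((P * U').det * (W' * Q).det) := by
  linear_combination (W * Q).det * det_add_mul_mul_det_mul' hPM U U' W' +
    (P * U').det * det_add_mul_mul_det_mul hMQ U W W'

theorem trace_adjugate_mul_mul (N : Matrix n n R) (U : Matrix n l R) (W : Matrix l n R) :
    (N.adjugate * (U * W)).trace =
      ∑ i, ((N + U * (single i i 1 : Matrix l l R) * W).det - N.det) := by
  have hrank (i : l) : U * (single i i 1 : Matrix l l R) * W = vecMulVec (U.col i) (W i) := by
    rw [single_eq_single_vecMulVec_single, mul_vecMulVec, vecMulVec_mul]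
    simp [Matrix.row_def]
  simp_rw [hrank, det_add_vecMulVec, add_sub_cancel_left]
  rw [← Matrix.mul_assoc, trace_mul_comm]
  rfl

end Determinants

section Derivations

variable {k R : Type*} [CommRing k] [CommRing R] [Algebra k R]

theorem derivation_sum_apply {ι : Type*} (s : Finset ι) (δ : ι → Derivation k R R) (a : R) :
    (∑ i ∈ s, δ i) a = ∑ i ∈ s, δ i a := by
  rw [← Derivation.coeFnAddMonoidHom_apply, map_sum, Finset.sum_apply]
  rfl

theorem derivation_prod {ι : Type*} [DecidableEq ι] (δ : Derivation k R R) (s : Finset ι)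
    (g : ι → R) : δ (∏ i ∈ s, g i) = ∑ i ∈ s, ∏ j ∈ s, if j = i then δ (g j) else g j := by
  induction s using Finset.induction_on with
  | empty => simp
  | insert a s ha ih =>
    have hne {i : ι} (hi : i ∈ s) : i ≠ a := ne_of_mem_of_not_mem hi ha
    rw [Finset.prod_insert ha, δ.leibniz, ih, Finset.sum_insert ha, Finset.prod_insert ha, add_comm,
      Finset.smul_sum]
    congr 1
    · rw [if_pos rfl, smul_eq_mul, mul_comm]
      exact congrArg _ (Finset.prod_congr rfl fun j hj => by rw [if_neg (hne hj)])
    · refine Finset.sum_congr rfl fun i hi => ?_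
      rw [Finset.prod_insert ha, if_neg (hne hi).symm, smul_eq_mul]

theorem derivation_det_eq_sum_updateCol {n : Type*} [Fintype n] [DecidableEq n]
    (δ : Derivation k R R) (N : Matrix n n R) :
    δ N.det = ∑ j, (N.updateCol j fun i => δ (N i j)).det := by
  simp_rw [Matrix.det_apply, map_sum, Units.smul_def, map_zsmul]
  rw [Finset.sum_comm]
  refine Finset.sum_congr rfl fun σ _ => ?_
  rw [← Finset.smul_sum, derivation_prod]
  refine congrArg _ (Finset.sum_congr rfl fun j _ => Finset.prod_congr rfl fun i _ => ?_)
  rw [Matrix.updateCol_apply]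
  split_ifs with h <;> simp [h]

theorem derivation_det_eq_trace {n : Type*} [Fintype n] [DecidableEq n] (δ : Derivation k R R)
    (N : Matrix n n R) : δ N.det = (N.adjugate * N.map δ).trace := by
  rw [derivation_det_eq_sum_updateCol, Matrix.trace]
  refine Finset.sum_congr rfl fun j _ => ?_
  rw [← Matrix.cramer_apply, Matrix.cramer_eq_adjugate_mulVec]
  rfl

end Derivations

section StableFamilies

theorem dvd_of_forall_prime_exists_dvd_mul {α : Type*} [CommMonoidWithZero α]
    [UniqueFactorizationMonoid α] {a b : α} (ha : a ≠ 0)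
    (h : ∀ q, Prime q → q ∣ a → ∃ d, ¬ q ∣ d ∧ a ∣ b * d) : a ∣ b := by
  induction a using UniqueFactorizationMonoid.induction_on_prime generalizing b with
  | h₁ => exact absurd rfl ha
  | h₂ a hu => exact hu.dvd
  | h₃ a p ha0 hp ih =>
    obtain ⟨b, rfl⟩ := ih ha0 fun q hq hqa => by
      obtain ⟨d, hd, hdvd⟩ := h q hq (hqa.mul_left p)
      exact ⟨d, hd, (Dvd.intro_left p rfl).trans hdvd⟩
    obtain ⟨d, hd, hdvd⟩ := h p hp (dvd_mul_right p a)
    rw [mul_comm p a, mul_assoc] at hdvd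
    have hpb : p ∣ b := (hp.dvd_or_dvd ((mul_dvd_mul_iff_left ha0).mp hdvd)).resolve_right hd
    rw [mul_comm]
    exact mul_dvd_mul_left a hpb

theorem dvd_of_mul_eq_mul_of_forall_prime_exists_not_dvd {R ι : Type*} [CommMonoidWithZero R]
    [UniqueFactorizationMonoid R] {F G : ι → R} (hFG : ∀ i j, F i * G j = F j * G i)
    (hF : ∀ q, Prime q → ∃ i, ¬ q ∣ F i) {i : ι} (hi : F i ≠ 0) : F i ∣ G i := by
  refine dvd_of_forall_prime_exists_dvd_mul hi fun q hq _ => ?_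
  obtain ⟨j, hj⟩ := hF q hq
  exact ⟨F j, hj, G j, by rw [hFG i j, mul_comm]⟩

theorem exists_unit_mul_eq_of_mul_eq_mul {R ι : Type*} [CommMonoidWithZero R]
    [UniqueFactorizationMonoid R] {F G : ι → R} (hFG : ∀ i j, F i * G j = F j * G i)
    (hF₀ : ∃ i, F i ≠ 0) (hG₀ : ∃ i, G i ≠ 0) (hF : ∀ q, Prime q → ∃ i, ¬ q ∣ F i)
    (hG : ∀ q, Prime q → ∃ i, ¬ q ∣ G i) : ∃ u : Rˣ, ∀ i, F i = u * G i := by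
  obtain ⟨i, hi⟩ := hF₀
  obtain ⟨j, hj⟩ := hG₀
  have hGi : G i ≠ 0 := right_ne_zero_of_mul (hFG i j ▸ mul_ne_zero hi hj)
  obtain ⟨u, hu⟩ := associated_of_dvd_dvd
    (dvd_of_mul_eq_mul_of_forall_prime_exists_not_dvd
      (fun a b => by rw [mul_comm, ← hFG, mul_comm]) hG hGi)
    (dvd_of_mul_eq_mul_of_forall_prime_exists_not_dvd hFG hF hi)
  refine ⟨u, fun a => mul_right_cancel₀ hGi ?_⟩
  rw [hFG, ← hu, mul_comm (G i), mul_right_comm]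

theorem exists_C_mul_eq_of_mul_eq_mul {k σ ι : Type*} [Field k]
    {F G : ι → MvPolynomial σ k}
    (hFG : ∀ i j, F i * G j = F j * G i) (hF₀ : ∃ i, F i ≠ 0) (hG₀ : ∃ i, G i ≠ 0)
    (hF : ∀ q, Prime q → ∃ i, ¬ q ∣ F i) (hG : ∀ q, Prime q → ∃ i, ¬ q ∣ G i) :
    ∃ c : k, c ≠ 0 ∧ ∀ i, F i = C c * G i := by
  obtain ⟨u, hu⟩ := exists_unit_mul_eq_of_mul_eq_mul hFG hF₀ hG₀ hF hG
  obtain ⟨c, hc, hcu⟩ := isUnit_iff_eq_C_of_isReduced.mp u.isUnit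
  exact ⟨c, hc.ne_zero, fun i => by rw [hu, hcu]⟩

theorem exists_forall_pow_dvd_and_exists_not_pow_dvd {α ι : Type*} [CommMonoidWithZero α]
    [IsCancelMulZero α] [WfDvdMonoid α] {q : α} (hq : Prime q) {F : ι → α} {i₀ : ι} (hi₀ : F i₀ ≠ 0)
    (hF : ∀ i, q ∣ F i) : ∃ m : ℕ, (∀ i, q ^ (m + 1) ∣ F i) ∧ ∃ i, ¬ q ^ (m + 2) ∣ F i := by
  classical
  have hex : ∃ m : ℕ, ∃ i, ¬ q ^ (m + 2) ∣ F i := by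
    obtain ⟨m, hm⟩ := FiniteMultiplicity.of_prime_left hq hi₀
    exact ⟨m, i₀, fun h => hm ((pow_dvd_pow q (by lia)).trans h)⟩
  refine ⟨Nat.find hex, ?_, Nat.find_spec hex⟩
  rcases h : Nat.find hex with _ | m
  · simpa using hF
  · simpa using Nat.find_min hex (m := m) (by lia)

theorem prime_dvd_derivation_self_of_forall_dvd {k R ι : Type*} [Field k] [CharZero k] [CommRing R]
    [IsDomain R] [UniqueFactorizationMonoid R] [Algebra k R] (δ : Derivation k R R) {F : ι → R}
    (hδ : ∀ i, δ (F i) ∈ Ideal.span (Set.range F)) {q : R} (hq : Prime q) {i₀ : ι}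
    (hi₀ : F i₀ ≠ 0) (hF : ∀ i, q ∣ F i) : q ∣ δ q := by
  obtain ⟨m, hdvd, i, hi⟩ := exists_forall_pow_dvd_and_exists_not_pow_dvd hq hi₀ hF
  obtain ⟨g, hg⟩ := hdvd i
  have hg' : ¬ q ∣ g := fun h => hi (by rw [hg, pow_succ q (m + 1)]; exact mul_dvd_mul_left _ h)
  have hδF : q ^ (m + 1) ∣ δ (F i) := by
    rw [← Ideal.mem_span_singleton]
    refine Ideal.span_le.mpr ?_ (hδ i)
    rintro _ ⟨j, rfl⟩
    exact Ideal.mem_span_singleton.mpr (hdvd j)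
  have hm : IsUnit ((m + 1 : ℕ) : R) := by
    simpa using (Nat.cast_ne_zero.mpr m.succ_ne_zero : ((m + 1 : ℕ) : k) ≠ 0).isUnit.map
      (algebraMap k R)
  have hleibniz : δ (F i) = q ^ (m + 1) * δ g + q ^ m * (((m + 1 : ℕ) : R) * (g * δ q)) := by
    rw [hg, δ.leibniz, δ.leibniz_pow, Nat.add_sub_cancel]
    simp only [smul_eq_mul, nsmul_eq_mul]
    ring
  rw [hleibniz, dvd_add_right (Dvd.intro _ rfl), pow_succ,
    mul_dvd_mul_iff_left (pow_ne_zero m hq.ne_zero), hm.dvd_mul_left] at hδF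
  exact (hq.dvd_or_dvd hδF).resolve_left hg'

open Matrix

variable {k R n l : Type*} [CommRing k] [CommRing R] [Algebra k R] [Fintype n] [Fintype l]
  (δ : Derivation k R R)

theorem derivation_det_eq_of_map_eq [DecidableEq n] {N A B Z : Matrix n n R}
    (hN : N.map δ = B * N + N * A - Z) :
    δ N.det = N.det * (B.trace + A.trace) - (N.adjugate * Z).trace := by
  have hB : (N.adjugate * (B * N)).trace = N.det * B.trace := by
    rw [trace_mul_comm, Matrix.mul_assoc, mul_adjugate, Matrix.mul_smul, Matrix.mul_one, trace_smul,
      smul_eq_mul]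
  have hA : (N.adjugate * (N * A)).trace = N.det * A.trace := by
    rw [← Matrix.mul_assoc, adjugate_mul, smul_mul, Matrix.one_mul, trace_smul, smul_eq_mul]
  rw [derivation_det_eq_trace, hN, Matrix.mul_sub, Matrix.mul_add, trace_sub, trace_add, hA, hB,
    mul_add]

theorem derivation_det_add_mul_mem_span [DecidableEq n] {β : Matrix n n R} {A B : Matrix n n k}
    (hβ : β.map δ = B.map (algebraMap k R) * β + β * A.map (algebraMap k R))
    (U : Matrix n l k) (W : Matrix l n k) :
    δ (β + (U * W).map (algebraMap k R)).det ∈ Ideal.span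
      (Set.range fun T : Matrix n l k × Matrix l n k =>
        (β + (T.1 * T.2).map (algebraMap k R)).det) := by
  classical
  set I := Ideal.span (Set.range fun T : Matrix n l k × Matrix l n k =>
    (β + (T.1 * T.2).map (algebraMap k R)).det)
  have hmem (U : Matrix n l k) (W : Matrix l n k) :
      (β + (U * W).map (algebraMap k R)).det ∈ I := Ideal.subset_span ⟨(U, W), rfl⟩
  set N := β + (U * W).map (algebraMap k R) with hN
  have hδN : N.map δ = B.map (algebraMap k R) * N + N * A.map (algebraMap k R) -
      ((B * U).map (algebraMap k R) * W.map (algebraMap k R) +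
        U.map (algebraMap k R) * (W * A).map (algebraMap k R)) := by
    have hβN : N.map δ = β.map δ := by
      ext i j
      rw [hN, map_apply, Matrix.add_apply, map_apply, map_add, δ.map_algebraMap, add_zero,
        map_apply]
    rw [hβN, hβ, hN, Matrix.mul_add, Matrix.add_mul]
    simp only [Matrix.map_mul, Matrix.mul_assoc]
    abel
  rw [derivation_det_eq_of_map_eq δ hδN, Matrix.mul_add, trace_add, trace_adjugate_mul_mul,
    trace_adjugate_mul_mul]
  refine sub_mem (Ideal.mul_mem_right _ _ (hmem U W)) (add_mem ?_ ?_) <;>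
    refine Ideal.sum_mem _ fun i _ => sub_mem ?_ (hmem U W)
  · convert hmem (U + B * U * (single i i 1 : Matrix l l k)) W using 2
    rw [hN, Matrix.add_mul, Matrix.map_add _ (map_add _), add_assoc]
    simp [Matrix.map_mul]
  · convert hmem U (W + (single i i 1 : Matrix l l k) * (W * A)) using 2
    rw [hN, Matrix.mul_add, Matrix.map_add _ (map_add _), add_assoc]
    simp [Matrix.map_mul, Matrix.mul_assoc]

theorem derivation_det_mul_mem_span [DecidableEq l] {J : Matrix l n R} {A : Matrix n n k}
    (hJ : J.map δ = J * A.map (algebraMap k R)) (U : Matrix n l k) :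
    δ (J * U.map (algebraMap k R)).det ∈ Ideal.span
      (Set.range fun U : Matrix n l k => (J * U.map (algebraMap k R)).det) := by
  have hδ : (J * U.map (algebraMap k R)).map δ = J * (A * U).map (algebraMap k R) := by
    rw [Matrix.map_mul (f := algebraMap k R), ← Matrix.mul_assoc, ← hJ]
    ext
    simp [Matrix.mul_apply, mul_comm]
  rw [derivation_det_eq_sum_updateCol]
  refine Ideal.sum_mem _ fun j _ => Ideal.subset_span ⟨U.updateCol j fun i => (A * U) i j, ?_⟩
  have hcol (a : l) : δ ((J * U.map (algebraMap k R)) a j) =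
      (J * (A * U).map (algebraMap k R)) a j := congrFun (congrFun hδ a) j
  refine congrArg det (Matrix.ext fun a b => ?_)
  rw [updateCol_apply, hcol]
  split_ifs with h <;> simp [Matrix.mul_apply, h]

end StableFamilies

section LinearDerivations

variable {k σ : Type*} [CommRing k] [Fintype σ]

/-- The derivation of the polynomial ring along the linear vector field `x ↦ A x`, that is, the
derivation with `X i ↦ ∑ j, A i j * X j`. -/
noncomputable def linearDerivation (A : Matrix σ σ k) :
    Derivation k (MvPolynomial σ k) (MvPolynomial σ k) :=
  mkDerivation k fun i => ∑ j, C (A i j) * X j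

theorem linearDerivation_X (A : Matrix σ σ k) (i : σ) :
    linearDerivation A (X i) = ∑ j, C (A i j) * X j :=
  mkDerivation_X ..

theorem linearDerivation_apply (A : Matrix σ σ k) (P : MvPolynomial σ k) :
    linearDerivation A P = ∑ i, (∑ j, C (A i j) * X j) * pderiv i P := by
  classical
  have h : linearDerivation A = ∑ i, (∑ j, C (A i j) * X j) • pderiv (R := k) i := by
    refine derivation_ext fun i => ?_
    rw [linearDerivation_X, derivation_sum_apply]
    simp [pderiv_X, Pi.single_apply]
  rw [h, derivation_sum_apply]
  rfl

theorem isHomogeneous_linearDerivation (A : Matrix σ σ k) {P : MvPolynomial σ k} {d : ℕ}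
    (hP : P.IsHomogeneous d) : (linearDerivation A P).IsHomogeneous d := by
  rcases d with _ | d
  · rw [← totalDegree_zero_iff_isHomogeneous, totalDegree_eq_zero_iff_eq_C] at hP
    rw [hP, derivation_C]
    exact isHomogeneous_zero ..
  · rw [linearDerivation_apply, add_comm d]
    refine IsHomogeneous.sum _ _ _ fun i _ =>
      (IsHomogeneous.sum _ _ _ fun j _ => ?_).mul hP.pderiv
    simpa using (isHomogeneous_C σ (A i j)).mul (isHomogeneous_X k j)

theorem totalDegree_linearDerivation_le (A : Matrix σ σ k) (P : MvPolynomial σ k) :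
    (linearDerivation A P).totalDegree ≤ P.totalDegree := by
  conv_lhs => rw [← sum_homogeneousComponent P, map_sum]
  refine totalDegree_finsetSum_le fun i hi => ?_
  exact (isHomogeneous_linearDerivation A (homogeneousComponent_isHomogeneous i P)).totalDegree_le
    |>.trans (Finset.mem_range_succ_iff.mp hi)

theorem exists_linearDerivation_eq_C_mul_of_dvd [IsDomain k] {A : Matrix σ σ k}
    {q : MvPolynomial σ k} (hq0 : q ≠ 0) (hq : q ∣ linearDerivation A q) :
    ∃ c, linearDerivation A q = C c * q := by
  obtain ⟨g, hg⟩ := hq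
  rcases eq_or_ne g 0 with rfl | hg0
  · exact ⟨0, by simp [hg]⟩
  have hdeg := totalDegree_linearDerivation_le A q
  rw [hg, totalDegree_mul_of_isDomain hq0 hg0] at hdeg
  have hgC := totalDegree_eq_zero_iff_eq_C.mp (show g.totalDegree = 0 by lia)
  exact ⟨coeff 0 g, by rw [hg, ← hgC, mul_comm]⟩

theorem linearDerivation_lie (A B : Matrix σ σ k) (P : MvPolynomial σ k) :
    linearDerivation ⁅A, B⁆ P =
      linearDerivation B (linearDerivation A P) - linearDerivation A (linearDerivation B P) := by
  have h : linearDerivation ⁅A, B⁆ = ⁅linearDerivation B, linearDerivation A⁆ := by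
    refine derivation_ext fun i => ?_
    simp only [Derivation.commutator_apply, linearDerivation_X, map_sum, ← smul_eq_C_mul,
      Derivation.map_smul]
    simp only [Ring.lie_def, Matrix.sub_apply, Matrix.mul_apply, sub_smul, Finset.sum_sub_distrib,
      Finset.smul_sum, Finset.sum_smul, smul_smul]
    congr 1 <;> exact Finset.sum_comm
  rw [h, Derivation.commutator_apply]

theorem coeff_linearDerivation_one [DecidableEq σ] (q : MvPolynomial σ k) (s : σ →₀ ℕ) :
    coeff s (linearDerivation 1 q) = s.degree * coeff s q := by
  have hEuler : linearDerivation 1 q = ∑ i, X i * pderiv i q := by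
    simp [linearDerivation_apply, Matrix.one_apply]
  rw [hEuler]
  conv_lhs => rw [q.as_sum]
  simp_rw [map_sum, Finset.mul_sum]
  rw [Finset.sum_comm]
  simp_rw [(isHomogeneous_monomial _ rfl).sum_X_mul_pderiv, coeff_sum, coeff_smul, coeff_monomial]
  simp +contextual

theorem eq_C_of_linearDerivation_one_eq_zero [IsDomain k] [CharZero k] [DecidableEq σ]
    {q : MvPolynomial σ k} (hq : linearDerivation 1 q = 0) : q = C (constantCoeff q) := by
  ext s
  rw [coeff_C]
  split_ifs with hs
  · rw [← hs, constantCoeff_eq]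
  · have hs' := coeff_linearDerivation_one q s
    rw [hq, coeff_zero, eq_comm, mul_eq_zero, Nat.cast_eq_zero, Finsupp.degree_eq_zero_iff] at hs'
    exact hs'.resolve_left (Ne.symm hs)

theorem eq_C_of_linearDerivation_one_eq_C_mul [IsDomain k] [CharZero k] [DecidableEq σ]
    {q : MvPolynomial σ k} {c : k} (hq : linearDerivation 1 q = C c * q)
    (h0 : constantCoeff q ≠ 0) : q = C (constantCoeff q) := by
  have hc : c = 0 := by
    have h := coeff_linearDerivation_one q 0
    rw [hq, coeff_C_mul, ← constantCoeff_eq] at h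
    simpa [h0] using h
  exact eq_C_of_linearDerivation_one_eq_zero (by rw [hq, hc, map_zero, zero_mul])

theorem eq_C_of_pderiv_eq_zero {k σ : Type*} [CommRing k] [IsDomain k] [CharZero k] [Finite σ]
    {P : MvPolynomial σ k} (hP : ∀ s, pderiv s P = 0) : P = C (constantCoeff P) := by
  classical
  cases nonempty_fintype σ
  exact eq_C_of_linearDerivation_one_eq_zero (by simp [linearDerivation_apply, hP])

end LinearDerivations

section Rank

open Matrix

variable {k n l : Type*} [Field k]

theorem exists_det_add_mul_ne_zero [Fintype n] [DecidableEq n] [Fintype l] {T : Matrix n n k}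
    (hT : finrank k (LinearMap.ker T.mulVecLin) ≤ Fintype.card l) :
    ∃ (U : Matrix n l k) (W : Matrix l n k), (T + U * W).det ≠ 0 := by
  classical
  obtain ⟨C, hC⟩ := Submodule.exists_isCompl (LinearMap.range T.mulVecLin)
  have hCd : finrank k (LinearMap.ker T.mulVecLin) = finrank k C := by
    have h₁ := Submodule.finrank_add_eq_of_isCompl hC
    have h₂ := T.mulVecLin.finrank_range_add_finrank_ker
    lia
  let u : LinearMap.ker T.mulVecLin ≃ₗ[k] C := LinearEquiv.ofFinrankEq _ _ hCd
  obtain ⟨w, hw⟩ : ∃ w : LinearMap.ker T.mulVecLin →ₗ[k] (l → k), Function.Injective w :=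
    finrank_le_iff_exists_linearMap.mp (by rwa [finrank_fintype_fun_eq_card])
  obtain ⟨g, hg⟩ := w.exists_leftInverse_of_injective (LinearMap.ker_eq_bot.mpr hw)
  obtain ⟨w', hw'⟩ := LinearMap.exists_extend w
  refine ⟨LinearMap.toMatrix' (C.subtype ∘ₗ u.toLinearMap ∘ₗ g), LinearMap.toMatrix' w', ?_⟩
  rw [← LinearMap.toMatrix'_comp, Ne, ← exists_mulVec_eq_zero_iff]
  rintro ⟨x, hx0, hx⟩
  rw [add_mulVec, LinearMap.toMatrix'_mulVec] at hx
  have hmem : T *ᵥ x ∈ C := by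
    rw [eq_neg_of_add_eq_zero_left hx]
    exact C.neg_mem (Subtype.mem _)
  have hTx : T *ᵥ x = 0 := Submodule.disjoint_def.mp hC.disjoint _ ⟨x, rfl⟩ hmem
  rw [hTx, zero_add] at hx
  have hgx : g (w' x) = 0 := by simpa using hx
  rw [show w' x = w ⟨x, hTx⟩ from LinearMap.congr_fun hw' ⟨x, hTx⟩] at hgx
  exact hx0 (congrArg Subtype.val ((LinearMap.congr_fun hg ⟨x, hTx⟩).symm.trans hgx))

theorem finrank_ker_le_of_det_add_mul_ne_zero [Fintype n] [DecidableEq n] [Fintype l]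
    {T : Matrix n n k} {U : Matrix n l k} {W : Matrix l n k} (h : (T + U * W).det ≠ 0) :
    finrank k (LinearMap.ker T.mulVecLin) ≤ Fintype.card l := by
  rw [← finrank_fintype_fun_eq_card k]
  refine LinearMap.finrank_le_finrank_of_injective
    (f := W.mulVecLin ∘ₗ (LinearMap.ker T.mulVecLin).subtype) ?_
  rw [injective_iff_map_eq_zero]
  rintro ⟨x, hx⟩ hW
  by_contra hx0
  refine h (exists_mulVec_eq_zero_iff.mp ⟨x, fun h0 => hx0 (Subtype.ext h0), ?_⟩)
  simp only [LinearMap.comp_apply, Submodule.subtype_apply, mulVecLin_apply] at hW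
  rw [LinearMap.mem_ker, mulVecLin_apply] at hx
  rw [add_mulVec, ← mulVec_mulVec, hx, hW, mulVec_zero, add_zero]

theorem exists_mul_eq_one_of_linearIndependent_row [Fintype n] [Finite l] [DecidableEq l]
    {J : Matrix l n k} (hJ : LinearIndependent k J.row) : ∃ U : Matrix n l k, J * U = 1 := by
  cases nonempty_fintype l
  rw [← mulVec_surjective_iff_exists_right_inverse]
  suffices LinearMap.range J.mulVecLin = ⊤ from LinearMap.range_eq_top.mp this
  refine Submodule.eq_top_of_finrank_eq ?_
  rw [← Matrix.rank, hJ.rank_matrix, finrank_fintype_fun_eq_card]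

theorem linearIndependent_row_iff_exists_det_mul_ne_zero [Fintype n] [Fintype l] [DecidableEq l]
    {J : Matrix l n k} : LinearIndependent k J.row ↔ ∃ U : Matrix n l k, (J * U).det ≠ 0 := by
  constructor
  · intro hJ
    obtain ⟨U, hU⟩ := exists_mul_eq_one_of_linearIndependent_row hJ
    exact ⟨U, by simp [hU]⟩
  · rintro ⟨U, hU⟩
    rw [← isUnit_iff_ne_zero, ← isUnit_iff_isUnit_det, ← linearIndependent_rows_iff_isUnit] at hU
    exact .of_comp U.vecMulLinear hU

theorem exists_det_submatrix_ne_zero [Finite n] [Fintype l] [DecidableEq l] {J : Matrix l n k}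
    (hJ : LinearIndependent k J.row) : ∃ c : l → n, (J.submatrix id c).det ≠ 0 := by
  classical
  cases nonempty_fintype n
  obtain ⟨U, hU⟩ := linearIndependent_row_iff_exists_det_mul_ne_zero.mp hJ
  by_contra! hc
  let minor : (n → k) [⋀^l]→ₗ[k] k := detRowAlternating.compLinearMap J.mulVecLin
  have hminor (V : l → n → k) : minor V = (J * (of V)ᵀ).det := by
    rw [← det_transpose, transpose_mul, transpose_transpose]
    exact congrArg det (Matrix.ext fun i j => by
      simp [Matrix.mul_apply, mulVec, dotProduct, mul_comm])
  have hzero : minor = 0 := Basis.ext_alternating (Pi.basisFun k n) fun c _ => by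
    rw [AlternatingMap.zero_apply, ← hc c, hminor]
    refine congrArg det (Matrix.ext fun i j => ?_)
    simp [Matrix.mul_apply, Pi.single_apply]
  exact hU ((hminor U.col).symm.trans (by rw [hzero, AlternatingMap.zero_apply]))

theorem exists_map_det_mul_map_algebraMap_ne_zero {R K : Type*} [CommRing R] [Algebra k R]
    [Field K] [Fintype n] [Fintype l] [DecidableEq l] (π : R →+* K) {J : Matrix l n R}
    (hJ : LinearIndependent K (J.map π).row) :
    ∃ U : Matrix n l k, π (J * U.map (algebraMap k R)).det ≠ 0 := by
  classical
  obtain ⟨c, hc⟩ := exists_det_submatrix_ne_zero hJ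
  refine ⟨(1 : Matrix n n k).submatrix id c, ?_⟩
  convert hc
  rw [RingHom.map_det]
  refine congrArg det (Matrix.ext fun i j => ?_)
  simp [Matrix.mul_apply, Matrix.one_apply]

end Rank

section Jacobian

variable {k σ ι : Type*} [Field k]

theorem totalDegree_pderiv_le {k σ : Type*} [CommSemiring k] (s : σ) (P : MvPolynomial σ k) :
    (pderiv s P).totalDegree ≤ P.totalDegree - 1 := by
  conv_lhs => rw [← sum_homogeneousComponent P, map_sum]
  refine totalDegree_finsetSum_le fun i hi => ?_
  have hdeg := (homogeneousComponent_isHomogeneous i P).pderiv (i := s) |>.totalDegree_le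
  have hi' := Finset.mem_range_succ_iff.mp hi
  lia

theorem pderiv_eq_zero_of_dvd {s : σ} {q : MvPolynomial σ k} (h : q ∣ pderiv s q) :
    pderiv s q = 0 := by
  by_contra h0
  have hle := (totalDegree_le_of_dvd_of_isDomain h h0).trans (totalDegree_pderiv_le s q)
  have hq := totalDegree_eq_zero_iff_eq_C.mp (show q.totalDegree = 0 by lia)
  exact h0 (by rw [hq, pderiv_C])

theorem ne_C_of_prime {q : MvPolynomial σ k} (hq : Prime q) (c : k) : q ≠ C c := by
  rintro rfl
  have hc : c ≠ 0 := fun hc => hq.ne_zero (by rw [hc, map_zero])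
  exact hq.not_isUnit (hc.isUnit.map C)

theorem exists_not_dvd_pderiv [CharZero k] [Finite σ] {q : MvPolynomial σ k} (hq : Prime q) :
    ∃ s, ¬ q ∣ pderiv s q := by
  by_contra! h
  exact ne_C_of_prime hq _ (eq_C_of_pderiv_eq_zero fun s => pderiv_eq_zero_of_dvd (h s))

theorem pderiv_aeval [Fintype ι] (f : ι → MvPolynomial σ k) (A : MvPolynomial ι k) (s : σ) :
    pderiv s (aeval f A) = ∑ i, aeval f (pderiv i A) * pderiv s (f i) := by
  classical
  induction A using MvPolynomial.induction_on with
  | C a => simp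
  | add P Q hP hQ => simp only [map_add, hP, hQ, add_mul, Finset.sum_add_distrib]
  | mul_X P i hP =>
    simp only [map_mul, aeval_X, Derivation.leibniz, hP, smul_eq_mul, map_add, pderiv_X, add_mul,
      Finset.sum_add_distrib, Finset.mul_sum]
    congr 1
    · rw [Finset.sum_eq_single i] <;> simp +contextual
    · exact Finset.sum_congr rfl fun j _ => by ring

/-- The Jacobian matrix `(∂ₛ pᵢ)` of a family of polynomials `p`, with rows indexed by `p`. -/
noncomputable def jacobian {k σ ι : Type*} [CommSemiring k] (p : ι → MvPolynomial σ k) :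
    Matrix ι σ (MvPolynomial σ k) :=
  Matrix.of fun i s => pderiv s (p i)

theorem jacobian_apply {k σ ι : Type*} [CommSemiring k] (p : ι → MvPolynomial σ k) (i : ι)
    (s : σ) : jacobian p i s = pderiv s (p i) :=
  rfl

theorem dvd_of_dvd_aeval {p : ι → MvPolynomial σ k} (hp : AlgebraicIndependent k p)
    {A B : MvPolynomial ι k}
    (hA : ∀ g, aeval p A * g ∈ Algebra.adjoin k (Set.range p) → g ∈ Algebra.adjoin k (Set.range p))
    (h : aeval p A ∣ aeval p B) : A ∣ B := by
  obtain ⟨g, hg⟩ := h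
  simp_rw [Algebra.adjoin_range_eq_range_aeval] at hA
  obtain ⟨A', rfl⟩ := hA g ⟨B, hg⟩
  exact ⟨A', hp (by rw [hg, map_mul]; rfl)⟩

theorem not_dvd_rename_subtype_val {i : ι} {A : MvPolynomial ι k} (hA : pderiv i A ≠ 0)
    {B : MvPolynomial {j // j ≠ i} k} (hB : B ≠ 0) : ¬ A ∣ rename Subtype.val B := by
  rintro ⟨A', hA'⟩
  have hB' : rename Subtype.val B ≠ 0 := by
    rwa [Ne, rename_eq_zero_iff_of_injective _ Subtype.val_injective]
  have hvars (Q : MvPolynomial ι k) : Q.degreeOf i = 0 ↔ i ∉ Q.vars := by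
    classical
    rw [degreeOf_def, Multiset.count_eq_zero, vars_def, Multiset.mem_toFinset]
  have hAi : A.degreeOf i ≠ 0 := fun h =>
    hA (pderiv_eq_zero_of_notMem_vars ((hvars A).mp h))
  have hBi : (rename Subtype.val B).degreeOf i = 0 := by
    classical
    refine (hvars _).mpr fun hmem => ?_
    obtain ⟨j, -, hj⟩ := Finset.mem_image.mp (vars_rename _ _ hmem)
    exact j.2 hj
  rw [hA', degreeOf_mul_eq (left_ne_zero_of_mul (hA' ▸ hB'))
    (right_ne_zero_of_mul (hA' ▸ hB'))] at hBi
  lia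

variable {K : Type*} [Field K] [Algebra k K] [Algebra (MvPolynomial σ k) K]
  [IsScalarTower k (MvPolynomial σ k) K]

-- A relation among the `p j` with `j ≠ i` modulo `q = A(p)` is a multiple of `A`, which involves
-- the variable `i`.
theorem algebraicIndependent_algebraMap_of_ne {p : ι → MvPolynomial σ k}
    (hp : AlgebraicIndependent k p) {A : MvPolynomial ι k}
    (hA : ∀ g, aeval p A * g ∈ Algebra.adjoin k (Set.range p) → g ∈ Algebra.adjoin k (Set.range p))
    (hK : ∀ P, algebraMap (MvPolynomial σ k) K P = 0 → aeval p A ∣ P) {i : ι}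
    (hi : pderiv i A ≠ 0) :
    AlgebraicIndependent k fun j : {j // j ≠ i} => algebraMap (MvPolynomial σ k) K (p j) := by
  rw [algebraicIndependent_iff]
  intro B hB
  by_contra hB0
  refine not_dvd_rename_subtype_val hi hB0 (dvd_of_dvd_aeval hp hA (hK _ ?_))
  rw [aeval_rename, ← hB, ← aeval_algebraMap_apply]
  rfl

variable [CharZero k]

theorem eq_zero_of_sum_mul_pderiv_eq_of_apply_eq_zero [Finite σ] [Fintype ι]
    {p : ι → MvPolynomial σ k} {q : MvPolynomial σ k} (hq : algebraMap (MvPolynomial σ k) K q = 0)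
    {i : ι}
    (hp : AlgebraicIndependent k fun j : {j // j ≠ i} => algebraMap (MvPolynomial σ k) K (p j))
    {d : ι → K} {l : K} (hdi : d i = 0)
    (hd : ∀ s, ∑ j, d j * algebraMap (MvPolynomial σ k) K (pderiv s (p j)) =
      l * algebraMap (MvPolynomial σ k) K (pderiv s q)) : d = 0 := by
  classical
  have hd' := eq_zero_of_sum_mul_pderiv_eq_mul_pderiv hq hp (fun j => d j) l fun s => by
    rw [← hd, ← Fintype.sum_subtype_add_sum_subtype (· ≠ i), left_eq_add]
    refine Finset.sum_eq_zero fun j _ => ?_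
    rw [not_not.mp j.2, hdi, zero_mul]
  ext j
  by_cases hj : j = i
  · rw [hj, hdi, Pi.zero_apply]
  · exact congrFun hd' ⟨j, hj⟩

theorem linearIndependent_row_jacobian_map [Finite σ] [Finite ι] {p : ι → MvPolynomial σ k}
    (hp : AlgebraicIndependent k p) {A : MvPolynomial ι k} (hq : Prime (aeval p A))
    (hA : ∀ g, aeval p A * g ∈ Algebra.adjoin k (Set.range p) → g ∈ Algebra.adjoin k (Set.range p))
    (hK : ∀ P, algebraMap (MvPolynomial σ k) K P = 0 ↔ aeval p A ∣ P) :
    LinearIndependent K ((jacobian p).map (algebraMap (MvPolynomial σ k) K)).row := by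
  cases nonempty_fintype ι
  set π := algebraMap (MvPolynomial σ k) K
  obtain ⟨i, hi⟩ : ∃ i, pderiv i A ≠ 0 := by
    by_contra! hA0
    rw [eq_C_of_pderiv_eq_zero hA0, aeval_C] at hq
    exact ne_C_of_prime hq _ rfl
  have hzero {d : ι → K} {l : K} := eq_zero_of_sum_mul_pderiv_eq_of_apply_eq_zero (d := d) (l := l)
    ((hK _).mpr dvd_rfl) (algebraicIndependent_algebraMap_of_ne hp hA (fun P => (hK P).mp) hi)
  refine Fintype.linearIndependent_iff.mpr fun c hc => congrFun ?_
  replace hc (s : σ) : ∑ j, c j * π (pderiv s (p j)) = 0 := by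
    simpa [jacobian_apply] using congrFun hc s
  let a : ι → K := fun j => π (aeval p (pderiv j A))
  have ha (s : σ) : ∑ j, a j * π (pderiv s (p j)) = π (pderiv s (aeval p A)) := by
    simp only [a, pderiv_aeval, map_sum, map_mul]
  have hcomb (s : σ) : ∑ j, (c i * a j - a i * c j) * π (pderiv s (p j)) =
      c i * π (pderiv s (aeval p A)) := by
    simp only [sub_mul, mul_assoc, Finset.sum_sub_distrib, ← Finset.mul_sum, hc, ha, mul_zero,
      sub_zero]
  have hcomb0 := hzero (by ring) hcomb
  obtain ⟨s, hs⟩ := exists_not_dvd_pderiv hq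
  have hci : c i = 0 := by
    have hcs := hcomb s
    simp only [fun j => congrFun hcomb0 j, Pi.zero_apply, zero_mul, Finset.sum_const_zero] at hcs
    exact (mul_eq_zero.mp hcs.symm).resolve_right ((hK _).not.mpr hs)
  exact hzero (l := 0) hci fun s => by rw [hc, zero_mul]

theorem exists_det_jacobian_mul_ne_zero [Fintype σ] [Fintype ι] [DecidableEq ι]
    {p : ι → MvPolynomial σ k} (hp : AlgebraicIndependent k p) :
    ∃ U : Matrix σ ι k, (jacobian p * U.map (algebraMap k (MvPolynomial σ k))).det ≠ 0 := by
  let K := FractionRing (MvPolynomial σ k)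
  have hinj := IsFractionRing.injective (MvPolynomial σ k) K
  have hrow : LinearIndependent K ((jacobian p).map (algebraMap (MvPolynomial σ k) K)).row := by
    refine Fintype.linearIndependent_iff.mpr fun c hc => congrFun ?_
    refine eq_zero_of_sum_mul_pderiv_eq_mul_pderiv (k := k) (q := 0) (f := p) (map_zero _) ?_ c 0
      fun s => ?_
    · exact hp.map' (f := IsScalarTower.toAlgHom k (MvPolynomial σ k) K) hinj
    · simpa [jacobian_apply] using congrFun hc s
  obtain ⟨U, hU⟩ := exists_map_det_mul_map_algebraMap_ne_zero (k := k) _ hrow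
  exact ⟨U, fun h => hU (by rw [h, map_zero])⟩

theorem exists_not_dvd_det_jacobian_mul [Fintype σ] [Fintype ι] [DecidableEq ι]
    {p : ι → MvPolynomial σ k} (hp : AlgebraicIndependent k p) {q : MvPolynomial σ k} (hq : Prime q)
    (hqp : q ∈ Algebra.adjoin k (Set.range p))
    (hdiv : ∀ g, q * g ∈ Algebra.adjoin k (Set.range p) → g ∈ Algebra.adjoin k (Set.range p)) :
    ∃ U : Matrix σ ι k,
      ¬ q ∣ (jacobian p * U.map (algebraMap k (MvPolynomial σ k))).det := by
  obtain ⟨A, rfl⟩ : ∃ A, aeval p A = q := by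
    rwa [Algebra.adjoin_range_eq_range_aeval] at hqp
  let I := Ideal.span {aeval p A}
  have hI : I.IsPrime := (Ideal.span_singleton_prime hq.ne_zero).mpr hq
  let K := FractionRing (MvPolynomial σ k ⧸ I)
  have hK (P) : algebraMap (MvPolynomial σ k) K P = 0 ↔ aeval p A ∣ P := by
    rw [IsScalarTower.algebraMap_apply (MvPolynomial σ k) (MvPolynomial σ k ⧸ I) K,
      FaithfulSMul.algebraMap_eq_zero_iff, Ideal.Quotient.algebraMap_eq,
      Ideal.Quotient.eq_zero_iff_mem, Ideal.mem_span_singleton]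
  obtain ⟨U, hU⟩ := exists_map_det_mul_map_algebraMap_ne_zero (k := k) _
    (linearIndependent_row_jacobian_map hp hq hdiv hK)
  exact ⟨U, (hK _).not.mp hU⟩

end Jacobian

section PolynomialFunctions

variable {L : Type*} [LieRing L] [LieAlgebra ℂ L] {n : ℕ} (b : Basis (Fin n) ℂ L)

/-- The value at `x` of a polynomial function on `L`, given in the coordinates of the basis `b`. -/
noncomputable def evalAt (x : L) : MvPolynomial (Fin n) ℂ →+* ℂ :=
  MvPolynomial.eval fun i => b.repr x i

/-- The polynomial, in the coordinates of the basis `b`, of a linear form on `L`. -/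
noncomputable def linForm (g : L →ₗ[ℂ] ℂ) : MvPolynomial (Fin n) ℂ := ∑ i, C (g (b i)) * X i

/-- The derivation of the ring of polynomial functions given by the vector field `x ↦ ⁅z, x⁆`,
that is, the action of `z` on polynomial functions up to sign. -/
noncomputable def adDerivation (z : L) :
    Derivation ℂ (MvPolynomial (Fin n) ℂ) (MvPolynomial (Fin n) ℂ) :=
  linearDerivation (LinearMap.toMatrix b b (LieAlgebra.ad ℂ L z))

/-- The restriction of a polynomial function to the line `s ↦ y + s • u`. -/
noncomputable def lineRestrict (y u : L) : MvPolynomial (Fin n) ℂ →ₐ[ℂ] Polynomial ℂ :=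
  aeval fun i => Polynomial.C (b.repr y i) + Polynomial.C (b.repr u i) * Polynomial.X

variable {b}

@[simp]
theorem evalAt_C (x : L) (c : ℂ) : evalAt b x (C c) = c := eval_C c

@[simp]
theorem evalAt_X (x : L) (i : Fin n) : evalAt b x (X i) = b.repr x i := eval_X i

@[simp]
theorem evalAt_algebraMap (x : L) (c : ℂ) :
    evalAt b x (algebraMap ℂ (MvPolynomial (Fin n) ℂ) c) = c := eval_C c

theorem evalAt_zero (P : MvPolynomial (Fin n) ℂ) : evalAt b 0 P = constantCoeff P := by
  rw [evalAt, map_zero]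
  exact DFunLike.congr_fun eval_zero P

@[simp]
theorem map_algebraMap_map_evalAt {l m : Type*} (A : Matrix l m ℂ) (x : L) :
    (A.map (algebraMap ℂ (MvPolynomial (Fin n) ℂ))).map (evalAt b x) = A :=
  Matrix.ext fun _ _ => evalAt_algebraMap _ _

theorem evalAt_ext {P Q : MvPolynomial (Fin n) ℂ} (h : ∀ x, evalAt b x P = evalAt b x Q) :
    P = Q := by
  refine MvPolynomial.funext fun x => ?_
  have hx : (fun i => b.repr (b.equivFun.symm x) i) = x := b.equivFun.apply_symm_apply x
  simpa only [evalAt, hx] using h (b.equivFun.symm x)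

theorem map_evalAt_ext {l m : Type*} {M N : Matrix l m (MvPolynomial (Fin n) ℂ)}
    (h : ∀ x, M.map (evalAt b x) = N.map (evalAt b x)) : M = N :=
  Matrix.ext fun i j => evalAt_ext fun x => congrFun (congrFun (h x) i) j

@[simp]
theorem evalAt_linForm (g : L →ₗ[ℂ] ℂ) (x : L) : evalAt b x (linForm b g) = g x := by
  conv_rhs => rw [← b.sum_repr x, map_sum]
  simp [linForm, -Basis.sum_repr, mul_comm]

theorem irreducible_linForm {g : L →ₗ[ℂ] ℂ} (hg : g ≠ 0) : Irreducible (linForm b g) := by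
  have hne : linForm b g ≠ 0 := fun h => hg (LinearMap.ext fun x => by
    rw [← evalAt_linForm (b := b), h, map_zero, LinearMap.zero_apply])
  have hhom : (linForm b g).IsHomogeneous 1 := IsHomogeneous.sum _ _ _ fun i _ => by
    simpa using (isHomogeneous_C (Fin n) (g (b i))).mul (isHomogeneous_X ℂ i)
  refine irreducible_of_totalDegree_eq_one (hhom.totalDegree hne) fun c hc => ?_
  obtain ⟨s, hs⟩ := ne_zero_iff.mp hne
  exact (ne_zero_of_dvd_ne_zero hs (hc s)).isUnit

theorem evalAt_dirDeriv (u x : L) (P : MvPolynomial (Fin n) ℂ) :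
    evalAt b x (dirDeriv b u P) = ∑ i, b.repr u i * evalAt b x (pderiv i P) := by
  simp [dirDeriv]

theorem evalAt_dirDeriv_smul (a : ℂ) (u x : L) (P : MvPolynomial (Fin n) ℂ) :
    evalAt b x (dirDeriv b (a • u) P) = a * evalAt b x (dirDeriv b u P) := by
  simp only [evalAt_dirDeriv, map_smul, Finsupp.smul_apply, smul_eq_mul, mul_assoc, Finset.mul_sum]

theorem evalAt_dirDeriv_basis (k : Fin n) (x : L) (P : MvPolynomial (Fin n) ℂ) :
    evalAt b x (dirDeriv b (b k) P) = evalAt b x (pderiv k P) := by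
  simp [evalAt_dirDeriv, Finsupp.single_apply]

theorem evalAt_dirDeriv_linForm (u x : L) (g : L →ₗ[ℂ] ℂ) :
    evalAt b x (dirDeriv b u (linForm b g)) = g u := by
  rw [evalAt_dirDeriv, ← evalAt_linForm (b := b) g u]
  simp [linForm, Pi.single_apply, mul_comm]

theorem evalAt_linearDerivation (f : L →ₗ[ℂ] L) (x : L) (P : MvPolynomial (Fin n) ℂ) :
    evalAt b x (linearDerivation (LinearMap.toMatrix b b f) P) =
      evalAt b x (dirDeriv b (f x) P) := by
  rw [linearDerivation_apply, evalAt_dirDeriv, map_sum]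
  refine Finset.sum_congr rfl fun i _ => ?_
  rw [map_mul, map_sum]
  congr 1
  simp only [map_mul, evalAt_C, evalAt_X]
  exact congrFun (LinearMap.toMatrix_mulVec_repr b b f x) i

theorem linearDerivation_linForm (f : L →ₗ[ℂ] L) (g : L →ₗ[ℂ] ℂ) :
    linearDerivation (LinearMap.toMatrix b b f) (linForm b g) = linForm b (g ∘ₗ f) :=
  evalAt_ext (b := b) fun x => by
    rw [evalAt_linearDerivation, evalAt_dirDeriv_linForm, evalAt_linForm, LinearMap.comp_apply]

theorem evalAt_adDerivation (z x : L) (P : MvPolynomial (Fin n) ℂ) :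
    evalAt b x (adDerivation b z P) = evalAt b x (dirDeriv b ⁅z, x⁆ P) :=
  evalAt_linearDerivation (LieAlgebra.ad ℂ L z) x P

theorem eval_lineRestrict (y u : L) (s : ℂ) (P : MvPolynomial (Fin n) ℂ) :
    (lineRestrict b y u P).eval s = evalAt b (y + s • u) P := by
  have hcomp : (Polynomial.evalRingHom s).comp (lineRestrict b y u : _ →+* Polynomial ℂ) =
      evalAt b (y + s • u) := by
    refine MvPolynomial.ringHom_ext (fun c => ?_) fun i => ?_
    · simp [lineRestrict]
    · simp [lineRestrict, mul_comm s]
  exact RingHom.congr_fun hcomp P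

theorem dirDeriv_eq_sum_smul_pderiv (u : L) (P : MvPolynomial (Fin n) ℂ) :
    dirDeriv b u P = (∑ i, (C (b.repr u i) : MvPolynomial (Fin n) ℂ) • pderiv (R := ℂ) i) P := by
  simp only [dirDeriv, derivation_sum_apply, Derivation.smul_apply, smul_eq_mul]

theorem dirDeriv_X (u : L) (i : Fin n) : dirDeriv b u (X i) = C (b.repr u i) := by
  simp [dirDeriv, Pi.single_apply]

theorem derivative_lineRestrict (y u : L) (P : MvPolynomial (Fin n) ℂ) :
    Polynomial.derivative (lineRestrict b y u P) = lineRestrict b y u (dirDeriv b u P) := by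
  induction P using MvPolynomial.induction_on with
  | C c => simp [dirDeriv, lineRestrict]
  | add P Q hP hQ =>
    simp only [dirDeriv_eq_sum_smul_pderiv, map_add] at hP hQ ⊢
    rw [hP, hQ]
  | mul_X P i hP =>
    have hX : Polynomial.derivative (lineRestrict b y u (X i)) =
        lineRestrict b y u (dirDeriv b u (X i)) := by
      simp [dirDeriv_X, lineRestrict]
    rw [dirDeriv_eq_sum_smul_pderiv, Derivation.leibniz, ← dirDeriv_eq_sum_smul_pderiv,
      ← dirDeriv_eq_sum_smul_pderiv, map_mul, map_add, Polynomial.derivative_mul, hP, hX,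
      smul_eq_mul, smul_eq_mul, map_mul, map_mul]
    ring

end PolynomialFunctions

section InvariantPolynomials

variable {L : Type*} [LieRing L] [LieAlgebra ℂ L] {n : ℕ} {b : Basis (Fin n) ℂ L}

theorem isInvariantPoly_iff {P : MvPolynomial (Fin n) ℂ} :
    IsInvariantPoly b P ↔ ∀ z, adDerivation b z P = 0 := by
  refine ⟨fun h z => evalAt_ext (b := b) fun x => ?_, fun h x z => ?_⟩
  · rw [evalAt_adDerivation, map_zero]
    exact h x z
  · change evalAt b x _ = 0
    rw [← evalAt_adDerivation, h, map_zero]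

namespace IsInvariantPoly

variable {P : MvPolynomial (Fin n) ℂ} (hP : IsInvariantPoly b P)

include hP

theorem evalAt_dirDeriv_lie (x z : L) : evalAt b x (dirDeriv b ⁅z, x⁆ P) = 0 := hP x z

theorem derivative_lineRestrict_eq_zero {h y u : L} {a : ℂ} (ha : a ≠ 0) (hy : ⁅h, y⁆ = 0)
    (hu : ⁅h, u⁆ = a • u) : Polynomial.derivative (lineRestrict b y u P) = 0 := by
  have hX : Polynomial.X * Polynomial.derivative (lineRestrict b y u P) = 0 := by
    refine Polynomial.funext fun s => ?_
    have hlie : ⁅h, y + s • u⁆ = (a * s) • u := by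
      rw [lie_add, hy, zero_add, lie_smul, hu, smul_smul, mul_comm]
    have hinv := hP.evalAt_dirDeriv_lie (y + s • u) h
    rw [hlie, evalAt_dirDeriv_smul, mul_assoc] at hinv
    rw [Polynomial.eval_mul, Polynomial.eval_X, derivative_lineRestrict, eval_lineRestrict,
      Polynomial.eval_zero]
    exact (mul_eq_zero.mp hinv).resolve_left ha
  exact (mul_eq_zero.mp hX).resolve_left Polynomial.X_ne_zero

theorem evalAt_dirDeriv_eq_zero {h y u : L} {a : ℂ} (ha : a ≠ 0) (hy : ⁅h, y⁆ = 0)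
    (hu : ⁅h, u⁆ = a • u) : evalAt b y (dirDeriv b u P) = 0 := by
  have heval := congrArg (Polynomial.eval 0) (hP.derivative_lineRestrict_eq_zero ha hy hu)
  rwa [derivative_lineRestrict, eval_lineRestrict, zero_smul, add_zero,
    Polynomial.eval_zero] at heval

theorem evalAt_add {h y u : L} {a : ℂ} (ha : a ≠ 0) (hy : ⁅h, y⁆ = 0) (hu : ⁅h, u⁆ = a • u) :
    evalAt b (y + u) P = evalAt b y P := by
  have hconst := Polynomial.eq_C_of_natDegree_eq_zero
    (Polynomial.derivative_eq_zero.mp (hP.derivative_lineRestrict_eq_zero ha hy hu))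
  have heval (s : ℂ) : evalAt b (y + s • u) P = (lineRestrict b y u P).coeff 0 := by
    rw [← eval_lineRestrict, hconst, Polynomial.eval_C, Polynomial.coeff_C_zero]
  simpa using (heval 1).trans (heval 0).symm

theorem of_mul {Q : MvPolynomial (Fin n) ℂ} (hP₀ : P ≠ 0) (hPQ : IsInvariantPoly b (P * Q)) :
    IsInvariantPoly b Q := by
  rw [isInvariantPoly_iff] at *
  intro z
  have hz := hPQ z
  rw [Derivation.leibniz, hP, smul_zero, add_zero, smul_eq_mul] at hz
  exact (mul_eq_zero.mp hz).resolve_left hP₀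

end IsInvariantPoly

theorem isInvariantPoly_of_mem_adjoin {s : Set (MvPolynomial (Fin n) ℂ)}
    (hs : ∀ P ∈ s, IsInvariantPoly b P) {P : MvPolynomial (Fin n) ℂ}
    (hP : P ∈ Algebra.adjoin ℂ s) : IsInvariantPoly b P := by
  rw [isInvariantPoly_iff]
  intro z
  induction hP using Algebra.adjoin_induction with
  | mem x hx => exact isInvariantPoly_iff.mp (hs x hx) z
  | algebraMap c => exact Derivation.map_algebraMap _ c
  | add x y _ _ hx hy => rw [map_add, hx, hy, add_zero]
  | mul x y _ _ hx hy => rw [Derivation.leibniz, hx, hy, smul_zero, smul_zero, add_zero]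

end InvariantPolynomials

section KillingForm

variable {K L : Type*} [Field K] [LieRing L] [LieAlgebra K L] [LieAlgebra.IsKilling K L]

theorem eq_zero_of_killingForm_eq_zero {x : L} (h : ∀ y, killingForm K L x y = 0) : x = 0 :=
  (LieAlgebra.IsKilling.killingForm_nondegenerate K L).1 x h

theorem eq_zero_of_forall_apply_lie_eq_zero [FiniteDimensional K L] {g : L →ₗ[K] K}
    (hg : ∀ x y : L, g ⁅x, y⁆ = 0) : g = 0 := by
  set w := (LinearMap.BilinForm.toDual (killingForm K L)
    (LieAlgebra.IsKilling.killingForm_nondegenerate K L)).symm g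
  have hw (x : L) : killingForm K L w x = g x :=
    LinearMap.BilinForm.apply_toDual_symm_apply g x
  have hw_mem : w ∈ LieAlgebra.center K L := fun y => eq_zero_of_killingForm_eq_zero fun z => by
    rw [LieModule.traceForm_apply_lie_apply', hw, hg, neg_zero]
  rw [LieAlgebra.center_eq_bot, LieSubmodule.mem_bot] at hw_mem
  exact LinearMap.ext fun x => by rw [← hw, hw_mem, map_zero]

end KillingForm

section SemiInvariants

variable {L : Type*} [LieRing L] [LieAlgebra ℂ L] {n : ℕ} {b : Basis (Fin n) ℂ L}

theorem adDerivation_add_apply (z w : L) (P : MvPolynomial (Fin n) ℂ) :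
    adDerivation b (z + w) P = adDerivation b z P + adDerivation b w P :=
  evalAt_ext (b := b) fun x => by
    simp only [map_add, evalAt_adDerivation, add_lie, evalAt_dirDeriv, Finsupp.add_apply, add_mul,
      Finset.sum_add_distrib]

theorem adDerivation_smul_apply (a : ℂ) (z : L) (P : MvPolynomial (Fin n) ℂ) :
    adDerivation b (a • z) P = C a * adDerivation b z P :=
  evalAt_ext (b := b) fun x => by
    rw [map_mul, evalAt_C, evalAt_adDerivation, evalAt_adDerivation, smul_lie,
      evalAt_dirDeriv_smul]

theorem toMatrix_ad_lie (z w : L) :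
    LinearMap.toMatrix b b (LieAlgebra.ad ℂ L ⁅z, w⁆) =
      ⁅LinearMap.toMatrix b b (LieAlgebra.ad ℂ L z),
        LinearMap.toMatrix b b (LieAlgebra.ad ℂ L w)⁆ := by
  have hlie : (LieAlgebra.ad ℂ L ⁅z, w⁆ : Module.End ℂ L) =
      LieAlgebra.ad ℂ L z * LieAlgebra.ad ℂ L w - LieAlgebra.ad ℂ L w * LieAlgebra.ad ℂ L z :=
    LinearMap.ext (lie_lie z w)
  rw [hlie, Ring.lie_def, map_sub, LinearMap.toMatrix_mul, LinearMap.toMatrix_mul]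

theorem adDerivation_lie_eq_zero {z w : L} {c d : ℂ} {q : MvPolynomial (Fin n) ℂ}
    (hz : adDerivation b z q = C c * q) (hw : adDerivation b w q = C d * q) :
    adDerivation b ⁅z, w⁆ q = 0 := by
  simp only [adDerivation] at *
  rw [toMatrix_ad_lie, linearDerivation_lie, hz, hw, ← smul_eq_C_mul, ← smul_eq_C_mul,
    Derivation.map_smul, Derivation.map_smul, hz, hw, ← smul_eq_C_mul, ← smul_eq_C_mul,
    smul_comm, sub_self]

-- The eigenvalue of a semi-invariant is linear in `z` and kills brackets, and `L` is perfect.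
theorem isInvariantPoly_of_dvd [FiniteDimensional ℂ L] [LieAlgebra.IsKilling ℂ L]
    {q : MvPolynomial (Fin n) ℂ} (hq : q ≠ 0) (hdvd : ∀ z, q ∣ adDerivation b z q) :
    IsInvariantPoly b q := by
  have heigen (z : L) : ∃ c, adDerivation b z q = C c * q :=
    exists_linearDerivation_eq_C_mul_of_dvd hq (hdvd z)
  choose c hc using heigen
  have hcancel {x y : ℂ} (h : C x * q = C y * q) : x = y :=
    C_injective _ _ (mul_right_cancel₀ hq h)
  let g : L →ₗ[ℂ] ℂ :=
    { toFun := c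
      map_add' := fun z w =>
        hcancel (by rw [← hc, adDerivation_add_apply, hc, hc, map_add, add_mul])
      map_smul' := fun a z => hcancel (by
        rw [← hc, adDerivation_smul_apply, hc, RingHom.id_apply, smul_eq_mul, map_mul, mul_assoc]) }
  have hg : g = 0 := eq_zero_of_forall_apply_lie_eq_zero fun x y => hcancel (by
    change C (c _) * q = _
    rw [← hc, adDerivation_lie_eq_zero (hc x) (hc y), map_zero, zero_mul])
  refine isInvariantPoly_iff.mpr fun z => ?_
  rw [hc, show c z = 0 from LinearMap.congr_fun hg z, map_zero, zero_mul]

end SemiInvariants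

section KillingMatrix

variable {K L m : Type*} [Field K] [LieRing L] [LieAlgebra K L] [Fintype m] [DecidableEq m]
  (b : Basis m K L)

/-- The Gram matrix of the Killing form in the basis `b`. -/
noncomputable def killingMatrix : Matrix m m K :=
  LinearMap.BilinForm.toMatrix b (killingForm K L)

variable {b}

theorem isUnit_det_killingMatrix [LieAlgebra.IsKilling K L] : IsUnit (killingMatrix b).det := by
  rw [isUnit_iff_ne_zero, killingMatrix, ← LinearMap.BilinForm.nondegenerate_iff_det_ne_zero]
  exact LieAlgebra.IsKilling.killingForm_nondegenerate K L

theorem killingMatrix_mul_apply (f : L →ₗ[K] L) (i j : m) :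
    (killingMatrix b * LinearMap.toMatrix b b f) i j = killingForm K L (b i) (f (b j)) := by
  rw [killingMatrix, ← LinearMap.BilinForm.toMatrix_compRight, LinearMap.BilinForm.toMatrix_apply,
    LinearMap.BilinForm.compRight_apply]

theorem transpose_mul_killingMatrix_apply (f : L →ₗ[K] L) (i j : m) :
    ((LinearMap.toMatrix b b f).transpose * killingMatrix b) i j =
      killingForm K L (f (b i)) (b j) := by
  rw [killingMatrix, ← LinearMap.BilinForm.toMatrix_compLeft, LinearMap.BilinForm.toMatrix_apply,
    LinearMap.BilinForm.compLeft_apply]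

theorem vecMul_killingMatrix (u : L) (j : m) :
    Matrix.vecMul (b.repr u) (killingMatrix b) j = killingForm K L u (b j) := by
  conv_rhs => rw [← b.sum_repr u]
  simp [killingMatrix, Matrix.vecMul, dotProduct, LinearMap.BilinForm.toMatrix_apply,
    -Basis.sum_repr]

theorem transpose_toMatrix_ad_mul_killingMatrix (z : L) :
    (LinearMap.toMatrix b b (LieAlgebra.ad K L z)).transpose * killingMatrix b =
      -(killingMatrix b * LinearMap.toMatrix b b (LieAlgebra.ad K L z)) :=
  Matrix.ext fun i j => by
    rw [Matrix.neg_apply, transpose_mul_killingMatrix_apply, killingMatrix_mul_apply,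
      LieAlgebra.ad_apply, LieAlgebra.ad_apply, LieModule.traceForm_apply_lie_apply']

end KillingMatrix

section BracketMatrix

variable {L : Type*} [LieRing L] [LieAlgebra ℂ L] {n : ℕ} (b : Basis (Fin n) ℂ L)

/-- The matrix of the alternating form `(u, v) ↦ κ(⁅u, v⁆, x)`, as a polynomial in `x`. -/
noncomputable def bracketMatrix : Matrix (Fin n) (Fin n) (MvPolynomial (Fin n) ℂ) :=
  Matrix.of fun k l => linForm b (killingForm ℂ L ⁅b k, b l⁆)

variable {b}

theorem bracketMatrix_map_evalAt (x : L) :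
    (bracketMatrix b).map (evalAt b x) =
      -(killingMatrix b * LinearMap.toMatrix b b (LieAlgebra.ad ℂ L x)) :=
  Matrix.ext fun k l => by
    rw [Matrix.map_apply, bracketMatrix, Matrix.of_apply, evalAt_linForm, Matrix.neg_apply,
      killingMatrix_mul_apply, LieAlgebra.ad_apply, LieModule.traceForm_apply_lie_apply,
      ← lie_skew, map_neg]

theorem transpose_bracketMatrix : (bracketMatrix b).transpose = -bracketMatrix b := by
  refine Matrix.ext fun k l => evalAt_ext (b := b) fun x => ?_
  simp only [bracketMatrix, Matrix.transpose_apply, Matrix.neg_apply, Matrix.of_apply, map_neg,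
    evalAt_linForm]
  rw [← lie_skew, map_neg, LinearMap.neg_apply]

theorem bracketMatrix_map_linearDerivation_map_evalAt (f : L →ₗ[ℂ] L) (x : L) :
    ((bracketMatrix b).map (linearDerivation (LinearMap.toMatrix b b f))).map (evalAt b x) =
      (bracketMatrix b).map (evalAt b (f x)) :=
  Matrix.ext fun k l => by
    simp only [bracketMatrix, Matrix.map_apply, Matrix.of_apply, linearDerivation_linForm,
      evalAt_linForm, LinearMap.comp_apply]

theorem bracketMatrix_map_adDerivation (z : L) :
    (bracketMatrix b).map (adDerivation b z) =
      (-(LinearMap.toMatrix b b (LieAlgebra.ad ℂ L z)).transpose).map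
          (algebraMap ℂ (MvPolynomial (Fin n) ℂ)) * bracketMatrix b +
        bracketMatrix b * (-LinearMap.toMatrix b b (LieAlgebra.ad ℂ L z)).map
          (algebraMap ℂ (MvPolynomial (Fin n) ℂ)) := by
  refine map_evalAt_ext (b := b) fun x => ?_
  rw [adDerivation, bracketMatrix_map_linearDerivation_map_evalAt, Matrix.map_add _ (map_add _),
    Matrix.map_mul, Matrix.map_mul, map_algebraMap_map_evalAt, map_algebraMap_map_evalAt,
    LieAlgebra.ad_apply, bracketMatrix_map_evalAt, bracketMatrix_map_evalAt, toMatrix_ad_lie,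
    Ring.lie_def, neg_mul_neg, neg_mul_neg, ← Matrix.mul_assoc,
    transpose_toMatrix_ad_mul_killingMatrix]
  noncomm_ring

theorem bracketMatrix_map_linearDerivation_one :
    (bracketMatrix b).map (linearDerivation (1 : Matrix (Fin n) (Fin n) ℂ)) = bracketMatrix b := by
  refine map_evalAt_ext (b := b) fun x => ?_
  rw [← LinearMap.toMatrix_id b, bracketMatrix_map_linearDerivation_map_evalAt, LinearMap.id_apply]

theorem finrank_ker_bracketMatrix_map_evalAt [LieAlgebra.IsKilling ℂ L] (x : L) :
    finrank ℂ (LinearMap.ker ((bracketMatrix b).map (evalAt b x)).mulVecLin) =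
      finrank ℂ (LinearMap.ker (LieAlgebra.ad ℂ L x)) := by
  have hker : LinearMap.ker (LieAlgebra.ad ℂ L x) =
      (LinearMap.ker ((bracketMatrix b).map (evalAt b x)).mulVecLin).comap
        (b.equivFun : L →ₗ[ℂ] Fin n → ℂ) := by
    ext u
    have hu : (LinearMap.toMatrix b b (LieAlgebra.ad ℂ L x)).mulVec (b.equivFun u) =
        b.equivFun ⁅x, u⁆ := LinearMap.toMatrix_mulVec_repr b b _ u
    rw [Submodule.mem_comap, LinearMap.mem_ker, LinearMap.mem_ker, Matrix.mulVecLin_apply,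
      bracketMatrix_map_evalAt, Matrix.neg_mulVec, neg_eq_zero, ← Matrix.mulVec_mulVec,
      LinearEquiv.coe_coe, hu,
      (Matrix.mulVec_injective_of_isUnit
        ((Matrix.isUnit_iff_isUnit_det _).mpr isUnit_det_killingMatrix)).eq_iff'
        (Matrix.mulVec_zero _), LinearEquiv.map_eq_zero_iff]
    rfl
  rw [hker]
  exact (LinearEquiv.finrank_eq (b.equivFun.ofSubmodule' _)).symm

end BracketMatrix

section JacobianAlongLinearDerivation

variable {k σ ι : Type*} [CommRing k] [Fintype σ]

theorem pderiv_linearDerivation (A : Matrix σ σ k) (P : MvPolynomial σ k) (s : σ) :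
    pderiv s (linearDerivation A P) =
      linearDerivation A (pderiv s P) + ∑ i, pderiv i P * C (A i s) := by
  classical
  have hcomm : ⁅pderiv (R := k) s, linearDerivation A⁆ =
      ∑ i, (C (A i s) : MvPolynomial σ k) • pderiv (R := k) i := by
    refine derivation_ext fun i => ?_
    rw [Derivation.commutator_apply, derivation_sum_apply, linearDerivation_X, pderiv_X]
    simp only [Derivation.smul_apply, pderiv_X, map_sum, Derivation.leibniz, smul_eq_mul, pderiv_C,
      mul_zero, add_zero, Pi.single_apply]
    rw [apply_ite (linearDerivation A), Derivation.map_one_eq_zero, map_zero]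
    simp
  have happly := DFunLike.congr_fun hcomm P
  simp only [Derivation.commutator_apply, derivation_sum_apply, Derivation.smul_apply,
    smul_eq_mul] at happly
  rw [sub_eq_iff_eq_add'.mp happly]
  simp only [mul_comm]

theorem jacobian_map_linearDerivation (p : ι → MvPolynomial σ k) (A : Matrix σ σ k) :
    (jacobian p).map (linearDerivation A) =
      jacobian (fun j => linearDerivation A (p j)) -
        jacobian p * A.map (algebraMap k (MvPolynomial σ k)) := by
  refine eq_sub_of_add_eq (Matrix.ext fun j s => ?_)
  rw [jacobian_apply, pderiv_linearDerivation, Matrix.add_apply, Matrix.mul_apply]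
  rfl

end JacobianAlongLinearDerivation

section GradMatrix

variable {L : Type*} [LieRing L] [LieAlgebra ℂ L] {n : ℕ} (b : Basis (Fin n) ℂ L) {ι : Type*}

/-- The coordinates of the gradients, with respect to the Killing form, of polynomials `p j`. -/
noncomputable def gradMatrix (p : ι → MvPolynomial (Fin n) ℂ) :
    Matrix ι (Fin n) (MvPolynomial (Fin n) ℂ) :=
  jacobian p * (killingMatrix b)⁻¹.map (algebraMap ℂ (MvPolynomial (Fin n) ℂ))

variable {b} {p : ι → MvPolynomial (Fin n) ℂ}

theorem jacobian_map_evalAt_mul_toMatrix_ad (hp : ∀ j, IsInvariantPoly b (p j)) (x : L) :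
    (jacobian p).map (evalAt b x) * LinearMap.toMatrix b b (LieAlgebra.ad ℂ L x) = 0 := by
  refine Matrix.ext fun j l => ?_
  have hinv := (hp j).evalAt_dirDeriv_lie x (-b l)
  rw [neg_lie, lie_skew, evalAt_dirDeriv] at hinv
  simp only [Matrix.mul_apply, Matrix.map_apply, jacobian_apply, LinearMap.toMatrix_apply,
    LieAlgebra.ad_apply, mul_comm (evalAt b x _), hinv, Matrix.zero_apply]

theorem gradMatrix_map_evalAt (x : L) :
    (gradMatrix b p).map (evalAt b x) = (jacobian p).map (evalAt b x) * (killingMatrix b)⁻¹ := by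
  rw [gradMatrix, Matrix.map_mul, map_algebraMap_map_evalAt]

theorem gradMatrix_map_evalAt_row [LieAlgebra.IsKilling ℂ L] {j : ι} {x g : L}
    (hg : ∀ y, killingForm ℂ L g y = evalAt b x (dirDeriv b y (p j))) :
    ((gradMatrix b p).map (evalAt b x)).row j = b.equivFun g := by
  have hrow : ((jacobian p).map (evalAt b x)).row j =
      Matrix.vecMul (b.repr g) (killingMatrix b) := _root_.funext fun l => by
    rw [vecMul_killingMatrix, hg, evalAt_dirDeriv_basis]
    rfl
  calc ((gradMatrix b p).map (evalAt b x)).row j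
      = Matrix.vecMul (((jacobian p).map (evalAt b x)).row j) (killingMatrix b)⁻¹ := by
        rw [gradMatrix_map_evalAt]
        rfl
    _ = b.repr g := by
        rw [hrow, Matrix.vecMul_vecMul, Matrix.mul_nonsing_inv _ isUnit_det_killingMatrix,
          Matrix.vecMul_one]

theorem gradMatrix_mul_bracketMatrix [LieAlgebra.IsKilling ℂ L]
    (hp : ∀ j, IsInvariantPoly b (p j)) : gradMatrix b p * bracketMatrix b = 0 := by
  refine map_evalAt_ext (b := b) fun x => ?_
  rw [Matrix.map_mul, gradMatrix_map_evalAt, bracketMatrix_map_evalAt, Matrix.mul_neg,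
    Matrix.mul_assoc, Matrix.nonsing_inv_mul_cancel_left _ _ isUnit_det_killingMatrix,
    jacobian_map_evalAt_mul_toMatrix_ad hp, neg_zero, Matrix.map_zero _ (map_zero _)]

theorem bracketMatrix_mul_transpose_gradMatrix [LieAlgebra.IsKilling ℂ L]
    (hp : ∀ j, IsInvariantPoly b (p j)) :
    bracketMatrix b * (gradMatrix b p).transpose = 0 := by
  rw [← Matrix.transpose_inj, Matrix.transpose_mul, Matrix.transpose_transpose,
    transpose_bracketMatrix, Matrix.mul_neg, gradMatrix_mul_bracketMatrix hp, neg_zero,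
    Matrix.transpose_zero]

theorem gradMatrix_mul_map_killingMatrix [LieAlgebra.IsKilling ℂ L] :
    gradMatrix b p * (killingMatrix b).map (algebraMap ℂ (MvPolynomial (Fin n) ℂ)) =
      jacobian p := by
  rw [gradMatrix, Matrix.mul_assoc, ← Matrix.map_mul,
    Matrix.nonsing_inv_mul _ isUnit_det_killingMatrix, Matrix.map_one _ (map_zero _) (map_one _),
    Matrix.mul_one]

theorem jacobian_map_adDerivation (hp : ∀ j, IsInvariantPoly b (p j)) (z : L) :
    (jacobian p).map (adDerivation b z) =
      jacobian p * (-LinearMap.toMatrix b b (LieAlgebra.ad ℂ L z)).map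
        (algebraMap ℂ (MvPolynomial (Fin n) ℂ)) := by
  have hzero (j : ι) : linearDerivation (LinearMap.toMatrix b b (LieAlgebra.ad ℂ L z)) (p j) = 0 :=
    isInvariantPoly_iff.mp (hp j) z
  rw [adDerivation, jacobian_map_linearDerivation, Matrix.map_neg _ (map_neg _), Matrix.mul_neg]
  simp only [hzero]
  refine sub_eq_neg_self.mpr (Matrix.ext fun j s => ?_)
  rw [jacobian_apply, map_zero, Matrix.zero_apply]

theorem gradMatrix_map_adDerivation [LieAlgebra.IsKilling ℂ L]
    (hp : ∀ j, IsInvariantPoly b (p j)) (z : L) :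
    (gradMatrix b p).map (adDerivation b z) =
      gradMatrix b p * (killingMatrix b * -LinearMap.toMatrix b b (LieAlgebra.ad ℂ L z) *
        (killingMatrix b)⁻¹).map (algebraMap ℂ (MvPolynomial (Fin n) ℂ)) := by
  have hmap : (gradMatrix b p).map (adDerivation b z) =
      (jacobian p).map (adDerivation b z) *
        (killingMatrix b)⁻¹.map (algebraMap ℂ (MvPolynomial (Fin n) ℂ)) :=
    Matrix.ext fun j s => by simp [gradMatrix, Matrix.mul_apply, mul_comm]
  rw [hmap, jacobian_map_adDerivation hp, Matrix.map_mul, Matrix.map_mul, ← Matrix.mul_assoc,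
    ← Matrix.mul_assoc, gradMatrix_mul_map_killingMatrix]

end GradMatrix

section Minors

variable {L : Type*} [LieRing L] [LieAlgebra ℂ L] {n : ℕ} (b : Basis (Fin n) ℂ L)
  {ι : Type*} [Fintype ι]

/-- The determinant of a perturbation of the bracket matrix by constants of rank at most
`card ι`; as `U` and `W` vary, these encode the minors of complementary size. -/
noncomputable def bracketMinor (U : Matrix (Fin n) ι ℂ) (W : Matrix ι (Fin n) ℂ) :
    MvPolynomial (Fin n) ℂ :=
  (bracketMatrix b + (U * W).map (algebraMap ℂ (MvPolynomial (Fin n) ℂ))).det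

/-- The linear combination, with coefficients the maximal minors of `U`, of the maximal minors of
the matrix of gradients. -/
noncomputable def gradMinor [DecidableEq ι] (p : ι → MvPolynomial (Fin n) ℂ)
    (U : Matrix (Fin n) ι ℂ) : MvPolynomial (Fin n) ℂ :=
  (gradMatrix b p * U.map (algebraMap ℂ (MvPolynomial (Fin n) ℂ))).det

variable {b} {p : ι → MvPolynomial (Fin n) ℂ}

theorem evalAt_bracketMinor (x : L) (U : Matrix (Fin n) ι ℂ) (W : Matrix ι (Fin n) ℂ) :
    evalAt b x (bracketMinor b U W) = ((bracketMatrix b).map (evalAt b x) + U * W).det := by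
  rw [bracketMinor, RingHom.map_det, RingHom.mapMatrix_apply, Matrix.map_add _ (map_add _),
    map_algebraMap_map_evalAt]

theorem dvd_derivation_of_forall_dvd_bracketMinor
    {δ : Derivation ℂ (MvPolynomial (Fin n) ℂ) (MvPolynomial (Fin n) ℂ)}
    {A B : Matrix (Fin n) (Fin n) ℂ}
    (hδ : (bracketMatrix b).map δ =
      B.map (algebraMap ℂ (MvPolynomial (Fin n) ℂ)) * bracketMatrix b +
        bracketMatrix b * A.map (algebraMap ℂ (MvPolynomial (Fin n) ℂ)))
    {q : MvPolynomial (Fin n) ℂ} (hq : Prime q) {U₀ : Matrix (Fin n) ι ℂ} {W₀ : Matrix ι (Fin n) ℂ}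
    (h₀ : bracketMinor b U₀ W₀ ≠ 0)
    (hdvd : ∀ (U : Matrix (Fin n) ι ℂ) W, q ∣ bracketMinor b U W) : q ∣ δ q :=
  prime_dvd_derivation_self_of_forall_dvd δ
    (F := fun T : Matrix (Fin n) ι ℂ × Matrix ι (Fin n) ℂ => bracketMinor b T.1 T.2)
    (fun T => derivation_det_add_mul_mem_span δ hδ T.1 T.2) hq (i₀ := (U₀, W₀)) h₀
    fun T => hdvd T.1 T.2

theorem isInvariantPoly_of_forall_dvd_bracketMinor [FiniteDimensional ℂ L]
    [LieAlgebra.IsKilling ℂ L] {q : MvPolynomial (Fin n) ℂ} (hq : Prime q)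
    {U₀ : Matrix (Fin n) ι ℂ} {W₀ : Matrix ι (Fin n) ℂ} (h₀ : bracketMinor b U₀ W₀ ≠ 0)
    (hdvd : ∀ (U : Matrix (Fin n) ι ℂ) W, q ∣ bracketMinor b U W) : IsInvariantPoly b q :=
  isInvariantPoly_of_dvd hq.ne_zero fun z =>
    dvd_derivation_of_forall_dvd_bracketMinor (bracketMatrix_map_adDerivation z) hq h₀ hdvd

-- By the Euler derivation `q` is homogeneous up to a constant factor, so a nonzero constant term
-- would make it a unit.
theorem constantCoeff_eq_zero_of_forall_dvd_bracketMinor {q : MvPolynomial (Fin n) ℂ} (hq : Prime q)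
    {U₀ : Matrix (Fin n) ι ℂ} {W₀ : Matrix ι (Fin n) ℂ} (h₀ : bracketMinor b U₀ W₀ ≠ 0)
    (hdvd : ∀ (U : Matrix (Fin n) ι ℂ) W, q ∣ bracketMinor b U W) : constantCoeff q = 0 := by
  by_contra hconst
  have heuler : q ∣ linearDerivation 1 q :=
    dvd_derivation_of_forall_dvd_bracketMinor (A := 0) (B := 1)
      (by rw [bracketMatrix_map_linearDerivation_one, Matrix.map_zero _ (map_zero _),
        Matrix.mul_zero, add_zero, Matrix.map_one _ (map_zero _) (map_one _), Matrix.one_mul])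
      hq h₀ hdvd
  obtain ⟨c, hc⟩ := exists_linearDerivation_eq_C_mul_of_dvd hq.ne_zero heuler
  exact ne_C_of_prime hq _ (eq_C_of_linearDerivation_one_eq_C_mul hc hconst)

variable [DecidableEq ι]

theorem evalAt_gradMinor (x : L) (U : Matrix (Fin n) ι ℂ) :
    evalAt b x (gradMinor b p U) = ((gradMatrix b p).map (evalAt b x) * U).det := by
  rw [gradMinor, RingHom.map_det, RingHom.mapMatrix_apply, Matrix.map_mul,
    map_algebraMap_map_evalAt]

theorem bracketMinor_mul_gradMinor_mul_gradMinor [LieAlgebra.IsKilling ℂ L]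
    (hp : ∀ j, IsInvariantPoly b (p j)) (U U' : Matrix (Fin n) ι ℂ) (W W' : Matrix ι (Fin n) ℂ) :
    bracketMinor b U' W' * (gradMinor b p U * gradMinor b p W.transpose) =
      bracketMinor b U W * (gradMinor b p U' * gradMinor b p W'.transpose) := by
  have htranspose (W : Matrix ι (Fin n) ℂ) : gradMinor b p W.transpose =
      (W.map (algebraMap ℂ (MvPolynomial (Fin n) ℂ)) * (gradMatrix b p).transpose).det := by
    rw [gradMinor, ← Matrix.det_transpose, Matrix.transpose_mul, Matrix.transpose_map,
      Matrix.transpose_transpose]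
  simp only [bracketMinor, htranspose, Matrix.map_mul]
  exact det_add_mul_mul_det_mul_mul_det_mul (gradMatrix_mul_bracketMatrix hp)
    (bracketMatrix_mul_transpose_gradMatrix hp) ..

theorem gradMinor_killingMatrix_mul [LieAlgebra.IsKilling ℂ L] (U : Matrix (Fin n) ι ℂ) :
    gradMinor b p (killingMatrix b * U) =
      (jacobian p * U.map (algebraMap ℂ (MvPolynomial (Fin n) ℂ))).det := by
  rw [gradMinor, Matrix.map_mul, ← Matrix.mul_assoc, gradMatrix_mul_map_killingMatrix]

theorem exists_gradMinor_ne_zero [LieAlgebra.IsKilling ℂ L] (hindep : AlgebraicIndependent ℂ p) :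
    ∃ U, gradMinor b p U ≠ 0 := by
  obtain ⟨U, hU⟩ := exists_det_jacobian_mul_ne_zero hindep
  exact ⟨_, by rwa [gradMinor_killingMatrix_mul]⟩

-- A common prime factor would be invariant, hence a polynomial in `p`, which the differentials
-- of algebraically independent generators rule out.
theorem exists_not_dvd_gradMinor [FiniteDimensional ℂ L] [LieAlgebra.IsKilling ℂ L]
    (hp : ∀ j, IsInvariantPoly b (p j)) (hindep : AlgebraicIndependent ℂ p)
    (hgen : ∀ P, IsInvariantPoly b P → P ∈ Algebra.adjoin ℂ (Set.range p))
    {q : MvPolynomial (Fin n) ℂ} (hq : Prime q) : ∃ U, ¬ q ∣ gradMinor b p U := by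
  by_contra! hdvd
  have hinv : IsInvariantPoly b q := isInvariantPoly_of_dvd hq.ne_zero fun z => by
    obtain ⟨U, hU⟩ := exists_gradMinor_ne_zero (b := b) hindep
    exact prime_dvd_derivation_self_of_forall_dvd _
      (derivation_det_mul_mem_span _ (gradMatrix_map_adDerivation hp z)) hq hU hdvd
  obtain ⟨U, hU⟩ := exists_not_dvd_det_jacobian_mul hindep hq (hgen q hinv) fun g hg =>
    hgen g (IsInvariantPoly.of_mul hinv hq.ne_zero
      (isInvariantPoly_of_mem_adjoin (Set.forall_mem_range.mpr hp) hg))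
  exact hU (by simpa only [gradMinor_killingMatrix_mul] using hdvd (killingMatrix b * U))

end Minors

section DiagonalEndomorphisms

variable {R M m : Type*} [CommRing R] [AddCommGroup M] [Module R M]
  {b : Basis m R M} {f : M →ₗ[R] M} {d : m → R}

theorem toMatrix_eq_diagonal [Fintype m] [DecidableEq m] (hf : ∀ i, f (b i) = d i • b i) :
    LinearMap.toMatrix b b f = Matrix.diagonal d := by
  ext i j
  rw [LinearMap.toMatrix_apply, hf, map_smul, Basis.repr_self, Finsupp.smul_single, smul_eq_mul,
    mul_one, Finsupp.single_apply, Matrix.diagonal_apply]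
  split_ifs with h₁ h₂ h₂
  · rw [h₁]
  · exact absurd h₁.symm h₂
  · exact absurd h₂.symm h₁
  · rfl

theorem repr_apply_eq_mul [Finite m] (hf : ∀ i, f (b i) = d i • b i) (x : M) (i : m) :
    b.repr (f x) i = d i * b.repr x i := by
  classical
  cases nonempty_fintype m
  rw [← LinearMap.toMatrix_mulVec_repr b b, toMatrix_eq_diagonal hf, Matrix.mulVec_diagonal]

end DiagonalEndomorphisms

section CartanSubalgebra

theorem coe_lie_coe_eq_zero {R L : Type*} [CommRing R] [LieRing L] [LieAlgebra R L]
    {H : LieSubalgebra R L} [IsLieAbelian H] (h h' : H) : ⁅(h : L), (h' : L)⁆ = 0 :=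
  congrArg Subtype.val (trivial_lie_zero H H h h')

variable {K L : Type*} [Field K] [LieRing L] [LieAlgebra K L]

theorem killingForm_eq_zero_of_lie_eq_smul {a : K} {h h' x : L} (ha : a ≠ 0)
    (hh : ⁅h', h⁆ = 0) (hx : ⁅h', x⁆ = a • x) : killingForm K L h x = 0 := by
  have hinv := LieModule.traceForm_apply_lie_apply' K L L h' h x
  rw [hh, hx, map_zero, LinearMap.zero_apply, map_smul, smul_eq_mul, eq_comm, neg_eq_zero] at hinv
  exact (mul_eq_zero.mp hinv).resolve_left ha

theorem genWeightSpace_ne_bot {H : LieSubalgebra K L} [LieRing.IsNilpotent H] {χ : H → K} {x : L}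
    (hx : x ≠ 0) (hχ : ∀ h : H, ⁅(h : L), x⁆ = χ h • x) : LieModule.genWeightSpace L χ ≠ ⊥ :=
  fun hbot => hx ((LieSubmodule.mem_bot x).mp (hbot ▸ LieModule.weightSpace_le_genWeightSpace L χ
    ((LieModule.mem_weightSpace χ x).mpr hχ)))

-- `y + x` is a Jordan decomposition, and the kernel of `ad (y + x)` lies in that of its semisimple
-- part.
theorem lie_eq_zero_of_lie_add_eq_zero [FiniteDimensional K L] [PerfectField K]
    [LieAlgebra.IsKilling K L] {H : LieSubalgebra K L} [H.IsCartanSubalgebra]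
    [LieModule.IsTriangularizable K H L] {y : H} {x u : L}
    (hx : IsNilpotent (LieAlgebra.ad K L x)) (hyx : ⁅(y : L), x⁆ = 0)
    (hu : ⁅(y : L) + x, u⁆ = 0) : ⁅(y : L), u⁆ = 0 := by
  have hcomm : Commute (LieAlgebra.ad K L ((y : L) + x)) (LieAlgebra.ad K L (y : L)) :=
    LinearMap.ext fun w => by
      simp only [Module.End.mul_apply, LieAlgebra.ad_apply]
      rw [leibniz_lie (y : L), lie_add, lie_self, hyx, add_zero, zero_lie, zero_add]
  have hss := LieAlgebra.IsKilling.isSemisimple_ad_of_mem_isCartanSubalgebra y.2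
  have hnil : IsNilpotent (LieAlgebra.ad K L ((y : L) + x) - LieAlgebra.ad K L (y : L)) := by
    rwa [map_add, add_sub_cancel_left]
  have hmem : u ∈ (LieAlgebra.ad K L ((y : L) + x)).genEigenspace 0 1 :=
    Module.End.mem_eigenspace_iff.mpr (hu.trans (zero_smul K u).symm)
  exact (Module.End.apply_eq_of_mem_of_comm_of_isFinitelySemisimple_of_isNil hmem hcomm
    hss.isFinitelySemisimple hnil).trans (zero_smul K u)

end CartanSubalgebra

section KillingProjection

variable {K L m ι : Type*} [Field K] [LieRing L] [LieAlgebra K L] [Fintype ι]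

/-- The matrix of coordinates of the linear forms `κ(·, v j)`. -/
noncomputable def formMatrix (b : Basis m K L) (v : ι → L) : Matrix m ι K :=
  Matrix.of fun k j => killingForm K L (b k) (v j)

variable (K) in
/-- The endomorphism `x ↦ ∑ j, κ(x, v j) v j`, which for a `κ`-orthonormal family `v` is the
orthogonal projection onto its span. -/
noncomputable def killingProjection (v : ι → L) : L →ₗ[K] L :=
  ∑ j, ((killingForm K L).flip (v j)).smulRight (v j)

theorem killingProjection_apply (v : ι → L) (x : L) :
    killingProjection K v x = ∑ j, killingForm K L x (v j) • v j := by
  simp [killingProjection, LinearMap.sum_apply]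

theorem formMatrix_mul_transpose [Fintype m] [DecidableEq m] (b : Basis m K L) (v : ι → L) :
    formMatrix b v * (formMatrix b v).transpose =
      killingMatrix b * LinearMap.toMatrix b b (killingProjection K v) :=
  Matrix.ext fun k l => by
    rw [killingMatrix_mul_apply, killingProjection_apply, map_sum, Matrix.mul_apply]
    refine Finset.sum_congr rfl fun j _ => ?_
    rw [map_smul, smul_eq_mul, mul_comm]
    rfl

end KillingProjection

/-- Positive roots `φ`, root vectors `e`, `f` for `±φ` normalised by `κ(e i, f i) = 1`, and a
`κ`-orthonormal family `v` in a Cartan subalgebra `H`, such that `H`, `e` and `f` span the Lie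
algebra. Positivity is encoded as `φ` being injective and avoiding `0` and its own negatives. -/
structure IsRootBasis {L : Type*} [LieRing L] [LieAlgebra ℂ L] (H : LieSubalgebra ℂ L) {r : ℕ}
    (v : Fin (finrank ℂ H) → H) (φ : Fin r → Module.Dual ℂ H) (e f : Fin r → L) : Prop where
  orthonormal : ∀ i j, killingForm ℂ L (v i : L) (v j : L) = if i = j then 1 else 0
  lie_e : ∀ (i) (h : H), ⁅(h : L), e i⁆ = φ i h • e i
  lie_f : ∀ (i) (h : H), ⁅(h : L), f i⁆ = -(φ i h) • f i
  killingForm_e_f : ∀ i, killingForm ℂ L (e i) (f i) = 1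
  ne_zero : ∀ i, φ i ≠ 0
  injective : ∀ i j, i ≠ j → φ i ≠ φ j
  add_ne_zero : ∀ i j, φ i + φ j ≠ 0
  span_eq_top : H.toSubmodule ⊔ Submodule.span ℂ (Set.range e ∪ Set.range f) = ⊤
  finrank_eq : finrank ℂ L = finrank ℂ H + 2 * r

namespace IsRootBasis

variable {L : Type*} [LieRing L] [LieAlgebra ℂ L] {H : LieSubalgebra ℂ L} {r : ℕ}
  {v : Fin (finrank ℂ H) → H} {φ : Fin r → Module.Dual ℂ H} {e f : Fin r → L}

section Roots

variable (hR : IsRootBasis H v φ e f)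

include hR

theorem exists_ne_zero (i : Fin r) : ∃ h, φ i h ≠ 0 := by
  by_contra! h
  exact hR.ne_zero i (LinearMap.ext h)

theorem e_ne_zero (i : Fin r) : e i ≠ 0 := fun h => by
  have := hR.killingForm_e_f i
  rw [h, map_zero, LinearMap.zero_apply] at this
  exact zero_ne_one this

theorem killingForm_lie_e_f (i : Fin r) (h : H) : killingForm ℂ L ⁅e i, f i⁆ (h : L) = φ i h := by
  rw [LieModule.traceForm_apply_lie_apply, ← lie_skew, hR.lie_f, neg_smul, neg_neg, map_smul,
    smul_eq_mul]
  exact (congrArg _ (hR.killingForm_e_f i)).trans (mul_one _)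

variable [FiniteDimensional ℂ L] [H.IsCartanSubalgebra]

theorem isNilpotent_ad_e (i : Fin r) : IsNilpotent (LieAlgebra.ad ℂ L (e i)) := by
  refine LieAlgebra.isNilpotent_ad_of_mem_rootSpace (H := H) (χ := φ i) ?_ ?_
  · exact fun h => hR.ne_zero i (LinearMap.ext fun y => congrFun h y)
  · exact LieModule.weightSpace_le_genWeightSpace L _
      ((LieModule.mem_weightSpace _ _).mpr (hR.lie_e i))

variable [LieAlgebra.IsKilling ℂ L]

theorem exists_apply_eq_zero_and_ne_zero {i j : Fin r} (hij : j ≠ i) :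
    ∃ h, φ i h = 0 ∧ φ j h ≠ 0 := by
  by_contra! hker
  obtain ⟨h₀, hh₀⟩ := hR.exists_ne_zero i
  let root (i : Fin r) : LieModule.Weight ℂ H L :=
    ⟨φ i, genWeightSpace_ne_bot (hR.e_ne_zero i) (hR.lie_e i)⟩
  have hproportional : (root j : H → ℂ) = (φ j h₀ / φ i h₀) • (root i : H → ℂ) :=
    _root_.funext fun h => by
      have := hker (h - (φ i h / φ i h₀) • h₀) (by simp [hh₀])
      rw [map_sub, map_smul, sub_eq_zero] at this
      change φ j h = φ j h₀ / φ i h₀ * φ i h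
      rw [this, smul_eq_mul]
      ring
  have hnonzero : (root j).IsNonZero := fun h => hR.ne_zero j (DFunLike.coe_injective h)
  rcases LieAlgebra.IsKilling.eq_neg_or_eq_of_eq_smul _ _ hnonzero _ hproportional with hneg | heq
  · refine hR.add_ne_zero i j (LinearMap.ext fun y => ?_)
    have : φ j y = -φ i y := congrArg (fun w : LieModule.Weight ℂ H L => w y) hneg
    rw [LinearMap.add_apply, this, add_neg_cancel, LinearMap.zero_apply]
  · exact hR.injective j i hij (LinearMap.ext fun y =>
      congrArg (fun w : LieModule.Weight ℂ H L => w y) heq)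

theorem exists_subregular (i : Fin r) : ∃ h, φ i h = 0 ∧ ∀ j, j ≠ i → φ j h ≠ 0 := by
  obtain ⟨h, hh, hne⟩ := Module.Dual.exists_forall_mem_ne_zero_of_forall_exists
    (LinearMap.ker (φ i)) (fun j : {j // j ≠ i} => φ j) fun j =>
      hR.exists_apply_eq_zero_and_ne_zero j.2
  exact ⟨h, hh, fun j hj => hne ⟨j, hj⟩⟩

theorem killingForm_coe_e (h : H) (i : Fin r) : killingForm ℂ L (h : L) (e i) = 0 := by
  obtain ⟨h₀, hh₀⟩ := hR.exists_ne_zero i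
  exact killingForm_eq_zero_of_lie_eq_smul hh₀ (coe_lie_coe_eq_zero h₀ h) (hR.lie_e i h₀)

theorem killingForm_coe_f (h : H) (i : Fin r) : killingForm ℂ L (h : L) (f i) = 0 := by
  obtain ⟨h₀, hh₀⟩ := hR.exists_ne_zero i
  exact killingForm_eq_zero_of_lie_eq_smul (neg_ne_zero.mpr hh₀) (coe_lie_coe_eq_zero h₀ h)
    (hR.lie_f i h₀)

end Roots

section Orthonormal

variable (hR : IsRootBasis H v φ e f)

include hR

theorem killingForm_sum_smul_v (g : Fin (finrank ℂ H) → ℂ) (j : Fin (finrank ℂ H)) :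
    killingForm ℂ L ((∑ i, g i • v i : H) : L) (v j : L) = g j := by
  simp [hR.orthonormal, LinearMap.sum_apply]

theorem linearIndependent_v : LinearIndependent ℂ v :=
  Fintype.linearIndependent_iff.mpr fun g hg i => by
    rw [← hR.killingForm_sum_smul_v g i, hg, ZeroMemClass.coe_zero, map_zero,
      LinearMap.zero_apply]

variable [FiniteDimensional ℂ L]

theorem le_span_v : H.toSubmodule ≤ Submodule.span ℂ (Set.range fun i => (v i : L)) := by
  have htop : Submodule.span ℂ (Set.range v) = ⊤ :=
    hR.linearIndependent_v.span_eq_top_of_card_eq_finrank' (Fintype.card_fin _)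
  intro h hh
  have := Submodule.mem_map_of_mem (f := H.toSubmodule.subtype)
    (htop.ge (Submodule.mem_top (x := (⟨h, hh⟩ : H))))
  rwa [Submodule.map_span, ← Set.range_comp] at this

end Orthonormal

section Basis

variable [FiniteDimensional ℂ L] (hR : IsRootBasis H v φ e f)

include hR

theorem top_le_span :
    ⊤ ≤ Submodule.span ℂ (Set.range (Sum.elim (fun i => (v i : L)) (Sum.elim e f))) := by
  rw [← hR.span_eq_top, Set.Sum.elim_range, Set.Sum.elim_range, Submodule.span_union _ (_ ∪ _)]
  exact sup_le_sup_right hR.le_span_v _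

/-- The basis of the Lie algebra consisting of `v`, `e` and `f`. -/
noncomputable def basis : Basis (Fin (finrank ℂ H) ⊕ Fin r ⊕ Fin r) ℂ L :=
  basisOfTopLeSpanOfCardEqFinrank _ hR.top_le_span (by simp [hR.finrank_eq, two_mul])

@[simp]
theorem basis_v (i : Fin (finrank ℂ H)) : hR.basis (Sum.inl i) = v i := by simp [basis]

@[simp]
theorem basis_e (i : Fin r) : hR.basis (Sum.inr (Sum.inl i)) = e i := by simp [basis]

@[simp]
theorem basis_f (i : Fin r) : hR.basis (Sum.inr (Sum.inr i)) = f i := by simp [basis]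

variable [LieAlgebra.IsKilling ℂ L] [H.IsCartanSubalgebra]

theorem killingProjection_eq_self {x : L} (he : ∀ i, killingForm ℂ L x (e i) = 0)
    (hf : ∀ i, killingForm ℂ L x (f i) = 0) :
    killingProjection ℂ (fun j => (v j : L)) x = x := by
  have hsub : killingForm ℂ L (killingProjection ℂ (fun j => (v j : L)) x - x) = 0 := by
    rw [killingProjection_apply]
    refine hR.basis.ext fun k => ?_
    rcases k with k | k | k
    · simp [hR.orthonormal, LinearMap.sum_apply]
    · simp [hR.killingForm_coe_e, LinearMap.sum_apply, he]
    · simp [hR.killingForm_coe_f, LinearMap.sum_apply, hf]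
  refine sub_eq_zero.mp (eq_zero_of_killingForm_eq_zero (K := ℂ) fun y => ?_)
  rw [hsub, LinearMap.zero_apply]

/-- The eigenvalue of `ad y` on each vector of `IsRootBasis.basis`. -/
def weight (φ : Fin r → Module.Dual ℂ H) (y : H) : Fin (finrank ℂ H) ⊕ Fin r ⊕ Fin r → ℂ :=
  Sum.elim 0 (Sum.elim (fun i => φ i y) fun i => -φ i y)

theorem ad_basis (y : H) (k : Fin (finrank ℂ H) ⊕ Fin r ⊕ Fin r) :
    LieAlgebra.ad ℂ L (y : L) (hR.basis k) = weight φ y k • hR.basis k := by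
  rcases k with k | k | k
  · simp [weight, coe_lie_coe_eq_zero]
  · simp [weight, hR.lie_e]
  · simp [weight, hR.lie_f]

theorem killingProjection_sub_ad_basis (y : H) (k : Fin (finrank ℂ H) ⊕ Fin r ⊕ Fin r) :
    (killingProjection ℂ (fun j => (v j : L)) - LieAlgebra.ad ℂ L (y : L)) (hR.basis k) =
      Sum.elim (1 : Fin (finrank ℂ H) → ℂ) (Sum.elim (fun i => -φ i y) fun i => φ i y) k •
        hR.basis k := by
  rw [LinearMap.sub_apply, hR.ad_basis, killingProjection_apply]
  rcases k with k | k | k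
  · simp [weight, hR.orthonormal]
  · simp [weight, LieModule.traceForm_comm ℂ L L (e k), hR.killingForm_coe_e]
  · simp [weight, LieModule.traceForm_comm ℂ L L (f k), hR.killingForm_coe_f]

theorem det_killingProjection_sub_ad (y : H) :
    LinearMap.det (killingProjection ℂ (fun j => (v j : L)) - LieAlgebra.ad ℂ L (y : L)) =
      (-1) ^ r * (∏ i, φ i y) ^ 2 := by
  rw [← LinearMap.det_toMatrix hR.basis,
    toMatrix_eq_diagonal (hR.killingProjection_sub_ad_basis y), Matrix.det_diagonal,
    Fintype.prod_sum_type, Fintype.prod_sum_type]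
  simp only [Sum.elim_inl, Sum.elim_inr, Pi.one_apply, Finset.prod_const_one, one_mul,
    Finset.prod_neg, Finset.card_univ, Fintype.card_fin]
  ring

end Basis

section Subregular

variable [FiniteDimensional ℂ L] [LieAlgebra.IsKilling ℂ L] [H.IsCartanSubalgebra]
  (hR : IsRootBasis H v φ e f)

include hR

theorem exists_eq_add_of_lie_eq_zero {i : Fin r} {y : H} (hy : ∀ j, j ≠ i → φ j y ≠ 0) {u : L}
    (hu : ⁅(y : L), u⁆ = 0) : ∃ (h : H) (a c : ℂ), u = h + (a • e i + c • f i) := by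
  have hrepr (k) (hk : weight φ y k ≠ 0) : hR.basis.repr u k = 0 := by
    have := repr_apply_eq_mul (hR.ad_basis y) u k
    rw [LieAlgebra.ad_apply, hu, map_zero, Finsupp.zero_apply] at this
    exact (mul_eq_zero.mp this.symm).resolve_left hk
  have hv : ∑ j, hR.basis.repr u (Sum.inl j) • hR.basis (Sum.inl j) =
      ((∑ j, hR.basis.repr u (Sum.inl j) • v j : H) : L) := by
    simp [AddSubmonoidClass.coe_finsetSum]
  have he : ∀ j ≠ i,
      hR.basis.repr u (Sum.inr (Sum.inl j)) • hR.basis (Sum.inr (Sum.inl j)) = 0 :=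
    fun j hj => by rw [hrepr (Sum.inr (Sum.inl j)) (hy j hj), zero_smul]
  have hf : ∀ j ≠ i,
      hR.basis.repr u (Sum.inr (Sum.inr j)) • hR.basis (Sum.inr (Sum.inr j)) = 0 :=
    fun j hj => by rw [hrepr (Sum.inr (Sum.inr j)) (neg_ne_zero.mpr (hy j hj)), zero_smul]
  refine ⟨∑ j, hR.basis.repr u (Sum.inl j) • v j, hR.basis.repr u (Sum.inr (Sum.inl i)),
    hR.basis.repr u (Sum.inr (Sum.inr i)), (hR.basis.sum_repr u).symm.trans ?_⟩
  rw [Fintype.sum_sum_type, Fintype.sum_sum_type, Fintype.sum_eq_single i he,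
    Fintype.sum_eq_single i hf, hv, hR.basis_e, hR.basis_f]

theorem eq_zero_of_lie_e_eq_zero {i : Fin r} {h : H} {a c : ℂ}
    (hu : ⁅e i, (h : L) + (a • e i + c • f i)⁆ = 0) : c = 0 ∧ φ i h = 0 := by
  have hsum : -(φ i h) • e i + c • ⁅e i, f i⁆ = 0 := by
    rwa [lie_add, lie_add, lie_smul, lie_smul, lie_self, smul_zero, zero_add, ← lie_skew,
      hR.lie_e, ← neg_smul] at hu
  obtain ⟨h₀, hh₀⟩ := hR.exists_ne_zero i
  have hc : c = 0 := by
    have := congrArg (killingForm ℂ L (h₀ : L)) hsum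
    rw [map_add, map_smul, map_smul, hR.killingForm_coe_e, smul_zero, zero_add, map_zero,
      LieModule.traceForm_comm, hR.killingForm_lie_e_f] at this
    exact (mul_eq_zero.mp this).resolve_right hh₀
  refine ⟨hc, neg_eq_zero.mp ?_⟩
  rw [hc, zero_smul, add_zero] at hsum
  exact (smul_eq_zero.mp hsum).resolve_right (hR.e_ne_zero i)

theorem ker_ad_add_e_le {i : Fin r} {y : H} (hy : φ i y = 0) (hne : ∀ j, j ≠ i → φ j y ≠ 0) :
    LinearMap.ker (LieAlgebra.ad ℂ L ((y : L) + e i)) ≤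
      (LinearMap.ker (φ i)).map H.toSubmodule.subtype ⊔ Submodule.span ℂ {e i} := by
  intro u hu
  have hu : ⁅(y : L) + e i, u⁆ = 0 := hu
  have hyu : ⁅(y : L), u⁆ = 0 :=
    lie_eq_zero_of_lie_add_eq_zero (hR.isNilpotent_ad_e i) (by rw [hR.lie_e, hy, zero_smul]) hu
  rw [add_lie, hyu, zero_add] at hu
  obtain ⟨h, a, c, rfl⟩ := hR.exists_eq_add_of_lie_eq_zero hne hyu
  obtain ⟨rfl, hh⟩ := hR.eq_zero_of_lie_e_eq_zero hu
  rw [zero_smul, add_zero]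
  exact Submodule.add_mem_sup ⟨h, hh, rfl⟩
    (Submodule.smul_mem _ _ (Submodule.mem_span_singleton_self _))

theorem finrank_ker_ad_add_e_le {i : Fin r} {y : H} (hy : φ i y = 0)
    (hne : ∀ j, j ≠ i → φ j y ≠ 0) :
    finrank ℂ (LinearMap.ker (LieAlgebra.ad ℂ L ((y : L) + e i))) ≤ finrank ℂ H :=
  calc _ ≤ _ := Submodule.finrank_mono (hR.ker_ad_add_e_le hy hne)
    _ ≤ _ := Submodule.finrank_add_le_finrank_add_finrank _ _
    _ ≤ finrank ℂ (LinearMap.ker (φ i)) + 1 :=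
      add_le_add (Submodule.finrank_map_le _ _) (finrank_span_singleton (hR.e_ne_zero i)).le
    _ = finrank ℂ H := Module.Dual.finrank_ker_add_one_of_ne_zero (hR.ne_zero i)

end Subregular

end IsRootBasis

theorem map_sum_smul_eq_det_smul {R M N ι : Type*} [CommRing R] [AddCommGroup M] [Module R M]
    [AddCommGroup N] [Module R N] [Fintype ι] [DecidableEq ι] (f : M [⋀^ι]→ₗ[R] N)
    (A : Matrix ι ι R) (v : ι → M) : f (fun j => ∑ k, A j k • v k) = A.det • f v := by
  have hv (k : ι) : Fintype.linearCombination R v (Pi.basisFun R ι k) = v k := by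
    simp [Fintype.linearCombination_apply, Pi.single_apply]
  have hbasis : Matrix.detRowAlternating (Pi.basisFun R ι) = (1 : R) := by
    rw [← Matrix.det_one (n := ι)]
    exact congrArg Matrix.det (Matrix.ext fun i j => by
      simp [Pi.single_apply, Matrix.one_apply, eq_comm])
  have h : f.compLinearMap (Fintype.linearCombination R v) =
      Matrix.detRowAlternating.smulRight (f v) := by
    refine (Pi.basisFun R ι).ext_alternating fun s hs => ?_
    let σ := Equiv.ofBijective s (Finite.injective_iff_bijective.mp hs)
    change (f.compLinearMap _) (Pi.basisFun R ι ∘ σ) =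
      (Matrix.detRowAlternating.smulRight (f v)) (Pi.basisFun R ι ∘ σ)
    simp only [AlternatingMap.map_perm, AlternatingMap.compLinearMap_apply,
      AlternatingMap.smulRight_apply, hv, hbasis, one_smul]
  exact AlternatingMap.congr_fun h A

section Factorization

theorem exists_dvd_of_dvd_prod_pow {M ι : Type*} [CommMonoidWithZero M]
    [UniqueFactorizationMonoid M] [Fintype ι] {π : ι → M} (hπ : ∀ i, Irreducible (π i)) {q : M}
    (hq : ¬ IsUnit q) {k : ℕ} (hdvd : q ∣ (∏ i, π i) ^ k) : ∃ i, π i ∣ q := by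
  by_contra! h
  have hrel : IsRelPrime q (∏ i, π i) :=
    IsRelPrime.prod_right fun i _ => ((hπ i).isRelPrime_iff_not_dvd.mpr (h i)).symm
  exact hq (hrel.pow_right.isUnit_of_dvd hdvd)

theorem exists_eq_C_mul_of_C_mul_sq_eq {σ k : Type*} [Field k] [IsAlgClosed k] {c d : k}
    (hc : c ≠ 0) (hd : d ≠ 0) {P Q : MvPolynomial σ k} (h : C c * P ^ 2 = C d * Q ^ 2) :
    ∃ s, s ≠ 0 ∧ P = C s * Q := by
  obtain ⟨s, hs⟩ := IsAlgClosed.exists_pow_nat_eq (d / c) two_pos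
  have hs₀ : s ≠ 0 := by
    rintro rfl
    rw [zero_pow two_ne_zero] at hs
    exact div_ne_zero hd hc hs.symm
  have hsq : P ^ 2 = (C s * Q) ^ 2 := by
    refine mul_left_cancel₀ (C_ne_zero.mpr hc) ?_
    rw [h, mul_pow, ← mul_assoc, ← map_pow, ← map_mul, hs, mul_div_cancel₀ d hc]
  rcases sq_eq_sq_iff_eq_or_eq_neg.mp hsq with h | h
  · exact ⟨s, hs₀, h⟩
  · exact ⟨-s, neg_ne_zero.mpr hs₀, by rw [h, map_neg, neg_mul]⟩

end Factorization

section Restriction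

variable {L : Type*} [LieRing L] [LieAlgebra ℂ L] {n m : ℕ} {H : LieSubalgebra ℂ L}

/-- The restriction of polynomial functions to a subalgebra with basis `bH`. -/
noncomputable def restrictPoly (b : Basis (Fin n) ℂ L) (bH : Basis (Fin m) ℂ H) :
    MvPolynomial (Fin n) ℂ →ₐ[ℂ] MvPolynomial (Fin m) ℂ :=
  aeval fun i => linForm bH (b.coord i ∘ₗ H.toSubmodule.subtype)

@[simp]
theorem evalAt_restrictPoly {b : Basis (Fin n) ℂ L} {bH : Basis (Fin m) ℂ H} (y : H)
    (P : MvPolynomial (Fin n) ℂ) : evalAt bH y (restrictPoly b bH P) = evalAt b (y : L) P := by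
  have : (evalAt bH y).comp (restrictPoly b bH : MvPolynomial (Fin n) ℂ →+* _) =
      evalAt b (y : L) := by
    refine MvPolynomial.ringHom_ext (fun c => ?_) fun i => ?_
    · simp [restrictPoly]
    · rw [RingHom.comp_apply, RingHom.coe_coe, restrictPoly, aeval_X, evalAt_linForm, evalAt_X]
      rfl
  exact RingHom.congr_fun this P

end Restriction

section MinorsAtFormMatrix

variable {L ι : Type*} [LieRing L] [LieAlgebra ℂ L] {n : ℕ} {b : Basis (Fin n) ℂ L}
  [Fintype ι]

theorem evalAt_bracketMinor_formMatrix (v : ι → L) (x : L) :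
    evalAt b x (bracketMinor b (formMatrix b v) (formMatrix b v).transpose) =
      (killingMatrix b).det * LinearMap.det (killingProjection ℂ v - LieAlgebra.ad ℂ L x) := by
  rw [evalAt_bracketMinor, bracketMatrix_map_evalAt, formMatrix_mul_transpose, neg_add_eq_sub,
    ← Matrix.mul_sub, ← map_sub, Matrix.det_mul, LinearMap.det_toMatrix]

end MinorsAtFormMatrix

section KillingGradients

variable {L : Type*} [LieRing L] [LieAlgebra ℂ L] {n : ℕ} {b : Basis (Fin n) ℂ L}

/-- The vector field `g` is the gradient of the polynomial function `P` with respect to the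
Killing form. -/
def IsKillingGradient (b : Basis (Fin n) ℂ L) (P : MvPolynomial (Fin n) ℂ) (g : L → L) : Prop :=
  ∀ x y, killingForm ℂ L (g x) y = evalAt b x (dirDeriv b y P)

theorem IsKillingGradient.lie_eq_zero [LieAlgebra.IsKilling ℂ L] {P : MvPolynomial (Fin n) ℂ}
    {g : L → L} (hg : IsKillingGradient b P g) (hP : IsInvariantPoly b P) (x : L) :
    ⁅x, g x⁆ = 0 :=
  eq_zero_of_killingForm_eq_zero (K := ℂ) fun y => by
    rw [LieModule.traceForm_apply_lie_apply', ← lie_skew, map_neg, neg_neg]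
    exact (hg x ⁅y, x⁆).trans (hP x y)

variable {ι : Type*} {p : ι → MvPolynomial (Fin n) ℂ} {grad : ι → L → L}

theorem gradMatrix_map_evalAt_mul_formMatrix [LieAlgebra.IsKilling ℂ L]
    (hgrad : ∀ j, IsKillingGradient b (p j) (grad j)) (v : ι → L) (x : L) :
    (gradMatrix b p).map (evalAt b x) * formMatrix b v =
      Matrix.of fun j k => killingForm ℂ L (grad j x) (v k) :=
  Matrix.ext fun j k => by
    have hrow (i : Fin n) : (gradMatrix b p).map (evalAt b x) j i = b.repr (grad j x) i :=
      congrFun (gradMatrix_map_evalAt_row (hgrad j x)) i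
    rw [Matrix.of_apply]
    conv_rhs => rw [← b.sum_repr (grad j x)]
    simp only [Matrix.mul_apply, hrow, formMatrix, Matrix.of_apply, map_sum, map_smul,
      LinearMap.sum_apply, LinearMap.smul_apply, smul_eq_mul]

variable [Fintype ι] [DecidableEq ι] [LieAlgebra.IsKilling ℂ L]

theorem linearIndependent_grad_iff_exists_gradMinor
    (hgrad : ∀ j, IsKillingGradient b (p j) (grad j)) (x : L) :
    LinearIndependent ℂ (fun j => grad j x) ↔ ∃ U, evalAt b x (gradMinor b p U) ≠ 0 := by
  have hrow : ((gradMatrix b p).map (evalAt b x)).row = b.equivFun ∘ fun j => grad j x :=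
    _root_.funext fun j => gradMatrix_map_evalAt_row (hgrad j x)
  simp only [evalAt_gradMinor]
  rw [← linearIndependent_row_iff_exists_det_mul_ne_zero, hrow]
  exact (LinearMap.linearIndependent_iff (b.equivFun : L →ₗ[ℂ] Fin n → ℂ) b.equivFun.ker).symm

theorem evalAt_gradMinor_formMatrix (hgrad : ∀ j, IsKillingGradient b (p j) (grad j))
    (v : ι → L) (x : L) : evalAt b x (gradMinor b p (formMatrix b v)) =
      (Matrix.of fun j k => killingForm ℂ L (grad j x) (v k)).det := by
  rw [evalAt_gradMinor, gradMatrix_map_evalAt_mul_formMatrix hgrad]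

end KillingGradients

theorem finrank_ker_ad_le_iff_exists_bracketMinor {L ι : Type*} [LieRing L] [LieAlgebra ℂ L]
    [LieAlgebra.IsKilling ℂ L] {n : ℕ} {b : Basis (Fin n) ℂ L} [Fintype ι] (x : L) :
    finrank ℂ (LinearMap.ker (LieAlgebra.ad ℂ L x)) ≤ Fintype.card ι ↔
      ∃ (U : Matrix (Fin n) ι ℂ) (W : Matrix ι (Fin n) ℂ),
        evalAt b x (bracketMinor b U W) ≠ 0 := by
  simp only [evalAt_bracketMinor]
  rw [← finrank_ker_bracketMatrix_map_evalAt (b := b)]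
  exact ⟨exists_det_add_mul_ne_zero, fun ⟨_, _, h⟩ => finrank_ker_le_of_det_add_mul_ne_zero h⟩

namespace IsRootBasis

variable {L : Type*} [LieRing L] [LieAlgebra ℂ L] [FiniteDimensional ℂ L]
  [LieAlgebra.IsKilling ℂ L] {n : ℕ} {b : Basis (Fin n) ℂ L} {H : LieSubalgebra ℂ L}
  [H.IsCartanSubalgebra] {r : ℕ} {v : Fin (finrank ℂ H) → H} {φ : Fin r → Module.Dual ℂ H}
  {e f : Fin r → L} (hR : IsRootBasis H v φ e f)

include hR

theorem restrictPoly_bracketMinor {m : ℕ} (bH : Basis (Fin m) ℂ H) :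
    restrictPoly b bH (bracketMinor b (formMatrix b fun j => (v j : L))
        (formMatrix b fun j => (v j : L)).transpose) =
      C ((killingMatrix b).det * (-1) ^ r) * (∏ i, linForm bH (φ i)) ^ 2 :=
  evalAt_ext (b := bH) fun y => by
    rw [evalAt_restrictPoly, evalAt_bracketMinor_formMatrix, hR.det_killingProjection_sub_ad]
    simp only [map_mul, map_pow, map_prod, evalAt_C, evalAt_linForm, mul_assoc]

theorem bracketMinor_ne_zero : bracketMinor b (formMatrix b fun j => (v j : L))
    (formMatrix b fun j => (v j : L)).transpose ≠ 0 := fun h => by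
  have hdet : (killingMatrix b).det * (-1) ^ r ≠ 0 :=
    mul_ne_zero isUnit_det_killingMatrix.ne_zero (pow_ne_zero r (neg_ne_zero.mpr one_ne_zero))
  have := hR.restrictPoly_bracketMinor (b := b) (finBasis ℂ H)
  rw [h, map_zero] at this
  exact mul_ne_zero (C_ne_zero.mpr hdet) (pow_ne_zero 2 (Finset.prod_ne_zero_iff.mpr fun i _ =>
    (irreducible_linForm (hR.ne_zero i)).ne_zero)) this.symm

theorem exists_forall_evalAt_eq_zero_of_dvd_bracketMinor {q : MvPolynomial (Fin n) ℂ}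
    (h₀ : constantCoeff q = 0)
    (hq : q ∣ bracketMinor b (formMatrix b fun j => (v j : L))
      (formMatrix b fun j => (v j : L)).transpose) :
    ∃ i, ∀ y, φ i y = 0 → evalAt b (y : L) q = 0 := by
  let bH := finBasis ℂ H
  have hnonunit : ¬ IsUnit (restrictPoly b bH q) := fun hu => by
    refine (hu.map (evalAt bH 0)).ne_zero ?_
    rw [evalAt_restrictPoly, ZeroMemClass.coe_zero, evalAt_zero, h₀]
  have hunit : IsUnit ((killingMatrix b).det * (-1) ^ r) :=
    isUnit_det_killingMatrix.mul (isUnit_one.neg.pow r)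
  have hdvd := map_dvd (restrictPoly b bH) hq
  rw [hR.restrictPoly_bracketMinor, (hunit.map C).dvd_mul_left] at hdvd
  obtain ⟨i, g, hg⟩ :=
    exists_dvd_of_dvd_prod_pow (fun i => irreducible_linForm (hR.ne_zero i)) hnonunit hdvd
  refine ⟨i, fun y hy => ?_⟩
  rw [← evalAt_restrictPoly (bH := bH), hg, map_mul, evalAt_linForm, hy, zero_mul]

-- A common prime factor would vanish on a root hyperplane, hence at `y + e i` for some subregular
-- `y` in it; but `y + e i` is regular.
theorem exists_not_dvd_bracketMinor {q : MvPolynomial (Fin n) ℂ} (hq : Prime q) :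
    ∃ (U : Matrix (Fin n) (Fin (finrank ℂ H)) ℂ) (W : Matrix (Fin (finrank ℂ H)) (Fin n) ℂ),
      ¬ q ∣ bracketMinor b U W := by
  by_contra! hdvd
  have hinv : IsInvariantPoly b q :=
    isInvariantPoly_of_forall_dvd_bracketMinor hq hR.bracketMinor_ne_zero hdvd
  have hconst : constantCoeff q = 0 :=
    constantCoeff_eq_zero_of_forall_dvd_bracketMinor hq hR.bracketMinor_ne_zero hdvd
  obtain ⟨i, hi⟩ := hR.exists_forall_evalAt_eq_zero_of_dvd_bracketMinor hconst (hdvd _ _)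
  obtain ⟨y, hy, hyne⟩ := hR.exists_subregular i
  obtain ⟨h, hh⟩ := hR.exists_ne_zero i
  have hzero : evalAt b ((y : L) + e i) q = 0 := by
    rw [hinv.evalAt_add hh (coe_lie_coe_eq_zero h y) (hR.lie_e i h), hi y hy]
  have hregular := (hR.finrank_ker_ad_add_e_le hy hyne).trans (Fintype.card_fin _).ge
  obtain ⟨U, W, hUW⟩ := (finrank_ker_ad_le_iff_exists_bracketMinor (b := b) _).mp hregular
  exact hUW (zero_dvd_iff.mp (hzero ▸ map_dvd (evalAt b ((y : L) + e i)) (hdvd U W)))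

variable {p : Fin (finrank ℂ H) → MvPolynomial (Fin n) ℂ} {grad : Fin (finrank ℂ H) → L → L}
  (hp : ∀ j, IsInvariantPoly b (p j))

include hp

section Generators

variable (hindep : AlgebraicIndependent ℂ p)
  (hgen : ∀ P, IsInvariantPoly b P → P ∈ Algebra.adjoin ℂ (Set.range p))

include hindep hgen

theorem exists_bracketMinor_eq : ∃ c : ℂ, c ≠ 0 ∧
    ∀ U W, bracketMinor b U W = C c * (gradMinor b p U * gradMinor b p W.transpose) := by
  obtain ⟨U₀, hU₀⟩ := exists_gradMinor_ne_zero (b := b) hindep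
  obtain ⟨c, hc, h⟩ := exists_C_mul_eq_of_mul_eq_mul
    (F := fun UW : Matrix (Fin n) (Fin (finrank ℂ H)) ℂ × Matrix (Fin (finrank ℂ H)) (Fin n) ℂ =>
      bracketMinor b UW.1 UW.2)
    (G := fun UW => gradMinor b p UW.1 * gradMinor b p UW.2.transpose)
    (fun _ _ => bracketMinor_mul_gradMinor_mul_gradMinor hp _ _ _ _)
    ⟨(_, _), hR.bracketMinor_ne_zero⟩ ⟨(U₀, U₀.transpose), mul_ne_zero hU₀ hU₀⟩
    (fun q hq => by
      obtain ⟨U, W, h⟩ := hR.exists_not_dvd_bracketMinor (b := b) hq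
      exact ⟨(U, W), h⟩)
    (fun q hq => by
      obtain ⟨U, hU⟩ := exists_not_dvd_gradMinor hp hindep hgen hq
      exact ⟨(U, U.transpose), hq.not_dvd_mul hU hU⟩)
  exact ⟨c, hc, fun U W => h (U, W)⟩

theorem linearIndependent_grad_iff_finrank_ker_ad
    (hgrad : ∀ j, IsKillingGradient b (p j) (grad j)) (x : L) :
    LinearIndependent ℂ (fun j => grad j x) ↔
      finrank ℂ (LinearMap.ker (LieAlgebra.ad ℂ L x)) = finrank ℂ H := by
  obtain ⟨c, hc, hminor⟩ := hR.exists_bracketMinor_eq hp hindep hgen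
  have hle := finrank_ker_ad_le_iff_exists_bracketMinor (b := b) (ι := Fin (finrank ℂ H)) x
  rw [Fintype.card_fin] at hle
  constructor
  · intro h
    have hker : LinearIndependent ℂ fun j =>
        (⟨grad j x, (hgrad j).lie_eq_zero (hp j) x⟩ : LinearMap.ker (LieAlgebra.ad ℂ L x)) :=
      h.of_comp (LinearMap.ker (LieAlgebra.ad ℂ L x)).subtype
    obtain ⟨U, hU⟩ := (linearIndependent_grad_iff_exists_gradMinor hgrad x).mp h
    refine le_antisymm (hle.mpr ⟨U, U.transpose, ?_⟩) (by simpa using hker.fintype_card_le_finrank)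
    rw [hminor, Matrix.transpose_transpose, map_mul, evalAt_C, map_mul]
    exact mul_ne_zero hc (mul_ne_zero hU hU)
  · intro h
    obtain ⟨U, W, hUW⟩ := hle.mp h.le
    rw [hminor, map_mul, map_mul] at hUW
    exact (linearIndependent_grad_iff_exists_gradMinor hgrad x).mpr
      ⟨U, left_ne_zero_of_mul (right_ne_zero_of_mul hUW)⟩

theorem exists_det_killingForm_grad_eq (hgrad : ∀ j, IsKillingGradient b (p j) (grad j)) :
    ∃ κ : ℂ, κ ≠ 0 ∧ ∀ y : H,
      (Matrix.of fun j k => killingForm ℂ L (grad j (y : L)) (v k : L)).det =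
        κ * ∏ i, φ i y := by
  obtain ⟨c, hc, hminor⟩ := hR.exists_bracketMinor_eq hp hindep hgen
  let bH := finBasis ℂ H
  have hsq : C c * restrictPoly b bH (gradMinor b p (formMatrix b fun j => (v j : L))) ^ 2 =
      C ((killingMatrix b).det * (-1) ^ r) * (∏ i, linForm bH (φ i)) ^ 2 := by
    rw [← hR.restrictPoly_bracketMinor, hminor, Matrix.transpose_transpose, map_mul, algHom_C,
      algebraMap_eq, ← sq, map_pow]
  obtain ⟨κ, hκ, hroot⟩ := exists_eq_C_mul_of_C_mul_sq_eq hc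
    (mul_ne_zero isUnit_det_killingMatrix.ne_zero (pow_ne_zero r (neg_ne_zero.mpr one_ne_zero))) hsq
  refine ⟨κ, hκ, fun y => ?_⟩
  rw [← evalAt_gradMinor_formMatrix hgrad, ← evalAt_restrictPoly (bH := bH), hroot]
  simp only [map_mul, map_prod, evalAt_C, evalAt_linForm]

end Generators

theorem sum_killingForm_grad_smul_v (hgrad : ∀ j, IsKillingGradient b (p j) (grad j))
    (j : Fin (finrank ℂ H)) (y : H) :
    ∑ k, killingForm ℂ L (grad j (y : L)) (v k : L) • (v k : L) = grad j (y : L) := by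
  rw [← killingProjection_apply]
  refine hR.killingProjection_eq_self (fun i => ?_) fun i => ?_ <;>
    obtain ⟨h, hh⟩ := hR.exists_ne_zero i
  · rw [hgrad, (hp j).evalAt_dirDeriv_eq_zero hh (coe_lie_coe_eq_zero h y) (hR.lie_e i h)]
  · rw [hgrad, (hp j).evalAt_dirDeriv_eq_zero (neg_ne_zero.mpr hh) (coe_lie_coe_eq_zero h y)
      (hR.lie_f i h)]

end IsRootBasis

theorem stmt15_general {L : Type*} [LieRing L] [LieAlgebra ℂ L] [FiniteDimensional ℂ L]
    [LieAlgebra.IsKilling ℂ L] {H : LieSubalgebra ℂ L} [H.IsCartanSubalgebra] {n r : ℕ}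
    {b : Basis (Fin n) ℂ L} {p : Fin (finrank ℂ H) → MvPolynomial (Fin n) ℂ}
    {grad : Fin (finrank ℂ H) → L → L} {v : Fin (finrank ℂ H) → H}
    {φ : Fin r → Module.Dual ℂ H} {e f : Fin r → L} (hR : IsRootBasis H v φ e f)
    (hp : ∀ j, IsInvariantPoly b (p j)) (hindep : AlgebraicIndependent ℂ p)
    (hgen : ∀ P, IsInvariantPoly b P → P ∈ Algebra.adjoin ℂ (Set.range p))
    (hgrad : ∀ j, IsKillingGradient b (p j) (grad j)) :
    (∀ x : L, LinearIndependent ℂ (fun j => grad j x) ↔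
      finrank ℂ (LinearMap.ker (LieAlgebra.ad ℂ L x)) = finrank ℂ H) ∧
    ∃ κ : ℂ, κ ≠ 0 ∧ ∀ y : H,
      (List.ofFn fun j => ι ℂ (grad j (y : L))).prod =
        (κ * ∏ i, φ i y) • (List.ofFn fun j => ι ℂ ((v j : L))).prod := by
  refine ⟨hR.linearIndependent_grad_iff_finrank_ker_ad hp hindep hgen hgrad, ?_⟩
  obtain ⟨κ, hκ, hdet⟩ := hR.exists_det_killingForm_grad_eq hp hindep hgen hgrad
  refine ⟨κ, hκ, fun y => ?_⟩
  have hgrad_eq : (fun j => grad j (y : L)) =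
      fun j => ∑ k, killingForm ℂ L (grad j (y : L)) (v k : L) • (v k : L) :=
    _root_.funext fun j => (hR.sum_killingForm_grad_smul_v hp hgrad j y).symm
  rw [← ιMulti_apply, ← ιMulti_apply, hgrad_eq, ← hdet]
  exact map_sum_smul_eq_det_smul _ _ _

/-- Let `p₁, …, p_ℓ` be homogeneous generators of the invariant ring `S(g)^G` of a
complex semisimple Lie algebra `g` of rank `ℓ`, with Killing-form gradients
`∇p_j` (`B(∇p_j(x), y) = ∂_y p_j (x)`).  Then for `x ∈ g` the gradients
`∇p₁(x), …, ∇p_ℓ(x)` are linearly independent iff `x` is regular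
(`dim g^x = ℓ`).  Consequently, for `y` in a Cartan subalgebra `H` with `B`-orthonormal
basis `v₁, …, v_ℓ` and positive roots `φ₁, …, φ_r` (with root vectors as usual),
`∇p₁(y) ∧ ⋯ ∧ ∇p_ℓ(y) = κ · (∏_{φ ∈ Δ₊} φ(y)) · v₁ ∧ ⋯ ∧ v_ℓ`
for a fixed nonzero constant `κ`. -/
theorem stmt15 (L : Type*) [LieRing L] [LieAlgebra ℂ L] [FiniteDimensional ℂ L]
    [LieAlgebra.IsSemisimple ℂ L]
    (H : LieSubalgebra ℂ L) [H.IsCartanSubalgebra]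
    (n r : ℕ) (hn : finrank ℂ L = n) (hnr : n = finrank ℂ H + 2 * r)
    (b : Basis (Fin n) ℂ L)
    (m : Fin (finrank ℂ H) → ℕ) (p : Fin (finrank ℂ H) → MvPolynomial (Fin n) ℂ)
    (hhom : ∀ j, (p j).IsHomogeneous (m j + 1))
    (hinv : ∀ j, IsInvariantPoly b (p j))
    (hindep : AlgebraicIndependent ℂ p)
    (hgen : ∀ P : MvPolynomial (Fin n) ℂ, IsInvariantPoly b P →
      P ∈ Algebra.adjoin ℂ (Set.range p))
    (grad : Fin (finrank ℂ H) → L → L)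
    (hgrad : ∀ j (x y : L), killingForm ℂ L (grad j x) y =
      MvPolynomial.eval (fun i => b.repr x i) (dirDeriv b y (p j)))
    -- an orthonormal basis of the Cartan subalgebra
    (v : Fin (finrank ℂ H) → H)
    (hvbasis : LinearIndependent ℂ v)
    (hvON : ∀ i j, killingForm ℂ L (v i : L) (v j : L) = if i = j then 1 else 0)
    -- the positive roots and associated root vectors
    (φ : Fin r → Module.Dual ℂ H) (e f : Fin r → L)
    (he : ∀ (i) (h : H), ⁅(h : L), e i⁆ = φ i h • e i)
    (hf : ∀ (i) (h : H), ⁅(h : L), f i⁆ = -(φ i h) • f i)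
    (hnorm : ∀ i, killingForm ℂ L (e i) (f i) = 1)
    (hφne : ∀ i, φ i ≠ 0)
    (hφinj : ∀ i j, i ≠ j → φ i ≠ φ j)
    (hpos : ∀ i j, φ i + φ j ≠ 0)
    (hspan : H.toSubmodule ⊔ Submodule.span ℂ (Set.range e ∪ Set.range f) = ⊤) :
    (∀ x : L, LinearIndependent ℂ (fun j => grad j x) ↔
      finrank ℂ (LinearMap.ker (LieAlgebra.ad ℂ L x)) = finrank ℂ H) ∧
    ∃ κ : ℂ, κ ≠ 0 ∧ ∀ y : H,
      (List.ofFn fun j => ι ℂ (grad j (y : L))).prod =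
        (κ * ∏ i, φ i y) • (List.ofFn fun j => ι ℂ ((v j : L))).prod :=
  stmt15_general ⟨hvON, he, hf, hnorm, hφne, hφinj, hpos, hspan, hn.trans hnr⟩ hinv hindep hgen
    hgrad
end

section
/- Let L ⊂ S(g) be the graded ideal of polynomial functions vanishing on Sing g. If 0 ≠ f ∈ L is homogeneous of degree k, then k ≥ r, the number of positive roots. (Proof idea: f restricted to some Cartan subalgebra a is nonzero and must be divisible by every positive root of (a,g).) -/
open Module MvPolynomial

/-!
Fix a splitting Cartan subalgebra `H` and consider the conjugates `g h` of elements `h ∈ H` on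
which no root vanishes, under automorphisms `g`. On a line through `g h` in the direction of a
conjugate `g y` of a root vector, every point is again such a conjugate, since `exp (ad e)` sends
`h` to `h + t • y` for a suitable multiple `e` of `y`; on a line in the direction of an element of
`g H`, all but finitely many points are. These directions span, so if a polynomial function
vanishes on all these conjugates, so do its partial derivatives, and by induction on the degree it
is zero.

Hence a nonzero polynomial function `P` is nonzero somewhere on some `g H`. If `P` vanishes on the
singular cone, then its restriction to `g H` vanishes on every root hyperplane. The positive roots
are pairwise non-proportional, so a generic line in `g H` meets their hyperplanes in distinct
points, all of them roots of the restriction of `P` to that line.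
-/

section PolynomialsOnLines

variable {ι R V : Type*} [CommSemiring R] [AddCommMonoid V] [Module R V] (b : Basis ι R V)

/-- The restriction of a polynomial function on `V`, written in the coordinates of the basis `b`,
to the line through `x` in the direction `y`, parametrized by `t ↦ x + t • y`. -/
noncomputable def restrictLine (x y : V) : MvPolynomial ι R →ₐ[R] Polynomial R :=
  aeval fun i ↦ Polynomial.C (b.repr x i) + Polynomial.C (b.repr y i) * Polynomial.X

/-- The differential at `x` of a polynomial function on `V`, written in the coordinates of the
basis `b`, as a linear form on `V`. -/
noncomputable def differential (P : MvPolynomial ι R) (x : V) : Dual R V :=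
  b.constr R fun i ↦ eval (b.repr x) (pderiv i P)

theorem eval_restrictLine (x y : V) (P : MvPolynomial ι R) (t : R) :
    (restrictLine b x y P).eval t = eval (b.repr (x + t • y)) P := by
  induction P using MvPolynomial.induction_on with
  | C c => simp [restrictLine]
  | add p q hp hq => simp only [map_add, Polynomial.eval_add, hp, hq]
  | mul_X p i hp =>
    rw [map_mul, Polynomial.eval_mul, hp]
    simp [restrictLine, mul_comm t]

theorem natDegree_restrictLine_le (x y : V) (P : MvPolynomial ι R) :
    (restrictLine b x y P).natDegree ≤ P.totalDegree := by
  simpa only [restrictLine, mul_one] using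
    aeval_natDegree_le (n := 1) P le_rfl _ fun i ↦ by compute_degree

theorem differential_apply_basis (P : MvPolynomial ι R) (x : V) (i : ι) :
    differential b P x (b i) = eval (b.repr x) (pderiv i P) :=
  b.constr_basis R _ i

theorem differential_C (c : R) (x : V) : differential b (C c) x = 0 :=
  b.ext fun i ↦ by simp [differential_apply_basis]

theorem differential_X (j : ι) (x : V) : differential b (X j) x = b.coord j := by
  refine b.ext fun i ↦ ?_
  rcases eq_or_ne i j with rfl | hij
  · simp [differential_apply_basis]
  · simp [differential_apply_basis, pderiv_X_of_ne hij.symm, hij]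

theorem differential_add (P Q : MvPolynomial ι R) (x : V) :
    differential b (P + Q) x = differential b P x + differential b Q x :=
  b.ext fun i ↦ by simp [differential_apply_basis]

theorem differential_mul (P Q : MvPolynomial ι R) (x : V) :
    differential b (P * Q) x =
      eval (b.repr x) P • differential b Q x + eval (b.repr x) Q • differential b P x :=
  b.ext fun i ↦ by simp [differential_apply_basis]

theorem eval_derivative_restrictLine (x y : V) (P : MvPolynomial ι R) (t : R) :
    (restrictLine b x y P).derivative.eval t = differential b P (x + t • y) y := by
  induction P using MvPolynomial.induction_on with
  | C c => simp [restrictLine, differential_C]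
  | add p q hp hq => simp [hp, hq, differential_add]
  | mul_X p i hp =>
    have hX : (restrictLine b x y (X i)).derivative = Polynomial.C (b.repr y i) := by
      simp [restrictLine]
    rw [map_mul, Polynomial.derivative_mul, Polynomial.eval_add, Polynomial.eval_mul,
      Polynomial.eval_mul, hp, hX, Polynomial.eval_C, eval_restrictLine, eval_restrictLine,
      differential_mul, differential_X]
    simp only [LinearMap.add_apply, LinearMap.smul_apply, smul_eq_mul, Basis.coord_apply]
    ring

end PolynomialsOnLines

section PartialDerivatives

variable {ι R : Type*} [CommSemiring R]

theorem totalDegree_pderiv_le_s18 {P : MvPolynomial ι R} {n : ℕ}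
    (hP : P.totalDegree ≤ n + 1) (i : ι) : (pderiv i P).totalDegree ≤ n := by
  rw [totalDegree, Finset.sup_le_iff]
  intro m hm
  rw [MvPolynomial.mem_support_iff, coeff_pderiv] at hm
  have hle := (le_totalDegree (MvPolynomial.mem_support_iff.mpr (left_ne_zero_of_mul hm))).trans hP
  rw [Finsupp.sum_add_index' (fun _ ↦ rfl) fun _ _ _ ↦ rfl, Finsupp.sum_single_index rfl] at hle
  exact Nat.le_of_succ_le_succ hle

variable [NoZeroDivisors R] [CharZero R]

theorem eq_C_of_forall_pderiv_eq_zero {P : MvPolynomial ι R} (hP : ∀ i, pderiv i P = 0) :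
    P = C (coeff 0 P) := by
  classical
  ext d
  rw [coeff_C]
  split_ifs with hd
  · rw [hd]
  obtain ⟨i, hi⟩ : ∃ i, d i ≠ 0 := by
    simpa only [ne_eq, DFunLike.ext_iff, not_forall, Finsupp.coe_zero, Pi.zero_apply]
      using Ne.symm hd
  have hcoeff := coeff_pderiv P (d - Finsupp.single i 1) (i := i)
  rw [hP, coeff_zero, tsub_add_cancel_of_le (Finsupp.single_le_iff.mpr (Nat.pos_of_ne_zero hi)),
    zero_eq_mul] at hcoeff
  exact hcoeff.resolve_right (Nat.cast_add_one_ne_zero _)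

theorem eq_zero_of_mem_of_pderiv_mem {I : Set (MvPolynomial ι R)}
    (hI : ∀ P ∈ I, ∀ i, pderiv i P ∈ I) {x : ι → R} (hx : ∀ P ∈ I, eval x P = 0)
    {P : MvPolynomial ι R} (hP : P ∈ I) : P = 0 := by
  induction hn : P.totalDegree using Nat.strong_induction_on generalizing P with
  | h n ih =>
    have hC : P = C (coeff 0 P) := by
      rcases n with _ | n
      · exact totalDegree_eq_zero_iff_eq_C.mp hn
      · exact eq_C_of_forall_pderiv_eq_zero fun i ↦
          ih _ (Nat.lt_succ_of_le (totalDegree_pderiv_le_s18 hn.le i)) (hI P hP i) rfl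
    have heval := hx P hP
    rw [hC, eval_C] at heval
    rw [hC, heval, C_0]

end PartialDerivatives

section InfiniteDirections

variable {ι R V : Type*} [CommRing R] [AddCommGroup V] [Module R V]

variable (R) in
/-- The directions of the lines through `x` that meet `S` in infinitely many points. Over an
integral domain, a polynomial function vanishing on `S` vanishes identically on these lines. -/
def infiniteDirections (S : Set V) (x : V) : Set V :=
  {y | {t : R | x + t • y ∈ S}.Infinite}

variable [IsDomain R] (b : Basis ι R V) {S : Set V} {P : MvPolynomial ι R}

theorem restrictLine_eq_zero_of_mem_infiniteDirections (hP : ∀ x ∈ S, eval (b.repr x) P = 0)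
    {x y : V} (hy : y ∈ infiniteDirections R S x) : restrictLine b x y P = 0 :=
  Polynomial.eq_zero_of_infinite_isRoot _ <| Set.Infinite.mono
    (fun t ht ↦ (eval_restrictLine b x y P t).trans (hP _ ht)) hy

theorem differential_eq_zero_of_span_infiniteDirections_eq_top
    (hP : ∀ x ∈ S, eval (b.repr x) P = 0) {x : V}
    (hx : Submodule.span R (infiniteDirections R S x) = ⊤) : differential b P x = 0 :=
  LinearMap.ext_on hx fun y hy ↦ by
    have hderiv := eval_derivative_restrictLine b x y P 0
    rw [restrictLine_eq_zero_of_mem_infiniteDirections b hP hy, map_zero, Polynomial.eval_zero,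
      zero_smul, add_zero] at hderiv
    exact hderiv.symm

theorem eq_zero_of_forall_span_infiniteDirections_eq_top [CharZero R] (hne : S.Nonempty)
    (hS : ∀ x ∈ S, Submodule.span R (infiniteDirections R S x) = ⊤)
    (hP : ∀ x ∈ S, eval (b.repr x) P = 0) : P = 0 := by
  obtain ⟨x₀, hx₀⟩ := hne
  refine eq_zero_of_mem_of_pderiv_mem (I := {Q | ∀ x ∈ S, eval (b.repr x) Q = 0})
    (fun Q hQ i x hx ↦ ?_) (fun Q hQ ↦ hQ x₀ hx₀) hP
  rw [← differential_apply_basis,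
    differential_eq_zero_of_span_infiniteDirections_eq_top b hQ (hS x hx), LinearMap.zero_apply]

end InfiniteDirections

section LinearFactors

variable {ι κ K V W : Type*} [Field K] [Infinite K] [AddCommGroup V] [Module K V]
  [AddCommGroup W] [Module K W] [Finite κ] {ℓ : κ → Dual K W}

theorem exists_injective_div_apply (hℓ : Pairwise fun i j ↦ LinearIndependent K ![ℓ i, ℓ j])
    {x : W} (hx : ∀ i, ℓ i x ≠ 0) :
    ∃ y, (∀ i, ℓ i y ≠ 0) ∧ Function.Injective fun i ↦ ℓ i x / ℓ i y := by
  -- `ℓ i x / ℓ i y = ℓ j x / ℓ j y` exactly when `y` is a zero of the form indexed by `(i, j)`.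
  have hdet (p : {p : κ × κ // p.1 ≠ p.2}) :
      ℓ p.1.1 x • ℓ p.1.2 - ℓ p.1.2 x • ℓ p.1.1 ≠ 0 := fun h ↦
    hx _ (LinearIndependent.pair_iff.mp (hℓ p.2.symm) _ (-ℓ p.1.2 x)
      (by rw [neg_smul, ← sub_eq_add_neg, h])).1
  obtain ⟨y, hy⟩ := Dual.exists_forall_ne_zero_of_forall_exists
    (Sum.elim ℓ fun p : {p : κ × κ // p.1 ≠ p.2} ↦ ℓ p.1.1 x • ℓ p.1.2 - ℓ p.1.2 x • ℓ p.1.1) <| by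
      rintro (i | p)
      · exact ⟨x, hx i⟩
      · exact DFunLike.ne_iff.mp (hdet p)
  refine ⟨y, fun i ↦ hy (.inl i), fun i j hij ↦ by_contra fun hne ↦ hy (.inr ⟨(i, j), hne⟩) ?_⟩
  exact sub_eq_zero.mpr ((div_eq_div_iff (hy (.inl i)) (hy (.inl j))).mp hij)

theorem card_le_totalDegree_of_eval_eq_zero_of_apply_eq_zero
    (hℓ : Pairwise fun i j ↦ LinearIndependent K ![ℓ i, ℓ j]) (b : Basis ι K V) (φ : W →ₗ[K] V)
    {P : MvPolynomial ι K} (hP : ∀ i w, ℓ i w = 0 → eval (b.repr (φ w)) P = 0) {x : W}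
    (hx : eval (b.repr (φ x)) P ≠ 0) : Nat.card κ ≤ P.totalDegree := by
  classical
  have := Fintype.ofFinite κ
  obtain ⟨y, hy, hinj⟩ := exists_injective_div_apply hℓ fun i hi ↦ hx (hP i x hi)
  have heval (t : K) :
      (restrictLine b (φ x) (φ y) P).eval t = eval (b.repr (φ (x + t • y))) P := by
    rw [eval_restrictLine, ← map_smul φ, ← map_add φ]
  have hne : restrictLine b (φ x) (φ y) P ≠ 0 := fun h ↦ hx <| by
    simpa [h] using (heval 0).symm
  have hroots : (Finset.univ.image fun i ↦ -(ℓ i x / ℓ i y)).val ⊆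
      (restrictLine b (φ x) (φ y) P).roots := by
    intro t ht
    obtain ⟨i, -, rfl⟩ := Finset.mem_image.mp ht
    rw [Polynomial.mem_roots hne, Polynomial.IsRoot, heval]
    refine hP i _ ?_
    rw [map_add, map_smul, smul_eq_mul, neg_mul, div_mul_cancel₀ _ (hy i), add_neg_cancel]
  calc Nat.card κ = (Finset.univ.image fun i ↦ -(ℓ i x / ℓ i y)).card := by
        rw [Nat.card_eq_fintype_card, ← Finset.card_univ]
        exact (Finset.card_image_of_injective _ (neg_injective.comp hinj)).symm
    _ ≤ (restrictLine b (φ x) (φ y) P).natDegree := Polynomial.card_le_degree_of_subset_roots hroots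
    _ ≤ P.totalDegree := natDegree_restrictLine_le b _ _ P

end LinearFactors

section PositiveRoots

variable {ι R M N : Type*} [CommRing R] [CharZero R] [AddCommGroup M] [Module R M]
  [AddCommGroup N] [Module R N] {P : RootPairing ι R M N} (B : P.Base)

theorem pairwise_linearIndependent_root_isPos [P.IsReduced] :
    Pairwise fun i j : {i // B.IsPos i} ↦ LinearIndependent R ![P.root i, P.root j] := by
  intro i j hij
  refine RootPairing.IsReduced.linearIndependent P (Subtype.coe_ne_coe.mpr hij) fun h ↦ ?_
  let := P.indexNeg
  have hneg : (i : ι) = -j := P.root.injective (by simpa using h)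
  exact (RootPairing.Base.IsPos.neg_iff_not B j).mp (hneg ▸ i.2) j.2

theorem card_eq_two_mul_card_isPos [Finite ι] :
    Nat.card ι = 2 * Nat.card {i // B.IsPos i} := by
  classical
  let := P.indexNeg
  have hneg : Nat.card {i // ¬ B.IsPos i} = Nat.card {i // B.IsPos i} :=
    Nat.card_congr <| (Equiv.neg ι).subtypeEquiv fun i ↦
      (RootPairing.Base.IsPos.neg_iff_not B i).symm
  rw [← Nat.card_congr (Equiv.sumCompl B.IsPos), Nat.card_sum, hneg, two_mul]

end PositiveRoots

theorem finrank_iSup_le_sum_finrank {ι K V : Type*} [Fintype ι] [Field K] [AddCommGroup V]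
    [Module K V] (p : ι → Submodule K V) [∀ i, FiniteDimensional K (p i)] :
    finrank K ↥(⨆ i, p i) ≤ ∑ i, finrank K (p i) := by
  classical
  rw [← DirectSum.range_coeLinearMap, ← finrank_directSum]
  exact LinearMap.finrank_range_le _

section Automorphisms

variable {R L : Type*} [CommRing R] [LieRing L] [LieAlgebra R L]

theorem finrank_ker_ad_apply {L' : Type*} [LieRing L'] [LieAlgebra R L'] (g : L ≃ₗ⁅R⁆ L') (x : L) :
    finrank R (LinearMap.ker (LieAlgebra.ad R L' (g x))) =
      finrank R (LinearMap.ker (LieAlgebra.ad R L x)) := by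
  rw [← LieAlgebra.conj_ad_apply, LinearEquiv.conj_apply, LinearMap.ker_comp,
    LinearEquiv.ker_comp, ← Submodule.map_equiv_eq_comap_symm, LinearEquiv.finrank_map_eq]

theorem exists_lieEquiv_apply_eq_add_lie [Algebra ℚ R] {e x : L}
    (he : IsNilpotent (LieAlgebra.ad R L e)) (hx : ⁅e, ⁅e, x⁆⁆ = 0) :
    ∃ g : L ≃ₗ⁅R⁆ L, g x = x + ⁅e, x⁆ := by
  let _ : Module ℚ L := Module.compHom L (algebraMap ℚ R)
  let _ : LieAlgebra ℚ L := { lie_smul := fun q x y ↦ lie_smul (algebraMap ℚ R q) x y }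
  have hnil : IsNilpotent (LieDerivation.ad R L e).toLinearMap := by
    rwa [← LieDerivation.coe_ad_apply_eq_ad_apply] at he
  refine ⟨LieDerivation.exp _ hnil, ?_⟩
  have hexp := IsNilpotent.exp_smul_eq_sum (a := (LieDerivation.ad R L e).toLinearMap)
    (m := x) (k := 2) (by simp [pow_two, hx]) hnil
  rw [LieDerivation.exp_map_apply]
  simpa [Finset.sum_range_succ] using hexp

end Automorphisms

section SplittingCartan

open LieAlgebra LieModule

variable {K L : Type*} [Field K] [LieRing L] [LieAlgebra K L] (H : LieSubalgebra K L)

/-- The cone `Sing L` of singular elements of a Lie algebra with Cartan subalgebra `H`: those whose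
centralizer has dimension larger than the rank `dim H`. -/
def singularCone : Set L :=
  {x | finrank K H < finrank K (LinearMap.ker (ad K L x))}

theorem apply_mem_singularCone_iff (g : L ≃ₗ⁅K⁆ L) {x : L} :
    g x ∈ singularCone H ↔ x ∈ singularCone H := by
  rw [singularCone, Set.mem_ofPred_eq, Set.mem_ofPred_eq, finrank_ker_ad_apply]

variable [H.IsCartanSubalgebra]

/-- The regular elements of `H`: the complement of the union of the root hyperplanes. -/
def regularSet : Set H :=
  {h | ∀ α : Weight K H L, α.IsNonZero → α h ≠ 0}

/-- The images of the regular elements of `H` under all automorphisms of the Lie algebra: the set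
whose Zariski density makes a nonzero polynomial function nonzero on some conjugate of `H`. -/
def regularConjugates : Set L :=
  {x | ∃ g : L ≃ₗ⁅K⁆ L, ∃ h ∈ regularSet H, g h = x}

variable [FiniteDimensional K L]

theorem toSubmodule_sup_iSup_rootSpace_eq_top [IsTriangularizable K H L] :
    H.toSubmodule ⊔ ⨆ α : H.root, (rootSpace H α.1).toSubmodule = ⊤ := by
  have htop := congrArg LieSubmodule.toSubmodule (cartan_sup_iSup_rootSpace_eq_top (K := K) H)
  simp only [LieSubmodule.sup_toSubmodule, LieSubmodule.iSup_toSubmodule,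
    LieSubmodule.top_toSubmodule] at htop
  rw [← htop, iSup_subtype]
  simp

variable [CharZero K]

theorem regularSet_nonempty : (regularSet H).Nonempty := by
  obtain ⟨h, hh⟩ := Dual.exists_forall_ne_zero_of_forall_exists
    (fun α : {α : Weight K H L // α.IsNonZero} ↦ α.1.toLinear) fun α ↦ by
      by_contra! hc
      exact α.2 (funext hc)
  exact ⟨h, fun α hα ↦ hh ⟨α, hα⟩⟩

variable {H}

theorem finite_setOf_add_smul_notMem_regularSet {h : H} (hh : h ∈ regularSet H) (y : H) :
    {t : K | h + t • y ∉ regularSet H}.Finite := by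
  refine (Set.finite_range fun α : Weight K H L ↦ -α h / α y).subset fun t ht ↦ ?_
  obtain ⟨α, hα, ht⟩ : ∃ α : Weight K H L, α.IsNonZero ∧ α (h + t • y) = 0 := by
    simpa [regularSet] using ht
  have hroot : α h + t * α y = 0 := by
    simpa [ht] using (α.toLinear.map_add h (t • y)).symm
  have hy : α y ≠ 0 := fun hy ↦ hh α hα (by simpa [hy] using hroot)
  exact ⟨α, (eq_div_of_mul_eq hy (eq_neg_of_add_eq_zero_right hroot)).symm⟩

theorem apply_coe_mem_infiniteDirections (g : L ≃ₗ⁅K⁆ L) {h : H} (hh : h ∈ regularSet H) (y : H) :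
    g y ∈ infiniteDirections K (regularConjugates H) (g h) :=
  (finite_setOf_add_smul_notMem_regularSet hh y).infinite_compl.mono fun t ht ↦
    ⟨g, h + t • y, not_not.mp ht, by simp⟩

variable [IsKilling K L] [IsTriangularizable K H L]

theorem exists_lieEquiv_apply_eq_add_of_mem_rootSpace {α : Weight K H L} {h : H} (hh : α h ≠ 0)
    {y : L} (hy : y ∈ rootSpace H α) : ∃ g : L ≃ₗ⁅K⁆ L, g h = h + y := by
  have hα : (α : H → K) ≠ 0 := fun hα ↦ hh (congrFun hα h)
  have hlie : ⁅-(α h)⁻¹ • y, (h : L)⁆ = y := by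
    have hhy : ⁅(h : L), y⁆ = α h • y := IsKilling.lie_eq_smul_of_mem_rootSpace hy h
    rw [← lie_skew, lie_smul, hhy, smul_smul, neg_mul, inv_mul_cancel₀ hh, neg_one_smul, neg_neg]
  have hnil := isNilpotent_ad_of_mem_rootSpace H hα
    ((rootSpace H α).smul_mem (-(α h)⁻¹) hy)
  obtain ⟨g, hg⟩ := exists_lieEquiv_apply_eq_add_lie hnil (x := (h : L)) <| by
    rw [hlie, smul_lie, lie_self, smul_zero]
  exact ⟨g, by rw [hg, hlie]⟩

theorem apply_mem_infiniteDirections_of_mem_rootSpace (g : L ≃ₗ⁅K⁆ L) {h : H}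
    (hh : h ∈ regularSet H) {α : Weight K H L} (hα : α.IsNonZero) {y : L}
    (hy : y ∈ rootSpace H α) : g y ∈ infiniteDirections K (regularConjugates H) (g h) := by
  refine Set.infinite_univ.mono fun t _ ↦ ?_
  obtain ⟨g', hg'⟩ :=
    exists_lieEquiv_apply_eq_add_of_mem_rootSpace (hh α hα) ((rootSpace H α).smul_mem t hy)
  exact ⟨g'.trans g, h, hh, by simp [hg']⟩

theorem span_infiniteDirections_regularConjugates_eq_top {x : L} (hx : x ∈ regularConjugates H) :
    Submodule.span K (infiniteDirections K (regularConjugates H) x) = ⊤ := by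
  obtain ⟨g, h, hh, rfl⟩ := hx
  rw [eq_top_iff, ← LinearMap.range_eq_top.mpr g.toLinearEquiv.surjective, LinearMap.range_eq_map,
    ← toSubmodule_sup_iSup_rootSpace_eq_top H, Submodule.map_le_iff_le_comap, sup_le_iff,
    iSup_le_iff]
  exact ⟨fun y hy ↦ Submodule.subset_span (apply_coe_mem_infiniteDirections g hh ⟨y, hy⟩),
    fun α y hy ↦ Submodule.subset_span <| apply_mem_infiniteDirections_of_mem_rootSpace g hh
      (LieSubalgebra.isNonZero_coe_root α) hy⟩

theorem exists_mem_regularConjugates_eval_ne_zero {ι : Type*} (b : Basis ι K L)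
    {P : MvPolynomial ι K} (hP : P ≠ 0) : ∃ x ∈ regularConjugates H, eval (b.repr x) P ≠ 0 := by
  by_contra! hzero
  obtain ⟨h, hh⟩ := regularSet_nonempty H
  have hne : (regularConjugates H).Nonempty := ⟨h, LieEquiv.refl, h, hh, rfl⟩
  exact hP <| eq_zero_of_forall_span_infiniteDirections_eq_top b hne
    (fun x hx ↦ span_infiniteDirections_regularConjugates_eq_top hx) hzero

theorem coe_mem_singularCone_of_apply_eq_zero {α : Weight K H L} (hα : α.IsNonZero) {h : H}
    (hh : α h = 0) : (h : L) ∈ singularCone H := by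
  obtain ⟨e, he, he0⟩ := α.exists_ne_zero
  have hlie (x : H) : ⁅(x : L), e⁆ = α x • e := IsKilling.lie_eq_smul_of_mem_rootSpace he x
  have habelian (x y : H) : ⁅(x : L), (y : L)⁆ = 0 :=
    congrArg Subtype.val (trivial_lie_zero H H x y)
  have he_notMem : e ∉ H := fun heH ↦ hα <| funext fun x ↦
    (smul_eq_zero_iff_left he0).mp ((hlie x).symm.trans (habelian x ⟨e, heH⟩))
  refine Submodule.finrank_lt_finrank_of_lt (s := H.toSubmodule) <|
    SetLike.lt_iff_le_and_exists.mpr ⟨fun y hy ↦ habelian h ⟨y, hy⟩, e, ?_, he_notMem⟩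
  rw [LinearMap.mem_ker, ad_apply, hlie, hh, zero_smul]

variable (K H) in
theorem finrank_le_finrank_add_card_root : finrank K L ≤ finrank K H + Nat.card H.root := by
  have hone (α : H.root) : finrank K (rootSpace H α.1).toSubmodule = 1 :=
    IsKilling.finrank_rootSpace_eq_one α.1 (LieSubalgebra.isNonZero_coe_root α)
  calc finrank K L
      = finrank K ↥(H.toSubmodule ⊔ ⨆ α : H.root, (rootSpace H α.1).toSubmodule) := by
        rw [toSubmodule_sup_iSup_rootSpace_eq_top, finrank_top]
    _ ≤ finrank K H + finrank K ↥(⨆ α : H.root, (rootSpace H α.1).toSubmodule) :=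
        Submodule.finrank_add_le_finrank_add_finrank _ _
    _ ≤ finrank K H + ∑ α : H.root, finrank K (rootSpace H α.1).toSubmodule :=
        Nat.add_le_add_left (finrank_iSup_le_sum_finrank _) _
    _ = finrank K H + Nat.card H.root := by
        simp only [hone, Finset.sum_const, Finset.card_univ, Nat.card_eq_fintype_card, smul_eq_mul,
          mul_one]

end SplittingCartan

theorem stmt18_general {K L ι : Type*} [Field K] [CharZero K] [LieRing L] [LieAlgebra K L]
    [FiniteDimensional K L] [LieAlgebra.IsKilling K L] (H : LieSubalgebra K L)
    [H.IsCartanSubalgebra] [LieModule.IsTriangularizable K H L] {r : ℕ}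
    (hr : finrank K L = finrank K H + 2 * r) (b : Basis ι K L) {P : MvPolynomial ι K}
    (hP : P ≠ 0) (hvanish : ∀ x ∈ singularCone H, eval (b.repr x) P = 0) : r ≤ P.totalDegree := by
  obtain ⟨B⟩ := (LieAlgebra.IsKilling.rootSystem H).nonempty_base
  obtain ⟨_, ⟨g, h, -, rfl⟩, hgh⟩ := exists_mem_regularConjugates_eval_ne_zero (H := H) b hP
  have hpos : Nat.card {α // B.IsPos α} ≤ P.totalDegree :=
    card_le_totalDegree_of_eval_eq_zero_of_apply_eq_zero (pairwise_linearIndependent_root_isPos B)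
      b (g.toLinearEquiv.toLinearMap ∘ₗ H.toSubmodule.subtype) (fun α w hw ↦ hvanish _ <|
        (apply_mem_singularCone_iff H g).mpr <|
          coe_mem_singularCone_of_apply_eq_zero (LieSubalgebra.isNonZero_coe_root α.1) hw) hgh
  have hroot := card_eq_two_mul_card_isPos B
  have hdim := finrank_le_finrank_add_card_root K H
  lia

/-- Let `L ⊆ S(g)` be the graded ideal of polynomial functions vanishing on the cone
`Sing g` of singular elements of a complex semisimple Lie algebra `g`.  If
`0 ≠ f ∈ L` is homogeneous of degree `k` (as a polynomial in the coordinates of a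
basis `b` of `g`), then `k ≥ r`, the number of positive roots
(`dim g = rank g + 2r`). -/
theorem stmt18 (L : Type*) [LieRing L] [LieAlgebra ℂ L] [FiniteDimensional ℂ L]
    [LieAlgebra.IsSemisimple ℂ L]
    (H : LieSubalgebra ℂ L) [H.IsCartanSubalgebra]
    (n r : ℕ) (hn : finrank ℂ L = n) (hnr : n = finrank ℂ H + 2 * r)
    (b : Basis (Fin n) ℂ L)
    (k : ℕ) (P : MvPolynomial (Fin n) ℂ) (hPhom : P.IsHomogeneous k) (hP0 : P ≠ 0)
    (hvanish : ∀ x : L,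
      finrank ℂ H < finrank ℂ (LinearMap.ker (LieAlgebra.ad ℂ L x)) →
        MvPolynomial.eval (fun i => b.repr x i) P = 0) :
    r ≤ k :=
  (stmt18_general H (hn.trans hnr) b hP0 hvanish).trans hPhom.totalDegree_le
end
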